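/- arXiv:1205.3878 — 2 statements merged into one kernel-verified Lean document; each statement's English description precedes it below -/
import Mathlib

section
/- Let C and C' be binary completely regular codes of length 16, each with minimum distance 6. Then C and C' are equivalent; that is, there exist a permutation σ of the 16 coordinates and a vector v ∈ F_2^16 such that C' = {(α ∘ σ⁻¹) + v : α ∈ C}. (In particular, every binary completely regular code of length 16 with minimum distance 6 is equivalent to the Nordstrom-Robinson code.) -/
open Set

/-- Distance from a vertex to a code in the binary Hamming space. -/
noncomputable def distToCode {m : ℕ} (C : Set (Fin m → ZMod 2)) (x : Fin m → ZMod 2) : ℕ :=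
  sInf {d | ∃ c ∈ C, hammingDist x c = d}

/-- `C` has minimum distance `δ`. -/
def IsMinDist {m : ℕ} (C : Set (Fin m → ZMod 2)) (δ : ℕ) : Prop :=
  (∀ x ∈ C, ∀ y ∈ C, x ≠ y → δ ≤ hammingDist x y) ∧
  ∃ x ∈ C, ∃ y ∈ C, x ≠ y ∧ hammingDist x y = δ

/-- `C` is completely regular: the number of codewords at distance `k` from `γ`
depends only on `distToCode C γ` and `k`. -/
def IsCompletelyRegular {m : ℕ} (C : Set (Fin m → ZMod 2)) : Prop :=
  ∀ γ γ' : Fin m → ZMod 2, distToCode C γ = distToCode C γ' →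
    ∀ k : ℕ, {c ∈ C | hammingDist γ c = k}.ncard = {c ∈ C | hammingDist γ' c = k}.ncard

/-!
After a translation the code contains `0`; read its words as subsets of the 16 points. Complete
regularity forces the words of weight 6 (hexads) to be the blocks of a 3-(16, 6, 4) design and the
words of weight 8 (octads) those of a 3-(16, 8, 3) design, and there are 256 codewords in all.
Counting shows that two octads meet in 0, 4 or 8 points and that every codeword meets every octad
in an even number of points. Consequently the incidence vectors of the points with the octads form
an affine space of dimension 4 over `𝔽₂` on which the octads are affine functions.

A set of four points has an even intersection with all octads if and only if it is contained in
no hexad, if and only if this holds after translating the code by one of its words. So the same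
coordinates serve all these translates: the code is invariant under adding affine functions, and
being orthogonal to all of them it consists of quadratic functions. Its eight quadratic parts differ
pairwise by nondegenerate forms, i.e. by forms of Pfaffian 1; they contain `0` and, for a coordinate
frame inside a hexad, the sum of all monomials. There are exactly two such sets of forms, and the
exchange of two variables maps one to the other.
-/

namespace NordstromRobinson

open Finset
open scoped symmDiff

section Counting

variable {α : Type*} {C : Finset (Finset α)} {k : ℕ} {c w x : Finset α}

/-- The codewords of weight `k` of a code given by the supports of its codewords. -/
def words (C : Finset (Finset α)) (k : ℕ) : Finset (Finset α) := {c ∈ C | #c = k}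

theorem mem_words : c ∈ words C k ↔ c ∈ C ∧ #c = k := mem_filter

variable [DecidableEq α]

/-- The number of codewords of weight `k` whose support contains `x`. -/
def coverCount (C : Finset (Finset α)) (k : ℕ) (x : Finset α) : ℕ := #{c ∈ words C k | x ⊆ c}

/-- The number of codewords at Hamming distance `k` from `x`. -/
def distCount (C : Finset (Finset α)) (x : Finset α) (k : ℕ) : ℕ := #{c ∈ C | #(x ∆ c) = k}

/-- The distance from `x` to the code `C` is `i`; in particular `C` is not empty. -/
def IsAtDist (C : Finset (Finset α)) (i : ℕ) (x : Finset α) : Prop :=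
  (∃ c ∈ C, #(x ∆ c) = i) ∧ ∀ c ∈ C, i ≤ #(x ∆ c)

/-- The code obtained by translating `C` by the vector with support `w`. -/
def translate (C : Finset (Finset α)) (w : Finset α) : Finset (Finset α) := C.image (· ∆ w)

theorem card_symmDiff_add_two_mul_card_inter (s t : Finset α) :
    #(s ∆ t) + 2 * #(s ∩ t) = #s + #t := by
  have hunion : #(s ∆ t) = #(s \ t) + #(t \ s) := by
    rw [symmDiff_def]
    exact card_union_of_disjoint disjoint_sdiff_sdiff
  have hs := card_sdiff_add_card_inter s t
  have ht := card_sdiff_add_card_inter t s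
  rw [Finset.inter_comm t s] at ht
  omega

theorem card_inter_eq_left_iff {s t : Finset α} : #(s ∩ t) = #s ↔ s ⊆ t := by
  rw [← Finset.inter_eq_left]
  exact ⟨fun h => Finset.eq_of_subset_of_card_le Finset.inter_subset_left h.ge, congrArg card⟩

theorem symmDiff_symmDiff_symmDiff_right (x c w : Finset α) : (x ∆ w) ∆ (c ∆ w) = x ∆ c := by
  rw [symmDiff_symmDiff_symmDiff_comm, symmDiff_self, symmDiff_bot]

theorem coverCount_pos : 0 < coverCount C k x ↔ ∃ c ∈ C, #c = k ∧ x ⊆ c := by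
  simp only [coverCount, card_pos, Finset.Nonempty, mem_filter, mem_words, and_assoc]

theorem coverCount_empty : coverCount C k ∅ = #(words C k) := by
  simp only [coverCount, Finset.empty_subset, Finset.filter_true]

theorem mem_translate : x ∈ translate C w ↔ x ∆ w ∈ C := by
  constructor
  · intro h
    obtain ⟨c, hc, rfl⟩ := Finset.mem_image.mp h
    rwa [symmDiff_symmDiff_cancel_right]
  · exact fun h => Finset.mem_image.mpr ⟨_, h, symmDiff_symmDiff_cancel_right w x⟩

theorem symmDiff_mem_translate : x ∆ w ∈ translate C w ↔ x ∈ C := by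
  rw [mem_translate, symmDiff_symmDiff_cancel_right]

theorem distCount_translate (C : Finset (Finset α)) (w x : Finset α) (k : ℕ) :
    distCount (translate C w) x k = distCount C (x ∆ w) k := by
  rw [distCount, distCount, translate, filter_image,
    Finset.card_image_of_injective _ (symmDiff_left_injective w)]
  simp only [symmDiff_assoc, symmDiff_comm w]

theorem isAtDist_translate {i : ℕ} : IsAtDist (translate C w) i x ↔ IsAtDist C i (x ∆ w) := by
  simp only [IsAtDist, translate, Finset.mem_image, exists_exists_and_eq_and, forall_exists_index,
    and_imp, forall_apply_eq_imp_iff₂, symmDiff_assoc, symmDiff_comm w]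

theorem sum_choose_card_inter (C : Finset (Finset α)) (k j : ℕ) (x : Finset α) :
    ∑ c ∈ words C k, (#(x ∩ c)).choose j = ∑ y ∈ Finset.powersetCard j x, coverCount C k y := by
  have hchoose (c : Finset α) :
      (#(x ∩ c)).choose j = #{y ∈ Finset.powersetCard j x | y ⊆ c} := by
    rw [← Finset.card_powersetCard]
    congr 1
    ext y
    simp only [Finset.mem_powersetCard, Finset.subset_inter_iff, mem_filter]
    tauto
  simp only [hchoose]
  exact sum_card_bipartiteAbove_eq_sum_card_bipartiteBelow _

theorem sum_choose_card_inter_eq_mul {j μ : ℕ} (hμ : ∀ y : Finset α, #y = j → coverCount C k y = μ)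
    (x : Finset α) : ∑ c ∈ words C k, (#(x ∩ c)).choose j = (#x).choose j * μ := by
  rw [sum_choose_card_inter, sum_congr rfl fun y hy => hμ y (Finset.mem_powersetCard.mp hy).2,
    sum_const, Finset.card_powersetCard, smul_eq_mul]

theorem sum_coverCount_insert [Fintype α] (C : Finset (Finset α)) (k : ℕ) (x : Finset α) :
    ∑ p ∈ xᶜ, coverCount C k (insert p x) = (k - #x) * coverCount C k x := by
  have hswap : ∑ p ∈ xᶜ, coverCount C k (insert p x) =
      ∑ c ∈ (words C k).filter (x ⊆ ·), #{p ∈ xᶜ | p ∈ c} := by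
    refine Eq.trans (sum_congr rfl fun p _ => ?_)
      (sum_card_bipartiteAbove_eq_sum_card_bipartiteBelow fun c p => p ∈ c).symm
    simp only [coverCount, bipartiteBelow, filter_filter, Finset.insert_subset_iff, and_comm]
  have hcount : ∀ c ∈ (words C k).filter (x ⊆ ·), #{p ∈ xᶜ | p ∈ c} = k - #x := by
    intro c hc
    obtain ⟨hc, hxc⟩ := mem_filter.mp hc
    rw [← (mem_words.mp hc).2, ← card_sdiff_of_subset hxc]
    congr 1
    ext p
    simp only [mem_filter, Finset.mem_compl, Finset.mem_sdiff, and_comm]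
  rw [hswap, sum_congr rfl hcount, sum_const, smul_eq_mul, mul_comm, coverCount]

theorem mul_coverCount_eq [Fintype α] {μ : ℕ}
    (hμ : ∀ p ∉ x, coverCount C k (insert p x) = μ) :
    (k - #x) * coverCount C k x = (Fintype.card α - #x) * μ := by
  rw [← sum_coverCount_insert, sum_congr rfl fun p hp => hμ p (Finset.mem_compl.mp hp), sum_const,
    card_compl, smul_eq_mul]

theorem mul_distCount_le_sum [Fintype α] (C : Finset (Finset α)) (x : Finset α) (k : ℕ) :
    (k + 1) * distCount C x (k + 1) ≤ ∑ i, distCount C (x ∆ {i}) k := by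
  have hcount : ∀ c ∈ C.filter (fun c => #(x ∆ c) = k + 1),
      k + 1 ≤ #{i | #((x ∆ {i}) ∆ c) = k} := by
    intro c hc
    have hk := (mem_filter.mp hc).2
    refine hk ▸ Finset.card_le_card fun i hi => mem_filter.mpr ⟨Finset.mem_univ i, ?_⟩
    have hcard := card_symmDiff_add_two_mul_card_inter (x ∆ c) {i}
    rw [Finset.inter_singleton_of_mem hi, Finset.card_singleton] at hcard
    rw [symmDiff_right_comm]
    omega
  calc (k + 1) * distCount C x (k + 1)
      = ∑ c ∈ C.filter (fun c => #(x ∆ c) = k + 1), (k + 1) := by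
        rw [sum_const, smul_eq_mul, mul_comm, distCount]
    _ ≤ ∑ c ∈ C.filter (fun c => #(x ∆ c) = k + 1), #{i | #((x ∆ {i}) ∆ c) = k} :=
        sum_le_sum hcount
    _ ≤ ∑ c ∈ C, #{i | #((x ∆ {i}) ∆ c) = k} := sum_le_sum_of_subset (filter_subset _ _)
    _ = ∑ i, distCount C (x ∆ {i}) k := sum_card_bipartiteAbove_eq_sum_card_bipartiteBelow _

end Counting

/-- A binary completely regular code of length 16 and minimum distance 6, given by the supports of
its codewords in a set `α` of 16 coordinates. -/
structure IsCRCode {α : Type*} [Fintype α] [DecidableEq α] (C : Finset (Finset α)) : Prop where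
  card_points : Fintype.card α = 16
  distCount_eq : ∀ {i x y}, IsAtDist C i x → IsAtDist C i y → ∀ k, distCount C x k = distCount C y k
  six_le_card_symmDiff : ∀ {c c'}, c ∈ C → c' ∈ C → c ≠ c' → 6 ≤ #(c ∆ c')
  exists_card_symmDiff_eq_six : ∃ c ∈ C, ∃ c' ∈ C, #(c ∆ c') = 6

/-- A code as in `IsCRCode` that contains the zero word. -/
structure IsCenteredCRCode {α : Type*} [Fintype α] [DecidableEq α] (C : Finset (Finset α)) : Prop
    extends IsCRCode C where
  empty_mem : ∅ ∈ C

section Design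

variable {α : Type*} [Fintype α] [DecidableEq α] {C : Finset (Finset α)} {T c c' w x : Finset α}

theorem IsCRCode.isCenteredCRCode_translate (hC : IsCRCode C) (hw : w ∈ C) :
    IsCenteredCRCode (translate C w) where
  card_points := hC.card_points
  distCount_eq hx hy k := by
    rw [distCount_translate, distCount_translate]
    exact hC.distCount_eq (isAtDist_translate.mp hx) (isAtDist_translate.mp hy) k
  six_le_card_symmDiff hc hc' hne := by
    rw [mem_translate] at hc hc'
    rw [← symmDiff_symmDiff_symmDiff_right _ _ w]
    exact hC.six_le_card_symmDiff hc hc' fun h => hne (symmDiff_left_injective w h)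
  exists_card_symmDiff_eq_six := by
    obtain ⟨c, hc, c', hc', h⟩ := hC.exists_card_symmDiff_eq_six
    exact ⟨_, symmDiff_mem_translate.mpr hc, _, symmDiff_mem_translate.mpr hc',
      (congrArg card (symmDiff_symmDiff_symmDiff_right c c' w)).trans h⟩
  empty_mem := by
    rwa [mem_translate, ← Finset.bot_eq_empty, bot_symmDiff]

theorem IsCRCode.two_mul_card_inter_add_six_le (hC : IsCRCode C) (hc : c ∈ C) (hc' : c' ∈ C)
    (hne : c ≠ c') : 2 * #(c ∩ c') + 6 ≤ #c + #c' := by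
  have := hC.six_le_card_symmDiff hc hc' hne
  have := card_symmDiff_add_two_mul_card_inter c c'
  omega

theorem IsCRCode.coverCount_six_le_one (hC : IsCRCode C) (hx : #x = 4) : coverCount C 6 x ≤ 1 := by
  rw [coverCount, card_le_one]
  intro c hc c' hc'
  simp only [mem_filter, mem_words] at hc hc'
  by_contra hne
  have := card_le_card (subset_inter hc.2 hc'.2)
  have := hC.two_mul_card_inter_add_six_le hc.1.1 hc'.1.1 hne
  omega

theorem IsCRCode.card_filter_coverCount_six_eq_zero_add (hC : IsCRCode C) (hT : #T = 3) :
    #{p ∈ Tᶜ | coverCount C 6 (insert p T) = 0} + 3 * coverCount C 6 T = 13 := by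
  have hsum := sum_coverCount_insert C 6 T
  have hcovered : ∑ p ∈ Tᶜ, coverCount C 6 (insert p T) =
      #{p ∈ Tᶜ | ¬coverCount C 6 (insert p T) = 0} := by
    rw [card_filter]
    refine sum_congr rfl fun p hp => ?_
    have := hC.coverCount_six_le_one (x := insert p T)
      (by rw [card_insert_of_notMem (Finset.mem_compl.mp hp), hT])
    split_ifs <;> omega
  have hsplit := card_filter_add_card_filter_not (s := Tᶜ)
    (fun p => coverCount C 6 (insert p T) = 0)
  have hcard := card_compl T
  rw [hC.card_points] at hcard
  rw [hT] at hsum hcard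
  omega

namespace IsCenteredCRCode

variable (hC : IsCenteredCRCode C)
include hC

theorem six_le_card (hc : c ∈ C) (hne : c ≠ ∅) : 6 ≤ #c := by
  simpa only [← Finset.bot_eq_empty, symmDiff_bot] using
    hC.six_le_card_symmDiff hc hC.empty_mem hne

theorem eq_empty_of_card_lt (hc : c ∈ C) (hlt : #c < 6) : c = ∅ := by
  by_contra hne
  exact (hC.six_le_card hc hne).not_gt hlt

theorem isAtDist_card (hx : #x ≤ 3) : IsAtDist C #x x := by
  refine ⟨⟨∅, hC.empty_mem, by rw [← Finset.bot_eq_empty, symmDiff_bot]⟩, fun c hc => ?_⟩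
  have hadd := card_symmDiff_add_two_mul_card_inter x c
  rcases eq_or_ne c ∅ with rfl | hne
  · simp only [Finset.inter_empty, Finset.card_empty] at hadd
    omega
  · have := hC.six_le_card hc hne
    have := Finset.card_le_card (Finset.inter_subset_left (s₁ := x) (s₂ := c))
    omega

theorem distCount_eq_coverCount {k : ℕ} (h6 : 6 ≤ #x + k) (h7 : #x + k ≤ 7) :
    distCount C x k = (if #x = k then 1 else 0) + coverCount C (#x + k) x := by
  have hadd (c : Finset α) := card_symmDiff_add_two_mul_card_inter x c
  have hempty : C.filter (fun c => #(x ∆ c) = k ∧ c = ∅) = if #x = k then {∅} else ∅ := by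
    ext c
    have := hadd ∅
    simp only [Finset.inter_empty, Finset.card_empty] at this
    split_ifs <;> simp only [mem_filter, Finset.mem_singleton, Finset.notMem_empty, iff_false] <;>
      grind [hC.empty_mem]
  have hcover : C.filter (fun c => #(x ∆ c) = k ∧ ¬c = ∅) =
      (words C (#x + k)).filter (x ⊆ ·) := by
    ext c
    simp only [mem_filter, mem_words]
    have hc := hadd c
    constructor
    · rintro ⟨hmem, hk, hne⟩
      have := hC.six_le_card hmem hne
      have hle := Finset.card_le_card (Finset.inter_subset_left (s₁ := x) (s₂ := c))
      exact ⟨⟨hmem, by omega⟩, card_inter_eq_left_iff.mp (by omega)⟩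
    · rintro ⟨⟨hmem, hk⟩, hsub⟩
      rw [Finset.inter_eq_left.mpr hsub] at hc
      exact ⟨hmem, by omega, fun h => by rw [h, Finset.card_empty] at hk; omega⟩
  rw [distCount, ← card_filter_add_card_filter_not (· = ∅), filter_filter, filter_filter, hempty,
    hcover, coverCount]
  split_ifs <;> rfl

theorem exists_hexad : ∃ c ∈ C, #c = 6 := by
  obtain ⟨c, hc, c', hc', h⟩ := hC.exists_card_symmDiff_eq_six
  have hself : IsAtDist C 0 c := ⟨⟨c, hc, by rw [symmDiff_self]; rfl⟩, fun _ _ => Nat.zero_le _⟩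
  have hpos : 0 < distCount C c 6 := card_pos.mpr ⟨c', mem_filter.mpr ⟨hc', h⟩⟩
  rw [hC.distCount_eq hself (hC.isAtDist_card (x := ∅) (Nat.zero_le 3)),
    hC.distCount_eq_coverCount (by simp) (by simp)] at hpos
  obtain ⟨c, hc, h6, -⟩ := coverCount_pos.mp (by simpa using hpos)
  exact ⟨c, hc, h6⟩

theorem coverCount_six_congr {S T : Finset α} (hS : #S = 3) (hT : #T = 3) :
    coverCount C 6 S = coverCount C 6 T := by
  have hreg := hC.distCount_eq (hS ▸ hC.isAtDist_card hS.le) (hT ▸ hC.isAtDist_card hT.le) 3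
  rw [hC.distCount_eq_coverCount (by omega) (by omega),
    hC.distCount_eq_coverCount (by omega) (by omega), hS, hT] at hreg
  exact Nat.add_left_cancel hreg

theorem four_mul_coverCount_six (hT : #T = 3) {P : Finset α} (hP : #P = 2) :
    4 * coverCount C 6 P = 14 * coverCount C 6 T := by
  have := mul_coverCount_eq (C := C) (k := 6) (x := P) fun p hp => hC.coverCount_six_congr
    (S := insert p P) (T := T) (by rw [card_insert_of_notMem hp, hP]) hT
  rwa [hP, hC.card_points] at this

theorem coverCount_six_eq_two_or_four (hT : #T = 3) :
    coverCount C 6 T = 2 ∨ coverCount C 6 T = 4 := by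
  obtain ⟨h, hh, h6⟩ := hC.exists_hexad
  obtain ⟨S, hSh, hS⟩ := Finset.exists_subset_card_eq (s := h) (n := 3) (by omega)
  obtain ⟨P, -, hP⟩ := Finset.exists_subset_card_eq (s := T) (n := 2) (by omega)
  have hpos : 0 < coverCount C 6 T :=
    hC.coverCount_six_congr hS hT ▸ coverCount_pos.mpr ⟨h, hh, h6, hSh⟩
  have := hC.card_filter_coverCount_six_eq_zero_add hT
  have := hC.four_mul_coverCount_six hT hP
  omega

theorem two_le_card_symmDiff (hx : #x = 4) (hc : c ∈ C) : 2 ≤ #(x ∆ c) := by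
  have hadd := card_symmDiff_add_two_mul_card_inter x c
  have hle := Finset.card_le_card (Finset.inter_subset_left (s₁ := x) (s₂ := c))
  rcases eq_or_ne c ∅ with rfl | hne
  · simp only [Finset.inter_empty, Finset.card_empty] at hadd
    omega
  · have := hC.six_le_card hc hne
    omega

theorem isAtDist_two (hx : #x = 4) (hcov : 0 < coverCount C 6 x) : IsAtDist C 2 x := by
  obtain ⟨c, hc, h6, hxc⟩ := coverCount_pos.mp hcov
  have hadd := card_symmDiff_add_two_mul_card_inter x c
  rw [Finset.inter_eq_left.mpr hxc] at hadd
  exact ⟨⟨c, hc, by omega⟩, fun c hc => hC.two_le_card_symmDiff hx hc⟩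

theorem three_le_card_symmDiff (hx : #x = 4) (hcov : coverCount C 6 x = 0) (hc : c ∈ C) :
    3 ≤ #(x ∆ c) := by
  refine (hC.two_le_card_symmDiff hx hc).lt_of_ne fun h2 => ?_
  have hzero : distCount C x 2 = 0 := by
    rw [hC.distCount_eq_coverCount (by omega) (by omega), hx, hcov, if_neg (by decide)]
  exact (card_eq_zero.mp hzero ▸ Finset.notMem_empty c) (mem_filter.mpr ⟨hc, h2.symm⟩)

theorem card_inter_eq_three_add (hx : #x = 4) (hT : #T = 3) :
    #{c ∈ words C 6 | #(x ∩ c) = 3} + 4 * coverCount C 6 x = 4 * coverCount C 6 T := by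
  have htriples : ∑ c ∈ words C 6, (#(x ∩ c)).choose 3 = 4 * coverCount C 6 T := by
    rw [sum_choose_card_inter_eq_mul fun y hy => hC.coverCount_six_congr hy hT, hx]
    rfl
  have hchoose : ∀ c ∈ words C 6, (#(x ∩ c)).choose 3 =
      (if #(x ∩ c) = 3 then 1 else 0) + 4 * if x ⊆ c then 1 else 0 := by
    intro c _
    have hle := Finset.card_le_card (Finset.inter_subset_left (s₁ := x) (s₂ := c))
    simp only [← card_inter_eq_left_iff, hx] at hle ⊢
    interval_cases #(x ∩ c) <;> rfl
  rw [← htriples, sum_congr rfl hchoose, sum_add_distrib, ← mul_sum, ← card_filter, ← card_filter,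
    coverCount]

theorem distCount_four_eq (hx : #x = 4) :
    distCount C x 4 = 1 + #{c ∈ words C 6 | #(x ∩ c) = 3} + coverCount C 8 x := by
  have hcases : C.filter (fun c => #(x ∆ c) = 4) =
      insert ∅ ({c ∈ words C 6 | #(x ∩ c) = 3} ∪ {c ∈ words C 8 | x ⊆ c}) := by
    ext c
    have hc := card_symmDiff_add_two_mul_card_inter x c
    have hle := Finset.card_le_card (Finset.inter_subset_left (s₁ := x) (s₂ := c))
    simp only [mem_filter, Finset.mem_insert, Finset.mem_union, mem_words, ← card_inter_eq_left_iff]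
    rcases eq_or_ne c ∅ with rfl | hne
    · simp only [Finset.inter_empty, Finset.card_empty] at hc
      simp only [hC.empty_mem, true_and, true_or, iff_true]
      omega
    · have := hC.six_le_card (c := c)
      grind
  rw [distCount, hcases, card_insert_of_notMem, card_union_of_disjoint, coverCount]
  · ring
  · exact (Finset.disjoint_left.mpr fun c h h' => by grind [mem_words])
  · simp [mem_words]

theorem distCount_four (hx : #x = 4) (hT : #T = 3) :
    distCount C x 4 + 4 * coverCount C 6 x = 1 + 4 * coverCount C 6 T + coverCount C 8 x := by
  have := hC.card_inter_eq_three_add hx hT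
  have := hC.distCount_four_eq hx
  omega

theorem distCount_three (hT : #T = 3) : distCount C T 3 = 1 + coverCount C 6 T := by
  rw [hC.distCount_eq_coverCount (by omega) (by omega), if_pos hT, hT]

theorem distCount_eq_of_isAtDist_three (hT : #T = 3) (hx : IsAtDist C 3 x) (k : ℕ) :
    distCount C x k = distCount C T k :=
  hC.distCount_eq hx (hT ▸ hC.isAtDist_card hT.le) k

theorem coverCount_seven (hx : #x = 4) : coverCount C 7 x = distCount C x 3 := by
  rw [hC.distCount_eq_coverCount (by omega) (by omega), hx, if_neg (by decide), Nat.zero_add]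

theorem isAtDist_three (hx : #x = 4) (h7 : 0 < coverCount C 7 x) :
    coverCount C 6 x = 0 ∧ IsAtDist C 3 x := by
  obtain ⟨c, hc, hc7, hxc⟩ := coverCount_pos.mp h7
  have hcov : coverCount C 6 x = 0 := by
    by_contra hne
    obtain ⟨c', hc', hc6, hxc'⟩ := coverCount_pos.mp (Nat.pos_of_ne_zero hne)
    have := Finset.card_le_card (Finset.subset_inter hxc hxc')
    have := hC.two_mul_card_inter_add_six_le hc hc' (by rintro rfl; omega)
    omega
  have hadd := card_symmDiff_add_two_mul_card_inter x c
  rw [Finset.inter_eq_left.mpr hxc] at hadd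
  exact ⟨hcov, ⟨c, hc, by omega⟩, fun c hc => hC.three_le_card_symmDiff hx hcov hc⟩

theorem coverCount_seven_triple_le (hT : #T = 3) :
    4 * coverCount C 7 T ≤ (13 - 3 * coverCount C 6 T) * (1 + coverCount C 6 T) := by
  have hcount := hC.card_filter_coverCount_six_eq_zero_add hT
  have hsum := sum_coverCount_insert C 7 T
  rw [hT] at hsum
  rw [← Nat.eq_sub_of_add_eq hcount, ← smul_eq_mul (_ : ℕ) (1 + _), ← sum_const, sum_filter, ← hsum]
  refine sum_le_sum fun p hp => ?_
  have hx : #(insert p T) = 4 := by rw [card_insert_of_notMem (Finset.mem_compl.mp hp), hT]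
  rcases Nat.eq_zero_or_pos (coverCount C 7 (insert p T)) with h0 | hpos
  · rw [h0]
    exact Nat.zero_le _
  · obtain ⟨hcov, hdist⟩ := hC.isAtDist_three hx hpos
    rw [if_pos hcov, hC.coverCount_seven hx, hC.distCount_eq_of_isAtDist_three hT hdist,
      hC.distCount_three hT]

theorem card_ne_seven (hc : c ∈ C) : #c ≠ 7 := by
  intro h7
  obtain ⟨x, hxc, hx⟩ := Finset.exists_subset_card_eq (s := c) (n := 4) (by omega)
  obtain ⟨T, -, hT⟩ := Finset.exists_subset_card_eq (s := x) (n := 3) (by omega)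
  obtain ⟨hcov, hdist⟩ := hC.isAtDist_three hx (coverCount_pos.mpr ⟨c, hc, h7, hxc⟩)
  have hlower := hC.distCount_four hx hT
  rw [hcov, hC.distCount_eq_of_isAtDist_three hT hdist,
    hC.distCount_eq_coverCount (by omega) (by omega), hT, if_neg (by decide)] at hlower
  simp only [Nat.reduceAdd] at hlower
  have hupper := hC.coverCount_seven_triple_le hT
  rcases hC.coverCount_six_eq_two_or_four hT with h | h <;> rw [h] at hlower hupper <;> omega

theorem isAtDist_four (hx : #x = 4) (hcov : coverCount C 6 x = 0) : IsAtDist C 4 x := by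
  refine ⟨⟨∅, hC.empty_mem, by rw [← Finset.bot_eq_empty, symmDiff_bot, hx]⟩, fun c hc => ?_⟩
  refine (hC.three_le_card_symmDiff hx hcov hc).lt_of_ne fun h3 => ?_
  have hpos : 0 < distCount C x 3 := card_pos.mpr ⟨c, mem_filter.mpr ⟨hc, h3.symm⟩⟩
  rw [← hC.coverCount_seven hx] at hpos
  obtain ⟨d, hd, h7, -⟩ := coverCount_pos.mp hpos
  exact hC.card_ne_seven hd h7

theorem coverCount_eight_of_pos (hx : #x = 4) (hcov : 0 < coverCount C 6 x) (hT : #T = 3) :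
    2 * coverCount C 8 x + coverCount C 6 T = 6 := by
  obtain ⟨P, -, hP⟩ := Finset.exists_subset_card_eq (s := T) (n := 2) (by omega)
  have hpair := hC.four_mul_coverCount_six hT hP
  have hreg := hC.distCount_eq (hC.isAtDist_two hx hcov) (hP ▸ hC.isAtDist_card (by omega)) 4
  rw [hC.distCount_eq_coverCount (x := P) (by omega) (by omega), hP, if_neg (by decide)] at hreg
  simp only [Nat.reduceAdd] at hreg
  have hfour := hC.distCount_four hx hT
  have hone := hC.coverCount_six_le_one hx
  omega

theorem distCount_three_le (hy : ∀ c ∈ C, 3 ≤ #(x ∆ c)) (hT : #T = 3) :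
    distCount C x 3 ≤ 1 + coverCount C 6 T := by
  rcases Nat.eq_zero_or_pos (distCount C x 3) with h0 | hpos
  · rw [h0]
    exact Nat.zero_le _
  · obtain ⟨c, hc⟩ := card_pos.mp hpos
    rw [hC.distCount_eq_of_isAtDist_three hT ⟨⟨c, mem_filter.mp hc⟩, hy⟩, hC.distCount_three hT]

theorem coverCount_eight_le (hx : #x = 4) (hcov : coverCount C 6 x = 0) :
    coverCount C 8 x ≤ 3 := by
  obtain ⟨T, -, hT⟩ := Finset.exists_subset_card_eq (s := x) (n := 3) (by omega)
  have hterm : ∀ i ∈ Finset.univ, distCount C (x ∆ {i}) 3 ≤ 1 + coverCount C 6 T := by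
    refine fun i _ => hC.distCount_three_le (fun c hc => ?_) hT
    have hadd := card_symmDiff_add_two_mul_card_inter (x ∆ c) {i}
    have hle := Finset.card_le_card (Finset.inter_subset_right (s₁ := x ∆ c) (s₂ := {i}))
    have := (hC.isAtDist_four hx hcov).2 c hc
    rw [Finset.card_singleton] at hadd hle
    rw [symmDiff_right_comm]
    omega
  have hsum : 4 * distCount C x 4 ≤ _ :=
    (mul_distCount_le_sum C x 3).trans (sum_le_card_nsmul _ _ _ hterm)
  rw [Finset.card_univ, hC.card_points, smul_eq_mul] at hsum
  have := hC.distCount_four hx hT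
  omega

theorem coverCount_eight_congr {y : Finset α} (hx : #x = 4) (hy : #y = 4)
    (hcovx : coverCount C 6 x = 0) (hcovy : coverCount C 6 y = 0) :
    coverCount C 8 x = coverCount C 8 y := by
  obtain ⟨T, -, hT⟩ := Finset.exists_subset_card_eq (s := x) (n := 3) (by omega)
  have := hC.distCount_eq (hC.isAtDist_four hx hcovx) (hC.isAtDist_four hy hcovy) 4
  have := hC.distCount_four hx hT
  have := hC.distCount_four hy hT
  omega

theorem exists_coverCount_six_eq_zero (hT : #T = 3) :
    ∃ p ∉ T, coverCount C 6 (insert p T) = 0 := by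
  have := hC.card_filter_coverCount_six_eq_zero_add hT
  obtain ⟨p, hp⟩ := card_pos.mp
    (by omega : 0 < #{p ∈ Tᶜ | coverCount C 6 (insert p T) = 0})
  obtain ⟨hp, h0⟩ := mem_filter.mp hp
  exact ⟨p, Finset.mem_compl.mp hp, h0⟩

theorem five_mul_coverCount_eight {v : ℕ} (hT : #T = 3) (hv : 2 * v + coverCount C 6 T = 6)
    (hx : #x = 4) (hcov : coverCount C 6 x = 0) :
    5 * coverCount C 8 T =
      (13 - 3 * coverCount C 6 T) * coverCount C 8 x + 3 * coverCount C 6 T * v := by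
  have hterm : ∀ p ∈ Tᶜ, coverCount C 8 (insert p T) =
      if coverCount C 6 (insert p T) = 0 then coverCount C 8 x else v := by
    intro p hp
    have hcard : #(insert p T) = 4 := by rw [card_insert_of_notMem (Finset.mem_compl.mp hp), hT]
    split_ifs with h0
    · exact hC.coverCount_eight_congr hcard hx h0 hcov
    · have := hC.coverCount_eight_of_pos hcard (Nat.pos_of_ne_zero h0) hT
      omega
  have hcount := hC.card_filter_coverCount_six_eq_zero_add hT
  have hsplit := card_filter_add_card_filter_not (s := Tᶜ)
    (fun p => coverCount C 6 (insert p T) = 0)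
  rw [card_compl, hC.card_points, hT] at hsplit
  have hsum := sum_coverCount_insert C 8 T
  rw [hT, sum_congr rfl hterm, sum_ite, sum_const, sum_const, smul_eq_mul, smul_eq_mul,
    Nat.eq_sub_of_add_eq hcount, show #{p ∈ Tᶜ | ¬coverCount C 6 (insert p T) = 0} =
      3 * coverCount C 6 T by omega] at hsum
  exact hsum.symm

theorem coverCount_triple_and_quadruple (hT : #T = 3) (hx : #x = 4) (hcov : coverCount C 6 x = 0) :
    coverCount C 6 T = 4 ∧ coverCount C 8 T = 3 ∧ coverCount C 8 x = 3 := by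
  have hle := hC.coverCount_eight_le hx hcov
  rcases hC.coverCount_six_eq_two_or_four hT with h | h
  · have := hC.five_mul_coverCount_eight hT (v := 2) (by omega) hx hcov
    rw [h] at this
    omega
  · have := hC.five_mul_coverCount_eight hT (v := 1) (by omega) hx hcov
    rw [h] at this
    omega

theorem coverCount_eight_of_coverCount_six_eq_zero (hx : #x = 4) (hcov : coverCount C 6 x = 0) :
    coverCount C 8 x = 3 := by
  obtain ⟨T, -, hT⟩ := Finset.exists_subset_card_eq (s := x) (n := 3) (by omega)
  exact (hC.coverCount_triple_and_quadruple hT hx hcov).2.2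

theorem coverCount_triple (hT : #T = 3) : coverCount C 6 T = 4 ∧ coverCount C 8 T = 3 := by
  obtain ⟨p, hp, hcov⟩ := hC.exists_coverCount_six_eq_zero hT
  have := hC.coverCount_triple_and_quadruple hT (by rw [card_insert_of_notMem hp, hT]) hcov
  exact ⟨this.1, this.2.1⟩

theorem coverCount_eight_pair (hx : #x = 2) : coverCount C 8 x = 7 := by
  have := mul_coverCount_eq (C := C) (k := 8) fun p hp =>
    (hC.coverCount_triple (T := insert p x) (by rw [card_insert_of_notMem hp, hx])).2
  rw [hx, hC.card_points] at this
  omega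

theorem coverCount_eight_singleton (hx : #x = 1) : coverCount C 8 x = 15 := by
  have := mul_coverCount_eq (C := C) (k := 8) fun p hp =>
    hC.coverCount_eight_pair (x := insert p x) (by rw [card_insert_of_notMem hp, hx])
  rw [hx, hC.card_points] at this
  omega

theorem card_words_eight : #(words C 8) = 30 := by
  have := mul_coverCount_eq (C := C) (k := 8) (x := ∅) fun p hp =>
    hC.coverCount_eight_singleton (by rw [card_insert_of_notMem hp, Finset.card_empty])
  rw [coverCount_empty, hC.card_points, Finset.card_empty] at this
  omega

theorem card_words_six : #(words C 6) = 112 := by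
  have hpair (y : Finset α) (hy : #y = 2) : coverCount C 6 y = 14 := by
    have := mul_coverCount_eq (C := C) (k := 6) fun p hp =>
      (hC.coverCount_triple (T := insert p y) (by rw [card_insert_of_notMem hp, hy])).1
    rw [hy, hC.card_points] at this
    omega
  have hpoint (y : Finset α) (hy : #y = 1) : coverCount C 6 y = 42 := by
    have := mul_coverCount_eq (C := C) (k := 6) fun p hp =>
      hpair (insert p y) (by rw [card_insert_of_notMem hp, hy])
    rw [hy, hC.card_points] at this
    omega
  have := mul_coverCount_eq (C := C) (k := 6) (x := ∅) fun p hp =>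
    hpoint (insert p ∅) (by rw [card_insert_of_notMem hp, Finset.card_empty])
  rw [coverCount_empty, hC.card_points, Finset.card_empty] at this
  omega

theorem sum_card_inter_octads (x : Finset α) : ∑ W ∈ words C 8, #(x ∩ W) = #x * 15 := by
  simpa only [Nat.choose_one_right] using
    sum_choose_card_inter_eq_mul (fun _ => hC.coverCount_eight_singleton) x

variable {H V W : Finset α}

-- With `j = #(W ∩ V)` the summand is `j * (j - 4) ^ 2`, expanded so that no subtraction truncates.
theorem sum_card_inter_mul_sq_sub_four (hW : #W = 8) :
    ∑ V ∈ words C 8, #(W ∩ V) * (#(W ∩ V) * #(W ∩ V) + 16 - 8 * #(W ∩ V)) = 128 := by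
  have hmoment : ∀ V ∈ words C 8,
      6 * (#(W ∩ V)).choose 3 + 9 * #(W ∩ V) = 10 * (#(W ∩ V)).choose 2 +
        #(W ∩ V) * (#(W ∩ V) * #(W ∩ V) + 16 - 8 * #(W ∩ V)) := by
    intro V _
    have hle := Finset.card_le_card (Finset.inter_subset_left (s₁ := W) (s₂ := V))
    rw [hW] at hle
    interval_cases #(W ∩ V) <;> rfl
  have hsum := sum_congr rfl hmoment
  rw [sum_add_distrib, sum_add_distrib, ← mul_sum, ← mul_sum, ← mul_sum, hC.sum_card_inter_octads,
    sum_choose_card_inter_eq_mul fun _ h => (hC.coverCount_triple h).2,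
    sum_choose_card_inter_eq_mul fun _ => hC.coverCount_eight_pair, hW] at hsum
  exact Nat.add_left_cancel (hsum.symm.trans rfl)

theorem card_octad_inter_octad (hW : W ∈ words C 8) (hV : V ∈ words C 8) (hne : V ≠ W) :
    #(W ∩ V) = 0 ∨ #(W ∩ V) = 4 := by
  have hcard := (mem_words.mp hW).2
  have hsum := hC.sum_card_inter_mul_sq_sub_four hcard
  rw [← add_sum_erase _ _ hW, Finset.inter_self, hcard] at hsum
  have hzero := Finset.sum_eq_zero_iff.mp (Nat.add_left_cancel (hsum.trans rfl) : _ = 0) V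
    (mem_erase.mpr ⟨hne, hV⟩)
  have hle := Finset.card_le_card (Finset.inter_subset_left (s₁ := W) (s₂ := V))
  rw [hcard] at hle
  interval_cases #(W ∩ V) <;> simp_all

theorem compl_octad_mem (hW : W ∈ words C 8) : Wᶜ ∈ C := by
  have hcard := (mem_words.mp hW).2
  have hsum := hC.sum_card_inter_octads W
  rw [← add_sum_erase _ _ hW, Finset.inter_self, hcard] at hsum
  obtain ⟨V, hV, hdisj⟩ : ∃ V ∈ (words C 8).erase W, #(W ∩ V) = 0 := by
    by_contra! hne
    have hfour : ∀ V ∈ (words C 8).erase W, #(W ∩ V) = 4 := fun V hV =>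
      (hC.card_octad_inter_octad hW (mem_of_mem_erase hV) (ne_of_mem_erase hV)).resolve_left
        (hne V hV)
    rw [sum_congr rfl hfour, sum_const, card_erase_of_mem hW, hC.card_words_eight] at hsum
    simp at hsum
  obtain ⟨hVC, hV8⟩ := mem_words.mp (mem_of_mem_erase hV)
  have hVW : V = Wᶜ := by
    refine Finset.eq_of_subset_of_card_le ?_ ?_
    · rwa [Finset.subset_compl_iff_disjoint_left, Finset.disjoint_iff_inter_eq_empty,
        ← card_eq_zero]
    · rw [card_compl, hC.card_points, hcard, hV8]
  exact hVW ▸ hVC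

theorem univ_mem : Finset.univ ∈ C := by
  obtain ⟨W, hW⟩ := card_pos.mp (hC.card_words_eight.ge.trans' (Nat.succ_pos 29))
  obtain ⟨hWC, hW8⟩ := mem_words.mp hW
  have hW' : W ∈ words (translate C W) 8 := by
    rw [mem_words, mem_translate, symmDiff_self]
    exact ⟨hC.empty_mem, hW8⟩
  simpa only [mem_translate, compl_symmDiff_self, Finset.top_eq_univ] using
    (hC.isCenteredCRCode_translate hWC).compl_octad_mem hW'

theorem compl_mem (hc : c ∈ C) : cᶜ ∈ C := by
  simpa only [mem_translate, ← Finset.top_eq_univ, top_symmDiff, hnot_eq_compl] using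
    (hC.isCenteredCRCode_translate hc).univ_mem

theorem even_card_hexad_inter_octad (hH : H ∈ words C 6) (hW : W ∈ words C 8) :
    Even #(H ∩ W) := by
  obtain ⟨hHC, hH6⟩ := mem_words.mp hH
  have hbounds : ∀ V ∈ words C 8, 2 ≤ #(H ∩ V) ∧ #(H ∩ V) ≤ 4 := by
    intro V hV
    obtain ⟨hVC, hV8⟩ := mem_words.mp hV
    have hcompl : #Vᶜ = 8 := by rw [card_compl, hC.card_points, hV8]
    have := hC.two_mul_card_inter_add_six_le hHC hVC (by rintro rfl; omega)
    have := hC.two_mul_card_inter_add_six_le hHC (hC.compl_mem hVC) (by rintro rfl; omega)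
    have := card_inter_add_card_sdiff H V
    rw [sdiff_eq_inter_compl] at this
    omega
  -- With `j = #(H ∩ V)` the inequality says `(j - 2) * (j - 4) ≤ 0`.
  have hle : ∀ V ∈ words C 8, 2 * (#(H ∩ V)).choose 2 + 8 ≤ 5 * #(H ∩ V) := by
    intro V hV
    obtain ⟨h2, h4⟩ := hbounds V hV
    interval_cases #(H ∩ V) <;> decide
  have hsum :
      ∑ V ∈ words C 8, (2 * (#(H ∩ V)).choose 2 + 8) = ∑ V ∈ words C 8, 5 * #(H ∩ V) := by
    rw [sum_add_distrib, ← mul_sum, ← mul_sum, sum_const, hC.card_words_eight,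
      hC.sum_card_inter_octads, sum_choose_card_inter_eq_mul fun _ => hC.coverCount_eight_pair, hH6]
    rfl
  have heq := (sum_eq_sum_iff_of_le hle).mp hsum W hW
  obtain ⟨h2, h4⟩ := hbounds W hW
  interval_cases #(H ∩ W) <;> first | decide | exact absurd heq (by decide)

theorem card_mem (hc : c ∈ C) : #c = 0 ∨ #c = 6 ∨ #c = 8 ∨ #c = 10 ∨ #c = 16 := by
  have hadd := card_add_card_compl c
  rw [hC.card_points] at hadd
  have h7 := hC.card_ne_seven hc
  have h7' := hC.card_ne_seven (hC.compl_mem hc)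
  have h6 := hC.eq_empty_of_card_lt hc
  have h6' := hC.eq_empty_of_card_lt (hC.compl_mem hc)
  simp only [← card_eq_zero] at h6 h6'
  omega

theorem even_card_inter_octad (hc : c ∈ C) (hW : W ∈ words C 8) : Even #(c ∩ W) := by
  have hW8 : Even #W := (mem_words.mp hW).2 ▸ by decide
  have hcompl := card_inter_add_card_sdiff W c
  rw [sdiff_eq_inter_compl, Finset.inter_comm W c, Finset.inter_comm W] at hcompl
  rcases hC.card_mem hc with h0 | h6 | h8 | h10 | h16
  · rw [card_eq_zero.mp h0, Finset.empty_inter]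
    exact Even.zero
  · exact hC.even_card_hexad_inter_octad (mem_words.mpr ⟨hc, h6⟩) hW
  · rcases eq_or_ne W c with rfl | hne
    · rwa [Finset.inter_self]
    · rcases hC.card_octad_inter_octad (mem_words.mpr ⟨hc, h8⟩) hW hne with h | h <;> rw [h] <;>
        decide
  · have h6 : #cᶜ = 6 := by rw [card_compl, hC.card_points, h10]
    have := hC.even_card_hexad_inter_octad (mem_words.mpr ⟨hC.compl_mem hc, h6⟩) hW
    exact (Nat.even_add.mp (hcompl.symm ▸ hW8)).mpr this
  · rwa [(card_eq_iff_eq_univ c).mp (h16.trans hC.card_points.symm), Finset.univ_inter]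

theorem card_words_sub {k : ℕ} (hk : k ≤ 16) : #(words C (16 - k)) = #(words C k) := by
  have hcompl (j : ℕ) : ∀ c ∈ words C j, cᶜ ∈ words C (16 - j) := fun c hc =>
    mem_words.mpr ⟨hC.compl_mem (mem_words.mp hc).1, by
      rw [card_compl, hC.card_points, (mem_words.mp hc).2]⟩
  refine card_nbij' compl compl (fun c hc => ?_) (hcompl k) (fun c _ => compl_compl c)
    fun c _ => compl_compl c
  have hmem := hcompl (16 - k) c hc
  rwa [Nat.sub_sub_self hk] at hmem

theorem card_words_zero : #(words C 0) = 1 := by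
  rw [card_eq_one]
  refine ⟨∅, ext fun c => ?_⟩
  rw [mem_words, Finset.mem_singleton, card_eq_zero]
  exact ⟨And.right, fun h => ⟨h ▸ hC.empty_mem, h⟩⟩

theorem card_eq : #C = 256 := by
  have hmaps : ∀ c ∈ C, #c ∈ ({0, 6, 8, 10, 16} : Finset ℕ) := fun c hc => by
    simpa only [Finset.mem_insert, Finset.mem_singleton] using hC.card_mem hc
  have hzero := hC.card_words_zero
  have hsix := hC.card_words_six
  have hoctads := hC.card_words_eight
  have hten : #(words C 10) = _ := hC.card_words_sub (k := 6) (by decide)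
  have hsixteen : #(words C 16) = _ := hC.card_words_sub (k := 0) (by decide)
  calc #C = ∑ k ∈ {0, 6, 8, 10, 16}, #(words C k) := card_eq_sum_card_fiberwise hmaps
    _ = #(words C 0) + (#(words C 6) + (#(words C 8) + (#(words C 10) + #(words C 16)))) := by
      simp
    _ = 256 := by omega

theorem subset_octad_of_three_le_card_inter {Q : Finset α} (hQ : #Q = 4)
    (hcov : coverCount C 6 Q = 0) (hW : W ∈ words C 8) (h3 : 3 ≤ #(Q ∩ W)) : Q ⊆ W := by
  obtain ⟨T, hTQW, hT⟩ := Finset.exists_subset_card_eq h3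
  have hsub : (words C 8).filter (Q ⊆ ·) ⊆ (words C 8).filter (T ⊆ ·) :=
    monotone_filter_right _ fun V _ hV => (hTQW.trans Finset.inter_subset_left).trans hV
  have heq := Finset.eq_of_subset_of_card_le hsub (by
    rw [← coverCount, ← coverCount, (hC.coverCount_triple hT).2,
      hC.coverCount_eight_of_coverCount_six_eq_zero hQ hcov])
  have hTW : W ∈ (words C 8).filter (T ⊆ ·) :=
    mem_filter.mpr ⟨hW, hTQW.trans Finset.inter_subset_right⟩
  exact (mem_filter.mp (heq ▸ hTW)).2

theorem even_card_inter_octad_of_coverCount_six_eq_zero {Q : Finset α} (hQ : #Q = 4)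
    (hcov : coverCount C 6 Q = 0) (hW : W ∈ words C 8) : Even #(Q ∩ W) := by
  obtain ⟨hWC, hW8⟩ := mem_words.mp hW
  have hW' : Wᶜ ∈ words C 8 := mem_words.mpr ⟨hC.compl_mem hWC, by
    rw [card_compl, hC.card_points, hW8]⟩
  have hadd := card_inter_add_card_sdiff Q W
  have hthree := hC.subset_octad_of_three_le_card_inter hQ hcov hW
  have hone := hC.subset_octad_of_three_le_card_inter hQ hcov hW'
  rw [← card_inter_eq_left_iff] at hthree hone
  rw [sdiff_eq_inter_compl] at hadd
  rw [Nat.even_iff]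
  omega

theorem exists_octad_mem_notMem {a b : α} (hab : a ≠ b) : ∃ W ∈ words C 8, a ∈ W ∧ b ∉ W := by
  by_contra! hall
  have heq : (words C 8).filter ({a} ⊆ ·) = (words C 8).filter ({a, b} ⊆ ·) :=
    filter_congr fun W hW => by
      simpa only [Finset.insert_subset_iff, Finset.singleton_subset_iff, iff_self_and]
        using hall W hW
  have hone := hC.coverCount_eight_singleton (Finset.card_singleton a)
  have htwo := hC.coverCount_eight_pair (card_pair hab)
  rw [coverCount, heq, ← coverCount, htwo] at hone
  omega

end IsCenteredCRCode

end Design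

section Kerdock

/-- The Boolean quadratic form `∑ i < j, aᵢⱼ xᵢ xⱼ` in four variables; the coefficients are ordered
`a₀₁, a₀₂, a₀₃, a₁₂, a₁₃, a₂₃`. -/
def quad (a : Fin 6 → ZMod 2) (x : Fin 4 → ZMod 2) : ZMod 2 :=
  a 0 * (x 0 * x 1) + a 1 * (x 0 * x 2) + a 2 * (x 0 * x 3) + a 3 * (x 1 * x 2) +
    a 4 * (x 1 * x 3) + a 5 * (x 2 * x 3)

/-- The affine Boolean function with linear part `b` and constant term `c`. -/
def aff (b : Fin 4 → ZMod 2) (c : ZMod 2) (x : Fin 4 → ZMod 2) : ZMod 2 := b ⬝ᵥ x + c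

/-- The Pfaffian of the alternating matrix that is the polarization of `quad a`. -/
def pfaffian (a : Fin 6 → ZMod 2) : ZMod 2 := a 0 * a 5 + a 1 * a 4 + a 2 * a 3

/-- The quadratic parts of the Nordstrom-Robinson code: besides `0` and the sum of all monomials,
these are the paths `i - j - k - l` on the vertices `0, 1, 2, 3` with `ijkl` an even permutation. -/
def kerdockSet : Finset (Fin 6 → ZMod 2) :=
  {![0, 0, 0, 0, 0, 0], ![1, 1, 1, 1, 1, 1], ![1, 0, 0, 1, 0, 1], ![0, 1, 0, 0, 1, 1],
    ![0, 0, 1, 1, 1, 0], ![1, 0, 1, 0, 0, 1], ![0, 1, 1, 1, 0, 0], ![1, 1, 0, 0, 1, 0]}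

/-- The Nordstrom-Robinson code, as a union of cosets of the affine functions on `𝔽₂⁴`. -/
def nordstromRobinson : Set ((Fin 4 → ZMod 2) → ZMod 2) :=
  {f | ∃ a ∈ kerdockSet, ∃ b c, f = quad a + aff b c}

/-- The permutation of the coefficients of a quadratic form that exchanges `x₀` and `x₁`. -/
def swapCoeff : Equiv.Perm (Fin 6) := Equiv.swap 1 3 * Equiv.swap 2 4

/-- The permutation of `𝔽₂⁴` that exchanges the variables `x₀` and `x₁`. -/
def swapVars : Equiv.Perm (Fin 4 → ZMod 2) := (Equiv.swap 0 1).arrowCongr (Equiv.refl _)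

theorem quad_add_aff_comp_swapVars (a : Fin 6 → ZMod 2) (b : Fin 4 → ZMod 2) (c : ZMod 2) :
    (quad a + aff b c) ∘ swapVars = quad (a ∘ swapCoeff) + aff (swapVars b) c := by
  ext x
  change a 0 * (x 1 * x 0) + a 1 * (x 1 * x 2) + a 2 * (x 1 * x 3) + a 3 * (x 0 * x 2) +
      a 4 * (x 0 * x 3) + a 5 * (x 2 * x 3) + aff b c (x ∘ Equiv.swap 0 1) =
    a 0 * (x 0 * x 1) + a 3 * (x 0 * x 2) + a 4 * (x 0 * x 3) + a 1 * (x 1 * x 2) +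
      a 2 * (x 1 * x 3) + a 5 * (x 2 * x 3) + aff (b ∘ Equiv.swap 0 1) c x
  rw [aff, aff, ← comp_equiv_symm_dotProduct, Equiv.symm_swap]
  ring

/-- Compatibility of the quadratic parts `a` and `b`: the cosets of `quad a` and `quad b` modulo
affine functions are equal or at Hamming distance at least 6. -/
def IsCompatible (a b : Fin 6 → ZMod 2) : Prop := a = b ∨ pfaffian (a + b) = 1

instance (a b : Fin 6 → ZMod 2) : Decidable (IsCompatible a b) :=
  inferInstanceAs (Decidable (_ ∨ _))

theorem mem_kerdockSet_or : ∀ a, IsCompatible 0 a → IsCompatible 1 a →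
    a ∈ kerdockSet ∨ a ∘ swapCoeff ∈ kerdockSet := by
  decide +kernel

theorem mem_insert_of_mixed : ∀ a ∈ kerdockSet, a ∘ swapCoeff ∉ kerdockSet →
    ∀ b, b ∉ kerdockSet → b ∘ swapCoeff ∈ kerdockSet → IsCompatible a b → ∀ c, IsCompatible 0 c →
    IsCompatible 1 c → IsCompatible a c → IsCompatible b c →
    c ∈ ({0, 1, a, b} : Finset (Fin 6 → ZMod 2)) := by
  decide +kernel

theorem eq_one_of_hammingNorm_quad_add_one :
    ∀ a : Fin 6 → ZMod 2, hammingNorm (quad a + 1) = 6 → a = 1 := by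
  decide +kernel

theorem exists_hammingNorm_eq_four :
    ∀ d, d ≠ 0 → pfaffian d ≠ 1 → ∃ b c, hammingNorm (quad d + aff b c) = 4 := by
  decide +kernel

theorem eq_kerdockSet_or {K : Finset (Fin 6 → ZMod 2)} (hcard : 8 ≤ #K) (h0 : 0 ∈ K) (h1 : 1 ∈ K)
    (hK : ∀ a ∈ K, ∀ b ∈ K, IsCompatible a b) :
    K = kerdockSet ∨ K = kerdockSet.image (· ∘ swapCoeff) := by
  have hcardA : #kerdockSet = 8 := by decide
  have hcardB : #(kerdockSet.image (· ∘ swapCoeff)) = 8 := by decide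
  have hmemB (a) : a ∈ kerdockSet.image (· ∘ swapCoeff) ↔ a ∘ swapCoeff ∈ kerdockSet := by
    revert a
    decide +kernel
  by_contra! hne
  obtain ⟨b, hb, hbA⟩ : ∃ b ∈ K, b ∉ kerdockSet := by
    by_contra! hsub
    exact hne.1 (Finset.eq_of_subset_of_card_le hsub (hcardA.trans_le hcard))
  obtain ⟨a, ha, haB⟩ : ∃ a ∈ K, a ∘ swapCoeff ∉ kerdockSet := by
    by_contra! hsub
    exact hne.2 (Finset.eq_of_subset_of_card_le (fun a ha => (hmemB a).mpr (hsub a ha))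
      (hcardB.trans_le hcard))
  have hmem : ∀ c ∈ K, c ∈ kerdockSet ∨ c ∘ swapCoeff ∈ kerdockSet := fun c hc =>
    mem_kerdockSet_or c (hK 0 h0 c hc) (hK 1 h1 c hc)
  have hsub : K ⊆ {0, 1, a, b} := fun c hc =>
    mem_insert_of_mixed a ((hmem a ha).resolve_right haB) haB b hbA ((hmem b hb).resolve_left hbA)
      (hK a ha b hb) c (hK 0 h0 c hc) (hK 1 h1 c hc) (hK a ha c hc) (hK b hb c hc)
  exact absurd (hcard.trans ((Finset.card_le_card hsub).trans card_le_four)) (by decide)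

theorem aff_vec (b : Fin 4 → ZMod 2) (c x y z w : ZMod 2) :
    aff b c ![x, y, z, w] = b 0 * x + b 1 * y + b 2 * z + b 3 * w + c := by
  rw [aff, dotProduct, Fin.sum_univ_four]
  rfl

theorem eq_of_forall_vec {f g : (Fin 4 → ZMod 2) → ZMod 2}
    (h : ∀ x y z w, f ![x, y, z, w] = g ![x, y, z, w]) : f = g := by
  ext x
  have hx : x = ![x 0, x 1, x 2, x 3] := by ext i; fin_cases i <;> rfl
  rw [hx, h]

theorem sum_cube (f : (Fin 4 → ZMod 2) → ZMod 2) :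
    ∑ x, f x = ∑ x, ∑ y, ∑ z, ∑ w, f ![x, y, z, w] := by
  simp only [← (Fin.consEquiv _).sum_comp, Fintype.sum_prod_type,
    Finset.univ_unique, sum_singleton]
  rfl

theorem exists_eq_quad_add_aff {f : (Fin 4 → ZMod 2) → ZMod 2}
    (hf : ∀ b c, ∑ x, f x * aff b c x = 0) : ∃ a b c, f = quad a + aff b c := by
  have hsum (g : ZMod 2 → ZMod 2) : ∑ x, g x = g 0 + g 1 := Fin.sum_univ_two g
  have horth (p q r s c : ZMod 2) := hf ![p, q, r, s] c
  simp only [sum_cube, hsum, aff_vec, Matrix.cons_val] at horth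
  have hall := horth 0 0 0 0 1
  have h0 := horth 1 0 0 0 0
  have h1 := horth 0 1 0 0 0
  have h2 := horth 0 0 1 0 0
  have h3 := horth 0 0 0 1 0
  set s := f ![0, 0, 0, 0]
  -- The coefficients of the algebraic normal form of `f`; orthogonality to the affine functions
  -- makes those of degree 3 and 4 vanish.
  refine ⟨![s + f ![1, 0, 0, 0] + f ![0, 1, 0, 0] + f ![1, 1, 0, 0],
    s + f ![1, 0, 0, 0] + f ![0, 0, 1, 0] + f ![1, 0, 1, 0],
    s + f ![1, 0, 0, 0] + f ![0, 0, 0, 1] + f ![1, 0, 0, 1],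
    s + f ![0, 1, 0, 0] + f ![0, 0, 1, 0] + f ![0, 1, 1, 0],
    s + f ![0, 1, 0, 0] + f ![0, 0, 0, 1] + f ![0, 1, 0, 1],
    s + f ![0, 0, 1, 0] + f ![0, 0, 0, 1] + f ![0, 0, 1, 1]],
    ![s + f ![1, 0, 0, 0], s + f ![0, 1, 0, 0], s + f ![0, 0, 1, 0], s + f ![0, 0, 0, 1]], s,
    eq_of_forall_vec ?_⟩
  have hbit : ∀ x : ZMod 2, x = 0 ∨ x = 1 := by decide
  intro x y z w
  rcases hbit x with rfl | rfl <;> rcases hbit y with rfl | rfl <;>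
    rcases hbit z with rfl | rfl <;> rcases hbit w with rfl | rfl <;>
    simp only [Pi.add_apply, quad, aff_vec, Matrix.cons_val] <;> grind

/-- The properties of the Nordstrom-Robinson code, read as a set of Boolean functions on `𝔽₂⁴`, that
determine it up to a permutation of the variables. -/
structure IsAffineInvariantCode (F : Finset ((Fin 4 → ZMod 2) → ZMod 2)) : Prop where
  card_eq : #F = 256
  zero_mem : 0 ∈ F
  add_aff_mem : ∀ f ∈ F, ∀ b c, f + aff b c ∈ F
  sum_mul_aff : ∀ f ∈ F, ∀ b c, ∑ x, f x * aff b c x = 0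
  six_le_hammingDist : ∀ f ∈ F, ∀ g ∈ F, f ≠ g → 6 ≤ hammingDist f g
  exists_hexad : ∃ f ∈ F, hammingNorm f = 6 ∧ f 0 = 1 ∧ ∀ i, f (Pi.single i 1) = 1

/-- The quadratic parts of the elements of a code closed under adding affine functions. -/
def quadParts (F : Finset ((Fin 4 → ZMod 2) → ZMod 2)) : Finset (Fin 6 → ZMod 2) := {a | quad a ∈ F}

namespace IsAffineInvariantCode

variable {F : Finset ((Fin 4 → ZMod 2) → ZMod 2)} (hF : IsAffineInvariantCode F)
include hF

theorem mem_iff {f : (Fin 4 → ZMod 2) → ZMod 2} :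
    f ∈ F ↔ ∃ a ∈ quadParts F, ∃ b c, f = quad a + aff b c := by
  constructor
  · intro hf
    obtain ⟨a, b, c, rfl⟩ := exists_eq_quad_add_aff (hF.sum_mul_aff f hf)
    refine ⟨a, mem_filter.mpr ⟨Finset.mem_univ a, ?_⟩, b, c, rfl⟩
    have hself : aff b c + aff b c = 0 := CharTwo.add_self_eq_zero _
    simpa only [add_assoc, hself, add_zero] using hF.add_aff_mem _ hf b c
  · rintro ⟨a, ha, b, c, rfl⟩
    exact hF.add_aff_mem _ (mem_filter.mp ha).2 b c

theorem eight_le_card_quadParts : 8 ≤ #(quadParts F) := by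
  have hsub : F ⊆ (quadParts F ×ˢ (Finset.univ : Finset ((Fin 4 → ZMod 2) × ZMod 2))).image
      fun p => quad p.1 + aff p.2.1 p.2.2 := by
    intro f hf
    obtain ⟨a, ha, b, c, rfl⟩ := hF.mem_iff.mp hf
    exact Finset.mem_image.mpr
      ⟨(a, b, c), Finset.mem_product.mpr ⟨ha, Finset.mem_univ _⟩, rfl⟩
  have hle := (Finset.card_le_card hsub).trans card_image_le
  have h32 : Fintype.card ((Fin 4 → ZMod 2) × ZMod 2) = 32 := by
    simp only [Fintype.card_prod, Fintype.card_pi_const, ZMod.card]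
    norm_num
  rw [hF.card_eq, Finset.card_product, Finset.card_univ, h32] at hle
  omega

theorem zero_mem_quadParts : 0 ∈ quadParts F := by
  have hquad : quad 0 = 0 := by
    ext x
    simp only [quad, Pi.zero_apply, zero_mul, add_zero]
  exact mem_filter.mpr ⟨Finset.mem_univ 0, hquad ▸ hF.zero_mem⟩

theorem one_mem_quadParts : 1 ∈ quadParts F := by
  have hquad : ∀ a i, quad a (Pi.single i 1) = 0 := by decide +kernel
  obtain ⟨f, hf, h6, h0, h1⟩ := hF.exists_hexad
  obtain ⟨a, ha, b, c, rfl⟩ := hF.mem_iff.mp hf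
  have hc : c = 1 := by simpa [quad, aff] using h0
  have hb : b = 0 := by
    ext i
    simpa [hquad, aff, hc] using h1 i
  have haff : aff b c = 1 := by
    ext x
    simp only [aff, hb, hc, zero_dotProduct, zero_add, Pi.one_apply]
  rw [haff] at h6
  exact eq_one_of_hammingNorm_quad_add_one a h6 ▸ ha

theorem isCompatible {a b : Fin 6 → ZMod 2} (ha : a ∈ quadParts F) (hb : b ∈ quadParts F) :
    IsCompatible a b := by
  refine or_iff_not_imp_left.mpr fun hne => ?_
  by_contra hpf
  obtain ⟨l, c, h4⟩ :=
    exists_hammingNorm_eq_four (a + b) (fun h => hne (CharTwo.add_eq_zero.mp h)) hpf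
  have hquad : quad (a + b) + aff l c = -quad a + (quad b + aff l c) := by
    ext x
    simp only [quad, Pi.add_apply, CharTwo.neg_eq]
    ring
  rw [hquad, ← hammingDist_eq_hammingNorm] at h4
  have h6 := hF.six_le_hammingDist _ (mem_filter.mp ha).2 _
    (hF.add_aff_mem _ (mem_filter.mp hb).2 l c) fun h => by rw [← h, hammingDist_self] at h4; omega
  omega

theorem exists_perm_mem_iff :
    ∃ ψ : Equiv.Perm (Fin 4 → ZMod 2), ∀ f, f ∈ F ↔ f ∘ ψ ∈ nordstromRobinson := by
  rcases eq_kerdockSet_or hF.eight_le_card_quadParts hF.zero_mem_quadParts hF.one_mem_quadParts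
    fun a ha b hb => hF.isCompatible ha hb with hK | hK
  · exact ⟨1, fun f => by rw [hF.mem_iff, hK]; rfl⟩
  · refine ⟨swapVars, fun f => ?_⟩
    rw [hF.mem_iff, hK]
    constructor
    · rintro ⟨a, ha, b, c, rfl⟩
      obtain ⟨a', ha', rfl⟩ := Finset.mem_image.mp ha
      exact ⟨a', ha', swapVars b, c, quad_add_aff_comp_swapVars _ b c⟩
    · rintro ⟨a, ha, b, c, h⟩
      refine ⟨a ∘ swapCoeff, Finset.mem_image_of_mem _ ha, swapVars b, c, ?_⟩
      rw [← quad_add_aff_comp_swapVars, ← h]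
      exact funext fun x => congrArg f (by ext i; fin_cases i <;> rfl)

end IsAffineInvariantCode

end Kerdock

section Coordinates

/-- The word in `𝔽₂^α` with support `s`. -/
def ind {α : Type*} [DecidableEq α] (s : Finset α) (a : α) : ZMod 2 := if a ∈ s then 1 else 0

section Ind

variable {α : Type*} [DecidableEq α] {s t : Finset α}

theorem ind_symmDiff (s t : Finset α) : ind (s ∆ t) = ind s + ind t := by
  ext a
  by_cases hs : a ∈ s <;> by_cases ht : a ∈ t <;>
    simp [ind, Finset.mem_symmDiff, hs, ht, CharTwo.add_self_eq_zero]

theorem ind_injective : Function.Injective (ind : Finset α → α → ZMod 2) := by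
  intro s t h
  ext a
  have ha := congrFun h a
  by_cases hs : a ∈ s <;> by_cases ht : a ∈ t <;> simp_all [ind]

theorem ind_surjective [Finite α] : Function.Surjective (ind : Finset α → α → ZMod 2) := by
  have := Fintype.ofFinite α
  intro x
  have hx (a : α) : x a = 0 ∨ x a = 1 := (by decide : ∀ b : ZMod 2, b = 0 ∨ b = 1) (x a)
  refine ⟨({a | x a = 1} : Finset α), funext fun a => ?_⟩
  rcases hx a with h | h <;> simp [ind, h]

theorem ind_comp_injective {β : Type*} (φ : β ≃ α) :
    Function.Injective fun s : Finset α => ind s ∘ φ :=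
  φ.surjective.injective_comp_right.comp ind_injective

theorem sum_ind (s t : Finset α) : ∑ a ∈ s, ind t a = #(s ∩ t) := by
  simp only [ind, sum_boole, filter_mem_eq_inter]

theorem sum_ind_eq_zero_iff : ∑ a ∈ s, ind t a = 0 ↔ Even #(s ∩ t) := by
  rw [sum_ind, ZMod.natCast_eq_zero_iff_even]

theorem hammingNorm_ind [Fintype α] (s : Finset α) : hammingNorm (ind s) = #s := by
  simp [hammingNorm, ind]

theorem hammingDist_ind [Fintype α] (s t : Finset α) :
    hammingDist (ind s) (ind t) = #(s ∆ t) := by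
  rw [hammingDist]
  congr 1
  ext a
  simp only [mem_filter_univ, Finset.mem_symmDiff]
  by_cases hs : a ∈ s <;> by_cases ht : a ∈ t <;> simp [ind, hs, ht]

end Ind

theorem hammingDist_comp_equiv {ι κ β : Type*} [Fintype ι] [Fintype κ] [DecidableEq β]
    (e : κ ≃ ι) (x y : ι → β) : hammingDist (x ∘ e) (y ∘ e) = hammingDist x y :=
  card_equiv e fun i => by simp only [mem_filter_univ, Function.comp_apply]

theorem affineIndependent_of_even {ι M : Type*} [AddCommGroup M] [Module (ZMod 2) M] {p : ι → M}
    (hp : ∀ S : Finset ι, Even #S → ∑ i ∈ S, p i = 0 → S = ∅) : AffineIndependent (ZMod 2) p := by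
  classical
  rw [affineIndependent_iff]
  intro s w hw hsum i hi
  have hbit : ∀ x : ZMod 2, (if x ≠ 0 then 1 else 0) = x := by decide
  have hcard : ∑ i ∈ s, w i = #(s.filter (w · ≠ 0)) := by
    rw [← sum_congr rfl fun i _ => hbit (w i), sum_boole]
  have hsupp : ∑ i ∈ s, w i • p i = ∑ i ∈ s.filter (w · ≠ 0), p i := by
    rw [sum_filter]
    refine sum_congr rfl fun i _ => ?_
    nth_rw 1 [← hbit (w i)]
    rw [ite_smul, one_smul, zero_smul]
  have hempty := hp _ (ZMod.natCast_eq_zero_iff_even.mp (hcard.symm.trans hw))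
    (hsupp.symm.trans hsum)
  exact not_not.mp (filter_eq_empty_iff.mp hempty hi)

theorem exists_equiv_of_add_add_mem_range {α M : Type*} [Fintype α] [AddCommGroup M]
    [Module (ZMod 2) M] {n : ℕ} (hcard : Fintype.card α = 2 ^ n) {χ : α → M}
    (hadd : ∀ a b c, ∃ d, χ d = χ a + χ b + χ c) {o : α} {e : Fin n → α}
    (he : LinearIndependent (ZMod 2) fun i => χ (e i) - χ o) :
    ∃ φ : (Fin n → ZMod 2) ≃ α, ∀ v, χ (φ v) = χ o + ∑ i, v i • (χ (e i) - χ o) := by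
  have hspan (v : Fin n → ZMod 2) : ∃ d, χ d = χ o + ∑ i, v i • (χ (e i) - χ o) := by
    suffices ∀ s : Finset (Fin n), ∃ d, χ d = χ o + ∑ i ∈ s, v i • (χ (e i) - χ o) from
      this Finset.univ
    intro s
    induction s using Finset.induction_on with
    | empty => exact ⟨o, by simp⟩
    | insert i s hi ih =>
      obtain ⟨d, hd⟩ := ih
      rcases (by decide : ∀ x : ZMod 2, x = 0 ∨ x = 1) (v i) with h0 | h1
      · exact ⟨d, by rw [sum_insert hi, h0, zero_smul, zero_add, hd]⟩
      · obtain ⟨d', hd'⟩ := hadd d (e i) o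
        refine ⟨d', ?_⟩
        rw [sum_insert hi, h1, one_smul, hd', hd, ZModModule.sub_eq_add]
        abel
  choose φ hφ using hspan
  have hinj : Function.Injective φ := by
    intro v w hvw
    have hsum := hφ v
    rw [hvw, hφ w] at hsum
    have hli := linearIndependent_iff_injective_fintypeLinearCombination.mp he
    exact (hli (add_left_cancel hsum)).symm
  have hbij : Function.Bijective φ :=
    (Fintype.bijective_iff_injective_and_card φ).mpr ⟨hinj, by simp [hcard]⟩
  exact ⟨Equiv.ofBijective φ hbij, hφ⟩

section Affine

theorem aff_add_add (b : Fin 4 → ZMod 2) (c : ZMod 2) (u v w : Fin 4 → ZMod 2) :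
    aff b c (u + v + w) = aff b c u + aff b c v + aff b c w := by
  have hc : c + c = 0 := CharTwo.add_self_eq_zero c
  simp only [aff, dotProduct_add]
  linear_combination -hc

theorem exists_eq_aff {f : (Fin 4 → ZMod 2) → ZMod 2}
    (hf : ∀ u v w, u ≠ v → u ≠ w → v ≠ w → f (u + v + w) = f u + f v + f w) :
    ∃ b c, f = aff b c := by
  have hadd (u v : Fin 4 → ZMod 2) : f (u + v) + f 0 = f u + f 0 + (f v + f 0) := by
    rcases eq_or_ne u v with rfl | huv
    · rw [ZModModule.add_self, ZModModule.add_self, ZModModule.add_self]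
    rcases eq_or_ne u 0 with rfl | hu
    · rw [zero_add, ZModModule.add_self, zero_add]
    rcases eq_or_ne v 0 with rfl | hv
    · rw [add_zero, ZModModule.add_self, add_zero]
    rw [← add_zero (u + v), hf u v 0 huv hu hv]
    ring
  let g := (AddMonoidHom.mk' (fun u => f u + f 0) hadd).toZModLinearMap 2
  refine ⟨fun i => g fun j => if i = j then 1 else 0, f 0, funext fun u => ?_⟩
  have hg : f u + f 0 = ∑ i, u i • g fun j => if i = j then 1 else 0 := g.pi_apply_eq_sum_univ u
  simp only [aff, dotProduct, mul_comm, ← smul_eq_mul, ← hg, add_assoc, ZModModule.add_self,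
    add_zero]

end Affine

/-- Coordinates on `α` in which the indicator functions of the octads of a code are affine. -/
def IsFrame {α : Type*} [DecidableEq α] (C : Finset (Finset α)) (φ : (Fin 4 → ZMod 2) ≃ α) : Prop :=
  ∀ W ∈ words C 8, ∃ b c, ind W ∘ φ = aff b c

/-- The incidence vector of a point with the octads of a code. -/
def octadVec {α : Type*} [DecidableEq α] (C : Finset (Finset α)) (a : α) : words C 8 → ZMod 2 :=
  fun W => ind W a

section OctadVec

variable {α : Type*} [DecidableEq α] {C : Finset (Finset α)} {S : Finset α}

theorem sum_octadVec_eq_zero_iff :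
    ∑ a ∈ S, octadVec C a = 0 ↔ ∀ W ∈ words C 8, Even #(S ∩ W) := by
  simp only [funext_iff, Finset.sum_apply, octadVec, Pi.zero_apply, sum_ind_eq_zero_iff,
    Subtype.forall]

theorem even_card_symmDiff_inter {s t W : Finset α} (hs : Even #(s ∩ W)) (ht : Even #(t ∩ W)) :
    Even #((s ∆ t) ∩ W) := by
  have hdistrib : (s ∆ t) ∩ W = (s ∩ W) ∆ (t ∩ W) := inf_symmDiff_distrib_right s t W
  have hcard := card_symmDiff_add_two_mul_card_inter (s ∩ W) (t ∩ W)
  rw [Nat.even_iff] at hs ht ⊢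
  rw [hdistrib]
  omega

variable [Fintype α] (hC : IsCenteredCRCode C)
include hC

theorem octadVec_injective : Function.Injective (octadVec C) := by
  intro a b hab
  by_contra hne
  obtain ⟨W, hW, ha, hb⟩ := hC.exists_octad_mem_notMem hne
  simpa [octadVec, ind, ha, hb] using congrFun hab ⟨W, hW⟩

theorem card_ne_two_of_sum_octadVec_eq_zero (hS : ∑ a ∈ S, octadVec C a = 0) : #S ≠ 2 := by
  intro h2
  obtain ⟨a, b, hab, rfl⟩ := card_eq_two.mp h2
  rw [sum_pair hab] at hS
  exact hab (octadVec_injective hC (by rw [← sub_eq_zero, ZModModule.sub_eq_add, hS]))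

theorem exists_octadVec_eq_add_add (a b c : α) :
    ∃ d, octadVec C d = octadVec C a + octadVec C b + octadVec C c := by
  rcases eq_or_ne a b with rfl | hab
  · exact ⟨c, by rw [ZModModule.add_self, zero_add]⟩
  rcases eq_or_ne a c with rfl | hac
  · exact ⟨b, by rw [add_right_comm, ZModModule.add_self, zero_add]⟩
  rcases eq_or_ne b c with rfl | hbc
  · exact ⟨a, by rw [add_assoc, ZModModule.add_self, add_zero]⟩
  have hT : #{a, b, c} = 3 := card_eq_three.mpr ⟨a, b, c, hab, hac, hbc, rfl⟩
  obtain ⟨d, hd, hcov⟩ := hC.exists_coverCount_six_eq_zero hT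
  have hQ : #(insert d {a, b, c}) = 4 := by rw [card_insert_of_notMem hd, hT]
  have hsum := sum_octadVec_eq_zero_iff.mpr fun W hW =>
    hC.even_card_inter_octad_of_coverCount_six_eq_zero hQ hcov hW
  rw [sum_insert hd, sum_insert (by simp [hab, hac]), sum_pair hbc] at hsum
  exact ⟨d, by rw [← sub_eq_zero, ZModModule.sub_eq_add, add_assoc (octadVec C a), hsum]⟩

theorem affineIndependent_octadVec_comp {H : Finset α} (hH : H ∈ words C 6) {g : Fin 5 → α}
    (hg : Function.Injective g) (hgH : ∀ i, g i ∈ H) :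
    AffineIndependent (ZMod 2) (octadVec C ∘ g) := by
  refine affineIndependent_of_even fun S hS hsum => ?_
  obtain ⟨hHC, hH6⟩ := mem_words.mp hH
  have hT : #(S.image g) = #S := card_image_of_injective S hg
  have hTH : S.image g ⊆ H := Finset.image_subset_iff.mpr fun i _ => hgH i
  have hTsum : ∑ a ∈ S.image g, octadVec C a = 0 := by
    rwa [sum_image fun _ _ _ _ h => hg h]
  have hT2 := card_ne_two_of_sum_octadVec_eq_zero hC hTsum
  have hHT2 := card_ne_two_of_sum_octadVec_eq_zero hC (S := H ∆ S.image g) <|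
    sum_octadVec_eq_zero_iff.mpr fun W hW => even_card_symmDiff_inter
      (hC.even_card_inter_octad hHC hW) (sum_octadVec_eq_zero_iff.mp hTsum W hW)
  have hHT := card_symmDiff_add_two_mul_card_inter H (S.image g)
  rw [Finset.inter_eq_right.mpr hTH] at hHT
  have hS5 : #S ≤ 5 := card_finset_fin_le S
  rw [← card_eq_zero]
  obtain ⟨k, hk⟩ := hS
  omega

theorem exists_isFrame_hexad :
    ∃ φ : (Fin 4 → ZMod 2) ≃ α, IsFrame C φ ∧
      ∃ H ∈ words C 6, φ 0 ∈ H ∧ ∀ i, φ (Pi.single i 1) ∈ H := by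
  obtain ⟨H, hHC, hH6⟩ := hC.exists_hexad
  have hH : H ∈ words C 6 := mem_words.mpr ⟨hHC, hH6⟩
  obtain ⟨g⟩ : Nonempty (Fin 5 ↪ H) :=
    Function.Embedding.nonempty_of_card_le (by simp [hH6])
  have hind := affineIndependent_octadVec_comp hC hH
    (Subtype.val_injective.comp g.injective) fun i => (g i).2
  have hlin : LinearIndependent (ZMod 2)
      fun i : Fin 4 => octadVec C (g i.succ) - octadVec C (g 0) :=
    ((affineIndependent_iff_linearIndependent_vsub _ _ 0).mp hind).comp
      (fun i : Fin 4 => ⟨i.succ, i.succ_ne_zero⟩)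
      fun i j h => Fin.succ_injective 4 (congrArg Subtype.val h)
  obtain ⟨φ, hφ⟩ := exists_equiv_of_add_add_mem_range (α := α) (n := 4) (by simp [hC.card_points])
    (exists_octadVec_eq_add_add hC) hlin
  refine ⟨φ, fun W hW => ?_, H, hH, ?_, fun i => ?_⟩
  · refine ⟨fun i => ind W (g i.succ : α) - ind W (g 0 : α), ind W (g 0 : α), ?_⟩
    ext v
    have hW' := congrFun (hφ v) ⟨W, hW⟩
    simp only [octadVec, Pi.add_apply, Finset.sum_apply, Pi.smul_apply, Pi.sub_apply,
      smul_eq_mul] at hW'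
    simp only [Function.comp_apply, hW', aff, dotProduct, mul_comm, add_comm]
  · have h0 : φ 0 = g 0 := octadVec_injective hC (by simpa using hφ 0)
    exact h0 ▸ (g 0).2
  · have hi : φ (Pi.single i 1) = g i.succ :=
      octadVec_injective hC (by simpa [Pi.single_apply] using hφ (Pi.single i 1))
    exact hi ▸ (g i.succ).2

theorem even_card_inter_octad_translate {h Q U : Finset α} (hh : h ∈ C) (hQ : #Q = 4)
    (heven : ∀ W ∈ words C 8, Even #(Q ∩ W)) (hU : U ∈ words (translate C h) 8) :
    Even #(Q ∩ U) := by
  refine (hC.isCenteredCRCode_translate hh).even_card_inter_octad_of_coverCount_six_eq_zero hQ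
    ?_ hU
  by_contra hpos
  obtain ⟨c, hc, hc6, hQc⟩ := coverCount_pos.mp (Nat.pos_of_ne_zero hpos)
  have hcW : ∀ W ∈ words C 8, Even #(c ∩ W) := fun W hW => by
    simpa only [symmDiff_symmDiff_cancel_right] using even_card_symmDiff_inter
      (hC.even_card_inter_octad (mem_translate.mp hc) hW) (hC.even_card_inter_octad hh hW)
  have hcQ2 := card_ne_two_of_sum_octadVec_eq_zero hC (S := c ∆ Q) <|
    sum_octadVec_eq_zero_iff.mpr fun W hW => even_card_symmDiff_inter (hcW W hW) (heven W hW)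
  have hcQ := card_symmDiff_add_two_mul_card_inter c Q
  rw [Finset.inter_eq_right.mpr hQc] at hcQ
  omega

end OctadVec

/-- The codewords of weight 0, 8 and 16, which are the affine functions in suitable coordinates. -/
def reedMullerWords {α : Type*} [Fintype α] [DecidableEq α] (C : Finset (Finset α)) :
    Finset (Finset α) := insert ∅ (insert Finset.univ (words C 8))

section ReedMuller

variable {α : Type*} [Fintype α] [DecidableEq α] {C : Finset (Finset α)} {x W : Finset α}

theorem mem_reedMullerWords :
    W ∈ reedMullerWords C ↔ W = ∅ ∨ W = Finset.univ ∨ W ∈ words C 8 := by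
  rw [reedMullerWords, Finset.mem_insert, Finset.mem_insert]

variable (hC : IsCenteredCRCode C)
include hC

theorem card_reedMullerWords : #(reedMullerWords C) = 32 := by
  have huniv : Finset.univ ∉ words C 8 := fun h => by
    simpa [hC.card_points] using (mem_words.mp h).2
  have hempty : ∅ ∉ insert Finset.univ (words C 8) := fun h => by
    rcases Finset.mem_insert.mp h with h | h
    · simpa [hC.card_points] using congrArg Finset.card h
    · simpa using (mem_words.mp h).2
  rw [reedMullerWords, card_insert_of_notMem hempty, card_insert_of_notMem huniv,
    hC.card_words_eight]

theorem mem_of_mem_reedMullerWords (hW : W ∈ reedMullerWords C) : W ∈ C := by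
  rcases mem_reedMullerWords.mp hW with rfl | rfl | hW
  exacts [hC.empty_mem, hC.univ_mem, (mem_words.mp hW).1]

theorem even_card_inter_reedMullerWord (hx : x ∈ C) (hW : W ∈ reedMullerWords C) :
    Even #(x ∩ W) := by
  rcases mem_reedMullerWords.mp hW with rfl | rfl | hW
  · rw [Finset.inter_empty, Finset.card_empty]
    exact Even.zero
  · rw [Finset.inter_univ]
    rcases hC.card_mem hx with h | h | h | h | h <;> rw [h] <;> decide
  · exact hC.even_card_inter_octad hx hW

end ReedMuller

namespace IsFrame

variable {α : Type*} [Fintype α] [DecidableEq α] {C : Finset (Finset α)} {x : Finset α}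
  {φ : (Fin 4 → ZMod 2) ≃ α} (hφ : IsFrame C φ) (hC : IsCenteredCRCode C)
include hφ hC

theorem translate (hx : x ∈ C) : IsFrame (translate C x) φ := by
  intro U hU
  refine exists_eq_aff fun u v w huv huw hvw => ?_
  have hφu : φ u ∉ ({φ v, φ w, φ (u + v + w)} : Finset α) := by
    simpa [huv, huw, add_assoc, CharTwo.add_eq_zero] using hvw
  have hφv : φ v ∉ ({φ w, φ (u + v + w)} : Finset α) := by
    simpa [hvw, add_right_comm u v w, CharTwo.add_eq_zero] using huw
  have hφw : φ w ∉ ({φ (u + v + w)} : Finset α) := by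
    simpa [CharTwo.add_eq_zero] using huv
  have hsum (W : Finset α) : ∑ a ∈ {φ u, φ v, φ w, φ (u + v + w)}, ind W a =
      ind W (φ u) + ind W (φ v) + ind W (φ w) + ind W (φ (u + v + w)) := by
    rw [sum_insert hφu, sum_insert hφv, sum_insert hφw, Finset.sum_singleton]
    ring
  have heven : ∀ W ∈ words C 8, Even #({φ u, φ v, φ w, φ (u + v + w)} ∩ W) := by
    intro W hW
    obtain ⟨b, c, hW⟩ := hφ W hW
    have hadd := aff_add_add b c u v w
    rw [← hW] at hadd
    rw [← sum_ind_eq_zero_iff, hsum, ← CharTwo.add_eq_zero.mpr hadd, add_comm]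
    rfl
  have hQ : #({φ u, φ v, φ w, φ (u + v + w)} : Finset α) = 4 := by
    rw [card_insert_of_notMem hφu, card_insert_of_notMem hφv, card_insert_of_notMem hφw,
      Finset.card_singleton]
  have hU := sum_ind_eq_zero_iff.mpr (even_card_inter_octad_translate hC hx hQ heven hU)
  rw [hsum] at hU
  exact (CharTwo.add_eq_zero.mp hU).symm

theorem exists_ind_comp_eq_aff (b : Fin 4 → ZMod 2) (c : ZMod 2) :
    ∃ W ∈ reedMullerWords C, ind W ∘ φ = aff b c := by
  have hsub : (reedMullerWords C).image (ind · ∘ φ) ⊆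
      Finset.univ.image fun p : (Fin 4 → ZMod 2) × ZMod 2 => aff p.1 p.2 := by
    intro f hf
    obtain ⟨W, hW, rfl⟩ := Finset.mem_image.mp hf
    obtain ⟨b, c, h⟩ : ∃ b c, ind W ∘ φ = aff b c := by
      rcases mem_reedMullerWords.mp hW with rfl | rfl | hW
      · exact ⟨0, 0, funext fun v => by simp [ind, aff]⟩
      · exact ⟨0, 1, funext fun v => by simp [ind, aff]⟩
      · exact hφ W hW
    exact Finset.mem_image.mpr ⟨(b, c), Finset.mem_univ _, h.symm⟩
  have heq := Finset.eq_of_subset_of_card_le hsub <| card_image_le.trans <| by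
    rw [Finset.card_image_of_injective _ (ind_comp_injective φ), card_reedMullerWords hC,
      Finset.card_univ]
    simp only [Fintype.card_prod, Fintype.card_pi_const, ZMod.card]
    norm_num
  have hmem : aff b c ∈ (reedMullerWords C).image (ind · ∘ φ) := by
    rw [heq]
    exact Finset.mem_image.mpr ⟨(b, c), Finset.mem_univ _, rfl⟩
  exact Finset.mem_image.mp hmem

theorem isAffineInvariantCode {H : Finset α} (hH : H ∈ words C 6) (h0 : φ 0 ∈ H)
    (h1 : ∀ i, φ (Pi.single i 1) ∈ H) : IsAffineInvariantCode (C.image (ind · ∘ φ)) where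
  card_eq := by
    rw [Finset.card_image_of_injective C (ind_comp_injective φ), hC.card_eq]
  zero_mem := Finset.mem_image.mpr ⟨∅, hC.empty_mem, funext fun v => by simp [ind]⟩
  add_aff_mem := by
    simp only [Finset.forall_mem_image]
    intro x hx b c
    obtain ⟨W, hW, hWaff⟩ := (hφ.translate hC hx).exists_ind_comp_eq_aff
      (hC.isCenteredCRCode_translate hx) b c
    refine Finset.mem_image.mpr ⟨W ∆ x, mem_translate.mp ?_, ?_⟩
    · exact mem_of_mem_reedMullerWords (hC.isCenteredCRCode_translate hx) hW
    · rw [← hWaff, symmDiff_comm, ind_symmDiff]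
      rfl
  sum_mul_aff := by
    simp only [Finset.forall_mem_image]
    intro x hx b c
    obtain ⟨W, hW, hWaff⟩ := hφ.exists_ind_comp_eq_aff hC b c
    rw [← hWaff, ← sum_ind_eq_zero_iff.mpr (even_card_inter_reedMullerWord hC hx hW)]
    simp only [Function.comp_apply, φ.sum_comp fun a => ind x a * ind W a]
    simp only [ind, ite_mul, one_mul, zero_mul, sum_ite_mem, Finset.univ_inter]
  six_le_hammingDist := by
    simp only [Finset.forall_mem_image]
    intro x hx y hy hne
    rw [hammingDist_comp_equiv, hammingDist_ind]
    exact hC.six_le_card_symmDiff hx hy fun h => hne (h ▸ rfl)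
  exists_hexad := by
    obtain ⟨hHC, hH6⟩ := mem_words.mp hH
    refine ⟨_, Finset.mem_image_of_mem _ hHC, ?_, if_pos h0, fun i => if_pos (h1 i)⟩
    rw [← hammingDist_zero_right, ← Pi.zero_comp φ, hammingDist_comp_equiv,
      hammingDist_zero_right, hammingNorm_ind, hH6]

end IsFrame

theorem IsCenteredCRCode.exists_equiv_mem_iff {α : Type*} [Fintype α] [DecidableEq α]
    {C : Finset (Finset α)} (hC : IsCenteredCRCode C) :
    ∃ φ : (Fin 4 → ZMod 2) ≃ α, ∀ s, s ∈ C ↔ ind s ∘ φ ∈ nordstromRobinson := by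
  obtain ⟨φ, hφ, H, hH, h0, h1⟩ := exists_isFrame_hexad hC
  obtain ⟨ψ, hψ⟩ := (hφ.isAffineInvariantCode hC hH h0 h1).exists_perm_mem_iff
  exact ⟨ψ.trans φ, fun s => ((ind_comp_injective φ).mem_finset_image.symm).trans (hψ _)⟩

end Coordinates

section Supports

open scoped Classical in
/-- The supports of the codewords of a code. -/
noncomputable def supports {α : Type*} [Fintype α] [DecidableEq α] (C : Set (α → ZMod 2)) :
    Finset (Finset α) :=
  {s | ind s ∈ C}

theorem mem_supports {α : Type*} [Fintype α] [DecidableEq α] {C : Set (α → ZMod 2)} {s : Finset α} :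
    s ∈ supports C ↔ ind s ∈ C := by
  simp only [supports, mem_filter_univ]

variable {m : ℕ} {C : Set (Fin m → ZMod 2)} {s : Finset (Fin m)}

theorem distCount_supports (s : Finset (Fin m)) (k : ℕ) :
    distCount (supports C) s k = {c ∈ C | hammingDist (ind s) c = k}.ncard := by
  rw [distCount, ← Set.ncard_coe_finset, ← Set.ncard_image_of_injective _ ind_injective]
  congr 1
  ext c
  obtain ⟨t, rfl⟩ := ind_surjective c
  rw [ind_injective.mem_set_image, Finset.mem_coe, mem_filter, mem_supports, ← hammingDist_ind]
  rfl

theorem distToCode_ind {i : ℕ} (h : IsAtDist (supports C) i s) : distToCode C (ind s) = i := by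
  obtain ⟨⟨t, ht, hi⟩, hle⟩ := h
  rw [← hammingDist_ind] at hi
  refine IsLeast.csInf_eq ⟨⟨_, mem_supports.mp ht, hi⟩, ?_⟩
  rintro _ ⟨c, hc, rfl⟩
  obtain ⟨u, rfl⟩ := ind_surjective c
  rw [hammingDist_ind]
  exact hle u (mem_supports.mpr hc)

theorem isCRCode_supports {C : Set (Fin 16 → ZMod 2)} (hreg : IsCompletelyRegular C)
    (hd : IsMinDist C 6) : IsCRCode (supports C) where
  card_points := Fintype.card_fin 16
  distCount_eq hx hy k := by
    rw [distCount_supports, distCount_supports]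
    exact hreg _ _ ((distToCode_ind hx).trans (distToCode_ind hy).symm) k
  six_le_card_symmDiff hc hc' hne := by
    rw [← hammingDist_ind]
    exact hd.1 _ (mem_supports.mp hc) _ (mem_supports.mp hc') (ind_injective.ne hne)
  exists_card_symmDiff_eq_six := by
    obtain ⟨x, hx, y, hy, -, h⟩ := hd.2
    obtain ⟨s, rfl⟩ := ind_surjective x
    obtain ⟨t, rfl⟩ := ind_surjective y
    exact ⟨s, mem_supports.mpr hx, t, mem_supports.mpr hy, hammingDist_ind s t ▸ h⟩

theorem exists_mem_iff_add_comp_mem_nordstromRobinson {C : Set (Fin 16 → ZMod 2)} (hC : C.Nonempty)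
    (hreg : IsCompletelyRegular C) (hd : IsMinDist C 6) :
    ∃ (φ : (Fin 4 → ZMod 2) ≃ Fin 16) (w : Fin 16 → ZMod 2),
      ∀ x, x ∈ C ↔ (x + w) ∘ φ ∈ nordstromRobinson := by
  obtain ⟨w, hw⟩ := hC
  obtain ⟨s, rfl⟩ := ind_surjective w
  obtain ⟨φ, hφ⟩ := ((isCRCode_supports hreg hd).isCenteredCRCode_translate
    (mem_supports.mpr hw)).exists_equiv_mem_iff
  refine ⟨φ, ind s, fun x => ?_⟩
  obtain ⟨t, rfl⟩ := ind_surjective x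
  rw [← ind_symmDiff, ← hφ, symmDiff_mem_translate, mem_supports]

end Supports

end NordstromRobinson

/-- Any two binary completely regular codes of length 16 with minimum distance 6
are equivalent (both are equivalent to the Nordstrom-Robinson code). -/
theorem stmt_0 (C C' : Set (Fin 16 → ZMod 2)) (hC : C.Nonempty) (hC' : C'.Nonempty)
    (hreg : IsCompletelyRegular C) (hreg' : IsCompletelyRegular C')
    (hd : IsMinDist C 6) (hd' : IsMinDist C' 6) :
    ∃ (σ : Equiv.Perm (Fin 16)) (v : Fin 16 → ZMod 2),
      C' = (fun α => (fun i => α (σ.symm i)) + v) '' C := by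
  obtain ⟨φ, w, hφ⟩ :=
    NordstromRobinson.exists_mem_iff_add_comp_mem_nordstromRobinson hC hreg hd
  obtain ⟨φ', w', hφ'⟩ :=
    NordstromRobinson.exists_mem_iff_add_comp_mem_nordstromRobinson hC' hreg' hd'
  let σ : Equiv.Perm (Fin 16) := φ.symm.trans φ'
  let v : Fin 16 → ZMod 2 := w ∘ σ.symm + w'
  have hσ (x : Fin 16 → ZMod 2) : x ∈ C ↔ x ∘ σ.symm + v ∈ C' := by
    have hcoord : (x ∘ σ.symm + v + w') ∘ φ' = (x + w) ∘ φ := by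
      ext u
      simp [σ, v, add_assoc, CharTwo.add_self_eq_zero]
    rw [hφ, hφ', hcoord]
  refine ⟨σ, v, Set.ext fun y => ⟨fun hy => ⟨(y + v) ∘ σ, (hσ _).mpr ?_, ?_⟩, ?_⟩⟩
  · rwa [Function.comp_assoc, σ.self_comp_symm, Function.comp_id, add_assoc, ZModModule.add_self,
      add_zero]
  · ext i
    simp [add_assoc, CharTwo.add_self_eq_zero]
  · rintro ⟨x, hx, rfl⟩
    exact (hσ x).mp hx
end

section
/- Let C and C' be binary completely regular codes of length 15, each with minimum distance 5. Then C and C' are equivalent; that is, there exist a permutation σ of the 15 coordinates and a vector v ∈ F_2^15 such that C' = {(α ∘ σ⁻¹) + v : α ∈ C}. (In particular, every binary completely regular code of length 15 with minimum distance 5 is equivalent to the punctured Nordstrom-Robinson code.) -/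
open Set

/-!
For a completely regular code `F` of length 15 with minimum distance 5, double counting along the
edges of the Hamming graph leaves a single possibility for the distance distributions seen from
the points of the space: the covering radius is 3, and the numbers `Bₖ` of codewords at distance
`k` from an arbitrary vector satisfy `B₃ + B₂ + 5 B₁ + 5 B₀ = 5`. The Fourier transform turns this
identity into a cubic equation, which shows that `F` has 256 words and dual distances 6, 8 and 10.
Hence the extension of `F` by a parity check is closed under complementation, has distances 6, 8,
10 and 16, and is an orthogonal array of strength 4.

Strength 4 determines the second and fourth moments of `z ↦ 16 - 2 d(z, p)` over the extended
code. Comparing moments, the codewords at distance 0, 8 or 16 from a given one form a coset of a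
fixed linear code of dimension 5. This code is a copy of `RM(1, 4)`, so that the coordinates
become the points of `𝔽₂⁴` and the extended code a union of eight cosets of `RM(1, 4)` in
`RM(2, 4)`, that is, a set of eight alternating forms on `𝔽₂⁴` with nonsingular differences.
Nonsingularity determines these forms up to three bits, which vanish after a shear of `𝔽₂⁴`. As
the parity coordinate can be placed at `0 ∈ 𝔽₂⁴`, the resulting equivalence between extended codes
restricts to the original ones.
-/

namespace BinaryCode

open scoped Finset Matrix

/-! ### Signs and characters -/

section Characters

variable {ι : Type*} [Fintype ι]

/-- The nontrivial additive character `a ↦ (-1) ^ a` of `ZMod 2`. -/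
def sign : AddChar (ZMod 2) ℤ := AddChar.zmodChar 2 (ζ := -1) (by norm_num)

/-- The additive character `x ↦ (-1) ^ (u ⬝ᵥ x)` of the binary Hamming space. -/
def char (u : ι → ZMod 2) : AddChar (ι → ZMod 2) ℤ :=
  sign.compAddMonoidHom (dotProductBilin (ZMod 2) (ZMod 2) u).toAddMonoidHom

/-- The sum of the signs of the coordinates of `x`, that is, the number of zeros of `x` minus the
number of its ones. -/
def signSum (x : ι → ZMod 2) : ℤ := ∑ i, sign (x i)

theorem eq_zero_or_one (a : ZMod 2) : a = 0 ∨ a = 1 := by revert a; decide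

theorem add_eq_zero_iff_eq {ι : Type*} {x y : ι → ZMod 2} : x + y = 0 ↔ x = y := by
  rw [← ZModModule.sub_eq_add, sub_eq_zero]

theorem sign_one : sign 1 = -1 := rfl

theorem sign_eq_ite (a : ZMod 2) : sign a = if a = 0 then 1 else -1 := by revert a; decide

theorem sign_mul_self (a : ZMod 2) : sign a * sign a = 1 := by revert a; decide

theorem sign_eq_one_iff {a : ZMod 2} : sign a = 1 ↔ a = 0 := by revert a; decide

theorem char_apply (u x : ι → ZMod 2) : char u x = sign (u ⬝ᵥ x) := rfl

theorem char_apply_comm (u x : ι → ZMod 2) : char u x = char x u := by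
  rw [char_apply, char_apply, dotProduct_comm]

theorem char_single [DecidableEq ι] (u : ι → ZMod 2) (i : ι) :
    char u (Pi.single i 1) = sign (u i) := by
  rw [char_apply, dotProduct_single_one]

theorem char_add_left (u v x : ι → ZMod 2) : char (u + v) x = char u x * char v x := by
  rw [char_apply, add_dotProduct, AddChar.map_add_eq_mul, ← char_apply, ← char_apply]

theorem signSum_eq_card_sub (x : ι → ZMod 2) :
    signSum x = Fintype.card ι - 2 * hammingNorm x := by
  have hterm (i : ι) : sign (x i) = 1 - 2 * if x i ≠ 0 then 1 else 0 := by
    rw [sign_eq_ite]; split_ifs <;> simp_all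
  simp only [signSum, hterm, Finset.sum_sub_distrib, ← Finset.mul_sum, Finset.sum_boole]
  simp [hammingNorm]

theorem signSum_zero : signSum (0 : ι → ZMod 2) = Fintype.card ι := by
  simp [signSum_eq_card_sub]

theorem signSum_add_one (x : ι → ZMod 2) : signSum (x + 1) = -signSum x := by
  simp [signSum, AddChar.map_add_eq_mul, sign_one]

theorem char_eq_zero_iff {u : ι → ZMod 2} : char u = 0 ↔ u = 0 := by
  classical
  refine ⟨fun h ↦ funext fun i ↦ ?_, fun h ↦ by ext x; simp [char_apply, h]⟩
  have hi := char_single u i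
  rw [h, AddChar.zero_apply, eq_comm, sign_eq_one_iff] at hi
  exact hi

theorem sum_char [DecidableEq ι] (u : ι → ZMod 2) :
    ∑ x, char u x = if u = 0 then 2 ^ Fintype.card ι else 0 := by
  simp [AddChar.sum_eq_ite, char_eq_zero_iff]

end Characters

/-! ### Counting codewords at a given distance -/

section SphereCounts

variable {ι : Type*} [Fintype ι]

theorem hammingDist_eq_hammingNorm_add (x y : ι → ZMod 2) :
    hammingDist x y = hammingNorm (x + y) := by
  rw [hammingDist_eq_hammingNorm, ZModModule.neg_eq_self]

theorem signSum_add_eq (x y : ι → ZMod 2) :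
    signSum (x + y) = Fintype.card ι - 2 * hammingDist x y := by
  rw [signSum_eq_card_sub, hammingDist_eq_hammingNorm_add]

variable [DecidableEq ι]

theorem signSum_add_single (u : ι → ZMod 2) (i : ι) :
    signSum (u + Pi.single i 1) = signSum u - 2 * sign (u i) := by
  have hterm (j : ι) :
      sign (u j + (Pi.single i 1 : ι → ZMod 2) j) =
        sign (u j) - if j = i then 2 * sign (u i) else 0 := by
    rcases eq_or_ne j i with rfl | hji
    · simp only [Pi.single_eq_same, if_true, AddChar.map_add_eq_mul, sign_one]
      ring
    · simp [hji]
  simp [signSum, hterm, Finset.sum_sub_distrib]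

theorem hammingNorm_add_single (u : ι → ZMod 2) (i : ι) :
    (hammingNorm (u + Pi.single i 1) : ℤ) = hammingNorm u + sign (u i) := by
  have h := signSum_add_single u i
  rw [signSum_eq_card_sub, signSum_eq_card_sub] at h
  linarith

theorem card_filter_hammingNorm_add_single (u : ι → ZMod 2) (k : ℕ) :
    #{i | hammingNorm (u + Pi.single i 1) = k} =
      (if hammingNorm u = k + 1 then k + 1 else 0) +
        if hammingNorm u + 1 = k then Fintype.card ι - hammingNorm u else 0 := by
  have hsplit (i : ι) : hammingNorm (u + Pi.single i 1) = k ↔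
      hammingNorm u = k + 1 ∧ u i ≠ 0 ∨ hammingNorm u + 1 = k ∧ ¬ u i ≠ 0 := by
    have h := hammingNorm_add_single u i
    rw [sign_eq_ite] at h
    split_ifs at h with hi <;>
      simp only [hi, ne_eq, not_true, not_false_iff, and_true, and_false, or_false, false_or] <;>
      omega
  have hzeros : #{i | ¬ u i ≠ 0} = Fintype.card ι - hammingNorm u := by
    have h := Finset.card_filter_add_card_filter_not (s := Finset.univ) (fun i ↦ u i ≠ 0)
    rw [Finset.card_univ] at h
    exact Nat.eq_sub_of_add_eq' h
  simp only [hsplit]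
  by_cases h₁ : hammingNorm u = k + 1
  · have h₂ : hammingNorm u + 1 ≠ k := by omega
    simp only [eq_true h₁, eq_false h₂, true_and, false_and, or_false, if_true, if_false, add_zero]
    exact h₁
  · by_cases h₂ : hammingNorm u + 1 = k
    · simp only [eq_false h₁, eq_true h₂, true_and, false_and, false_or, if_true, if_false, hzeros,
        zero_add]
    · simp [h₁, h₂]

/-- The number of elements of `F` at Hamming distance `k` from `x`. -/
def numAtDist (F : Finset (ι → ZMod 2)) (k : ℕ) (x : ι → ZMod 2) : ℕ :=
  #{c ∈ F | hammingDist x c = k}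

theorem card_filter_hammingDist_add_single (x c : ι → ZMod 2) (k : ℕ) :
    #{i | hammingDist (x + Pi.single i 1) c = k} =
      (if hammingDist x c = k + 1 then k + 1 else 0) +
        if hammingDist x c + 1 = k then Fintype.card ι - hammingDist x c else 0 := by
  simp only [hammingDist_eq_hammingNorm_add, add_right_comm x, card_filter_hammingNorm_add_single]

theorem sum_numAtDist_add_single (F : Finset (ι → ZMod 2)) (k : ℕ) (x : ι → ZMod 2) :
    ∑ i, numAtDist F k (x + Pi.single i 1) =
      ∑ c ∈ F, #{i | hammingDist (x + Pi.single i 1) c = k} := by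
  simp only [numAtDist, Finset.card_filter]
  exact Finset.sum_comm

theorem sum_numAtDist_zero_add_single (F : Finset (ι → ZMod 2)) (x : ι → ZMod 2) :
    ∑ i, numAtDist F 0 (x + Pi.single i 1) = numAtDist F 1 x := by
  rw [sum_numAtDist_add_single]
  simp only [card_filter_hammingDist_add_single]
  simp [numAtDist]

theorem sum_numAtDist_succ_add_single (F : Finset (ι → ZMod 2)) (k : ℕ) (x : ι → ZMod 2) :
    ∑ i, numAtDist F (k + 1) (x + Pi.single i 1) =
      (k + 2) * numAtDist F (k + 2) x + (Fintype.card ι - k) * numAtDist F k x := by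
  have hcongr (c : ι → ZMod 2) :
      (if hammingDist x c = k then Fintype.card ι - hammingDist x c else 0) =
        if hammingDist x c = k then Fintype.card ι - k else 0 :=
    ite_congr rfl (fun h ↦ by rw [h]) fun _ ↦ rfl
  rw [sum_numAtDist_add_single]
  simp only [card_filter_hammingDist_add_single, Finset.sum_add_distrib, add_left_inj, hcongr,
    ← Finset.sum_filter, Finset.sum_const, numAtDist, smul_eq_mul]
  ring

end SphereCounts

/-! ### The distance partition of a completely regular code -/

section DistancePartition

variable {m : ℕ} {x y : Fin m → ZMod 2}

theorem hammingDist_add_single_right (x : Fin m → ZMod 2) (i : Fin m) :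
    hammingDist x (x + Pi.single i 1) = 1 := by
  rw [hammingDist_eq_hammingNorm_add, ← add_assoc, ZModModule.add_self]
  simpa [sign_eq_ite] using hammingNorm_add_single (0 : Fin m → ZMod 2) i

section CodeSet

variable {C : Set (Fin m → ZMod 2)}

theorem nonempty_of_isMinDist {δ : ℕ} (hC : IsMinDist C δ) : C.Nonempty :=
  let ⟨_, x, hx, _⟩ := hC
  ⟨x, hx⟩

theorem distToCode_le {c : Fin m → ZMod 2} (hc : c ∈ C) : distToCode C x ≤ hammingDist x c :=
  Nat.sInf_le ⟨c, hc, rfl⟩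

theorem distToCode_of_mem {c : Fin m → ZMod 2} (hc : c ∈ C) : distToCode C c = 0 :=
  Nat.le_zero.1 ((distToCode_le hc).trans_eq (hammingDist_self c))

theorem exists_hammingDist_eq_distToCode (hC : C.Nonempty) (x : Fin m → ZMod 2) :
    ∃ c ∈ C, hammingDist x c = distToCode C x :=
  let ⟨c, hc⟩ := hC
  Nat.sInf_mem (s := {d | ∃ c ∈ C, hammingDist x c = d}) ⟨_, c, hc, rfl⟩

theorem distToCode_le_hammingDist_add (hC : C.Nonempty) (x y : Fin m → ZMod 2) :
    distToCode C x ≤ hammingDist x y + distToCode C y := by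
  obtain ⟨c, hc, hcy⟩ := exists_hammingDist_eq_distToCode hC y
  rw [← hcy]
  exact (distToCode_le hc).trans (hammingDist_triangle _ _ _)

theorem distToCode_add_single_le (hC : C.Nonempty) (x : Fin m → ZMod 2) (i : Fin m) :
    distToCode C (x + Pi.single i 1) ≤ distToCode C x + 1 := by
  have h := distToCode_le_hammingDist_add hC (x + Pi.single i 1) x
  rw [hammingDist_comm, hammingDist_add_single_right] at h
  omega

theorem exists_distToCode_add_single_eq (hC : C.Nonempty) {j : ℕ} (hx : distToCode C x = j + 1) :
    ∃ i, distToCode C (x + Pi.single i 1) = j := by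
  obtain ⟨c, hc, hcx⟩ := exists_hammingDist_eq_distToCode hC x
  have hne : x ≠ c := by
    rintro rfl
    rw [hammingDist_self] at hcx
    omega
  obtain ⟨i, hi⟩ := Function.ne_iff.1 hne
  refine ⟨i, le_antisymm ?_ ?_⟩
  · have hnorm := hammingNorm_add_single (x + c) i
    rw [sign_eq_ite, if_neg (by rwa [Pi.add_apply, ← CharTwo.sub_eq_add, sub_eq_zero]),
      add_right_comm, ← hammingDist_eq_hammingNorm_add,
      ← hammingDist_eq_hammingNorm_add] at hnorm
    have hle := distToCode_le (x := x + Pi.single i 1) hc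
    omega
  · have h := distToCode_le_hammingDist_add hC x (x + Pi.single i 1)
    rw [hammingDist_add_single_right] at h
    omega

theorem exists_distToCode_eq_of_le (hC : C.Nonempty) {j k : ℕ} (hjk : j ≤ k)
    (hk : ∃ x, distToCode C x = k) : ∃ x, distToCode C x = j := by
  induction k, hjk using Nat.le_induction with
  | base => exact hk
  | succ k _ ih =>
    obtain ⟨x, hx⟩ := hk
    obtain ⟨i, hi⟩ := exists_distToCode_add_single_eq hC hx
    exact ih ⟨_, hi⟩

end CodeSet

variable {F : Finset (Fin m → ZMod 2)} {j k δ : ℕ}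

/-- The outer distance distribution of a completely regular code `F`: `outerDist F j k` is the
number of codewords at distance `k` from a vector at distance `j` from the code, and `0` if there is
no such vector. -/
noncomputable def outerDist (F : Finset (Fin m → ZMod 2)) : ℕ → ℕ → ℕ :=
  Function.extend (distToCode (F : Set (Fin m → ZMod 2))) (fun x k ↦ numAtDist F k x) 0

theorem ncard_hammingDist_eq (F : Finset (Fin m → ZMod 2)) (x : Fin m → ZMod 2) (k : ℕ) :
    {c ∈ (F : Set (Fin m → ZMod 2)) | hammingDist x c = k}.ncard = numAtDist F k x := by
  rw [numAtDist, ← Set.ncard_coe_finset, Finset.coe_filter]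
  rfl

theorem outerDist_distToCode (hF : IsCompletelyRegular (F : Set (Fin m → ZMod 2)))
    (x : Fin m → ZMod 2) (k : ℕ) : outerDist F (distToCode F x) k = numAtDist F k x := by
  have hfactors : Function.FactorsThrough (fun x k ↦ numAtDist F k x)
      (distToCode (F : Set (Fin m → ZMod 2))) := fun x y hxy ↦ funext fun k ↦ by
    simpa only [ncard_hammingDist_eq] using hF x y hxy k
  exact congrFun (hfactors.extend_apply 0 x) k

theorem outerDist_eq_zero (h : ∀ x, distToCode F x = j → numAtDist F k x = 0)
    (hF : IsCompletelyRegular (F : Set (Fin m → ZMod 2))) : outerDist F j k = 0 := by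
  by_cases hj : ∃ x, distToCode (F : Set (Fin m → ZMod 2)) x = j
  · obtain ⟨x, rfl⟩ := hj
    rw [outerDist_distToCode hF, h x rfl]
  · exact congrFun (Function.extend_apply' _ _ _ hj) k

theorem outerDist_eq_zero_of_lt (hF : IsCompletelyRegular (F : Set (Fin m → ZMod 2)))
    (hkj : k < j) : outerDist F j k = 0 := by
  refine outerDist_eq_zero (fun x hx ↦ ?_) hF
  rw [numAtDist, Finset.card_eq_zero, Finset.filter_eq_empty_iff]
  intro c hc hck
  have := distToCode_le (x := x) (Finset.mem_coe.2 hc)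
  omega

variable (hF : IsCompletelyRegular (F : Set (Fin m → ZMod 2)))
  (hδ : IsMinDist (F : Set (Fin m → ZMod 2)) δ)

include hF hδ

theorem outerDist_eq_zero_of_add_lt (hjk : j + k < δ) (hne : j ≠ k) : outerDist F j k = 0 := by
  refine outerDist_eq_zero (fun x hx ↦ ?_) hF
  rw [numAtDist, Finset.card_eq_zero, Finset.filter_eq_empty_iff]
  intro c hc hck
  obtain ⟨d, hd, hdx⟩ := exists_hammingDist_eq_distToCode (nonempty_of_isMinDist hδ) x
  have hcd : d ≠ c := by rintro rfl; omega
  have := hδ.1 d hd c hc hcd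
  have := hammingDist_triangle_left d c x
  omega

theorem outerDist_self (hj : 2 * j < δ) (hx : distToCode F x = j) : outerDist F j j = 1 := by
  obtain ⟨d, hd, hdx⟩ := exists_hammingDist_eq_distToCode (nonempty_of_isMinDist hδ) x
  rw [← hx, outerDist_distToCode hF, numAtDist, Finset.card_eq_one]
  refine ⟨d, Finset.eq_singleton_iff_unique_mem.2
    ⟨Finset.mem_filter.2 ⟨hd, hdx⟩, fun c hc ↦ ?_⟩⟩
  obtain ⟨hcF, hcx⟩ := Finset.mem_filter.1 hc
  by_contra hcd
  have := hδ.1 c hcF d hd hcd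
  have := hammingDist_triangle_left c d x
  omega

end DistancePartition

section NeighborCounts

variable {m : ℕ} {F : Finset (Fin m → ZMod 2)} {x : Fin m → ZMod 2} {j k : ℕ}

/-- The number of neighbours of `x` in the Hamming graph at distance `j` from the code `F`. -/
noncomputable def numNeighbors (F : Finset (Fin m → ZMod 2)) (x : Fin m → ZMod 2) (j : ℕ) : ℕ :=
  #{i | distToCode (F : Set (Fin m → ZMod 2)) (x + Pi.single i 1) = j}

theorem sum_distToCode_add_single (hne : F.Nonempty) (hx : distToCode F x = j) (f : ℕ → ℕ) :
    ∑ i, f (distToCode F (x + Pi.single i 1)) =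
      ∑ l ∈ Finset.range (j + 2), numNeighbors F x l * f l := by
  have hmaps : ∀ i ∈ Finset.univ, distToCode F (x + Pi.single i 1) ∈ Finset.range (j + 2) :=
    fun i _ ↦ by
      have := distToCode_add_single_le (Finset.coe_nonempty.2 hne) x i
      simp only [Finset.mem_range]
      omega
  rw [← Finset.sum_fiberwise_of_maps_to hmaps]
  refine Finset.sum_congr rfl fun l _ ↦ ?_
  rw [Finset.sum_congr rfl fun i hi ↦ by rw [(Finset.mem_filter.1 hi).2], Finset.sum_const]
  rfl

theorem sum_numNeighbors (hne : F.Nonempty) (hx : distToCode F x = j) :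
    ∑ l ∈ Finset.range (j + 2), numNeighbors F x l = m := by
  simpa using (sum_distToCode_add_single hne hx fun _ ↦ 1).symm

variable (hF : IsCompletelyRegular (F : Set (Fin m → ZMod 2))) (hne : F.Nonempty)
  (hx : distToCode F x = j)

include hF hne hx

theorem sum_numNeighbors_mul_outerDist_zero :
    ∑ l ∈ Finset.range (j + 2), numNeighbors F x l * outerDist F l 0 = outerDist F j 1 := by
  rw [← sum_distToCode_add_single hne hx fun l ↦ outerDist F l 0, ← hx]
  simp only [outerDist_distToCode hF, sum_numAtDist_zero_add_single]

theorem sum_numNeighbors_mul_outerDist_succ (k : ℕ) :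
    ∑ l ∈ Finset.range (j + 2), numNeighbors F x l * outerDist F l (k + 1) =
      (k + 2) * outerDist F j (k + 2) + (m - k) * outerDist F j k := by
  rw [← sum_distToCode_add_single hne hx fun l ↦ outerDist F l (k + 1), ← hx]
  simp only [outerDist_distToCode hF, sum_numAtDist_succ_add_single, Fintype.card_fin]

end NeighborCounts

/-! ### The parameters of a completely regular code of length 15 with minimum distance 5 -/

section Parameters

variable {F : Finset (Fin 15 → ZMod 2)} {x : Fin 15 → ZMod 2}

theorem exists_distToCode_eq_of_numNeighbors_ne_zero {j : ℕ} (h : numNeighbors F x j ≠ 0) :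
    ∃ y, distToCode (F : Set (Fin 15 → ZMod 2)) y = j :=
  let ⟨_, hi⟩ := Finset.card_ne_zero.1 h
  ⟨_, (Finset.mem_filter.1 hi).2⟩

variable (hF : IsCompletelyRegular (F : Set (Fin 15 → ZMod 2)))
  (hd : IsMinDist (F : Set (Fin 15 → ZMod 2)) 5)

include hd in
theorem exists_distToCode_eq_zero : ∃ x, distToCode (F : Set (Fin 15 → ZMod 2)) x = 0 :=
  let ⟨c, hc⟩ := nonempty_of_isMinDist hd
  ⟨c, distToCode_of_mem hc⟩

include hF hd

theorem numNeighbors_of_distToCode_eq_zero (hx : distToCode F x = 0) :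
    numNeighbors F x 0 = 0 ∧ numNeighbors F x 1 = 15 := by
  have hne := Finset.coe_nonempty.1 (nonempty_of_isMinDist hd)
  have h₀ : numNeighbors F x 0 = 0 := by
    simpa [Finset.sum_range_succ, outerDist_self hF hd (by norm_num) hx,
      outerDist_eq_zero_of_add_lt hF hd] using sum_numNeighbors_mul_outerDist_zero hF hne hx
  exact ⟨h₀, by simpa [Finset.sum_range_succ, h₀] using sum_numNeighbors hne hx⟩

theorem exists_distToCode_eq_one : ∃ x, distToCode (F : Set (Fin 15 → ZMod 2)) x = 1 := by
  obtain ⟨x, hx⟩ := exists_distToCode_eq_zero hd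
  refine exists_distToCode_eq_of_numNeighbors_ne_zero (x := x) ?_
  rw [(numNeighbors_of_distToCode_eq_zero hF hd hx).2]
  norm_num

theorem numNeighbors_of_distToCode_eq_one (hx : distToCode F x = 1) :
    numNeighbors F x 0 = 1 ∧ numNeighbors F x 1 = 0 ∧ numNeighbors F x 2 = 14 := by
  have hne := Finset.coe_nonempty.1 (nonempty_of_isMinDist hd)
  obtain ⟨y, hy⟩ := exists_distToCode_eq_zero hd
  have h₀ : numNeighbors F x 0 = 1 := by
    simpa [Finset.sum_range_succ, outerDist_self hF hd (by norm_num) hx,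
      outerDist_self hF hd (by norm_num) hy, outerDist_eq_zero_of_add_lt hF hd] using
      sum_numNeighbors_mul_outerDist_zero hF hne hx
  have h₁ : numNeighbors F x 1 = 0 := by
    simpa [Finset.sum_range_succ, outerDist_self hF hd (by norm_num) hx,
      outerDist_eq_zero_of_add_lt hF hd] using sum_numNeighbors_mul_outerDist_succ hF hne hx 0
  have hsum : numNeighbors F x 0 + numNeighbors F x 1 + numNeighbors F x 2 = 15 := by
    simpa [Finset.sum_range_succ] using sum_numNeighbors hne hx
  omega

theorem exists_distToCode_eq_two : ∃ x, distToCode (F : Set (Fin 15 → ZMod 2)) x = 2 := by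
  obtain ⟨x, hx⟩ := exists_distToCode_eq_one hF hd
  refine exists_distToCode_eq_of_numNeighbors_ne_zero (x := x) ?_
  rw [(numNeighbors_of_distToCode_eq_one hF hd hx).2.2]
  norm_num

theorem outerDist_zero_zero : outerDist F 0 0 = 1 :=
  let ⟨_, hx⟩ := exists_distToCode_eq_zero hd
  outerDist_self hF hd (by norm_num) hx

theorem outerDist_one_one : outerDist F 1 1 = 1 :=
  let ⟨_, hx⟩ := exists_distToCode_eq_one hF hd
  outerDist_self hF hd (by norm_num) hx

theorem outerDist_two_two : outerDist F 2 2 = 1 :=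
  let ⟨_, hx⟩ := exists_distToCode_eq_two hF hd
  outerDist_self hF hd (by norm_num) hx

theorem numNeighbors_of_distToCode_eq_two (hx : distToCode F x = 2) :
    numNeighbors F x 0 = 0 ∧ numNeighbors F x 1 = 2 ∧ numNeighbors F x 2 = 3 * outerDist F 2 3 ∧
      numNeighbors F x 2 + numNeighbors F x 3 = 13 := by
  have hne := Finset.coe_nonempty.1 (nonempty_of_isMinDist hd)
  have h₀ : numNeighbors F x 0 = 0 := by
    simpa [Finset.sum_range_succ, outerDist_zero_zero hF hd, outerDist_eq_zero_of_add_lt hF hd,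
      outerDist_eq_zero_of_lt hF] using sum_numNeighbors_mul_outerDist_zero hF hne hx
  have h₁ : numNeighbors F x 1 = 2 := by
    simpa [Finset.sum_range_succ, outerDist_one_one hF hd, outerDist_two_two hF hd,
      outerDist_eq_zero_of_add_lt hF hd, outerDist_eq_zero_of_lt hF] using
      sum_numNeighbors_mul_outerDist_succ hF hne hx 0
  have h₂ : numNeighbors F x 2 = 3 * outerDist F 2 3 := by
    simpa [Finset.sum_range_succ, outerDist_two_two hF hd, outerDist_eq_zero_of_add_lt hF hd,
      outerDist_eq_zero_of_lt hF] using sum_numNeighbors_mul_outerDist_succ hF hne hx 1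
  have hsum : numNeighbors F x 0 + numNeighbors F x 1 + numNeighbors F x 2 +
      numNeighbors F x 3 = 15 := by
    simpa [Finset.sum_range_succ] using sum_numNeighbors hne hx
  omega

theorem numNeighbors_of_distToCode_eq_three (hx : distToCode F x = 3) :
    numNeighbors F x 0 = 0 ∧ numNeighbors F x 1 = 0 ∧ numNeighbors F x 2 = 3 * outerDist F 3 3 ∧
      numNeighbors F x 2 + numNeighbors F x 3 + numNeighbors F x 4 = 15 := by
  have hne := Finset.coe_nonempty.1 (nonempty_of_isMinDist hd)
  have h₀ : numNeighbors F x 0 = 0 := by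
    simpa [Finset.sum_range_succ, outerDist_zero_zero hF hd, outerDist_eq_zero_of_add_lt hF hd,
      outerDist_eq_zero_of_lt hF] using sum_numNeighbors_mul_outerDist_zero hF hne hx
  have h₁ : numNeighbors F x 1 = 0 := by
    simpa [Finset.sum_range_succ, outerDist_one_one hF hd, outerDist_two_two hF hd,
      outerDist_eq_zero_of_add_lt hF hd, outerDist_eq_zero_of_lt hF] using
      sum_numNeighbors_mul_outerDist_succ hF hne hx 0
  have h₂ : numNeighbors F x 2 = 3 * outerDist F 3 3 := by
    simpa [Finset.sum_range_succ, outerDist_two_two hF hd, outerDist_eq_zero_of_add_lt hF hd,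
      outerDist_eq_zero_of_lt hF] using sum_numNeighbors_mul_outerDist_succ hF hne hx 1
  have hsum : numNeighbors F x 0 + numNeighbors F x 1 + numNeighbors F x 2 +
      numNeighbors F x 3 + numNeighbors F x 4 = 15 := by
    simpa [Finset.sum_range_succ] using sum_numNeighbors hne hx
  omega

theorem outerDist_recurrence_zero (k : ℕ) : 15 * outerDist F 1 (k + 1) =
    (k + 2) * outerDist F 0 (k + 2) + (15 - k) * outerDist F 0 k := by
  obtain ⟨x, hx⟩ := exists_distToCode_eq_zero hd
  have hne := Finset.coe_nonempty.1 (nonempty_of_isMinDist hd)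
  obtain ⟨h₀, h₁⟩ := numNeighbors_of_distToCode_eq_zero hF hd hx
  simpa [Finset.sum_range_succ, h₀, h₁] using sum_numNeighbors_mul_outerDist_succ hF hne hx k

theorem outerDist_recurrence_one (k : ℕ) : outerDist F 0 (k + 1) + 14 * outerDist F 2 (k + 1) =
    (k + 2) * outerDist F 1 (k + 2) + (15 - k) * outerDist F 1 k := by
  obtain ⟨x, hx⟩ := exists_distToCode_eq_one hF hd
  have hne := Finset.coe_nonempty.1 (nonempty_of_isMinDist hd)
  obtain ⟨h₀, h₁, h₂⟩ := numNeighbors_of_distToCode_eq_one hF hd hx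
  simpa [Finset.sum_range_succ, h₀, h₁, h₂] using sum_numNeighbors_mul_outerDist_succ hF hne hx k

theorem outerDist_zero_five_pos : 0 < outerDist F 0 5 := by
  obtain ⟨x, hx, y, hy, -, hxy⟩ := hd.2
  have h := outerDist_distToCode hF x 5
  rw [distToCode_of_mem hx] at h
  rw [h]
  exact Finset.card_pos.2 ⟨y, Finset.mem_filter.2 ⟨Finset.mem_coe.1 hy, hxy⟩⟩

theorem outerDist_two_three_eq_two_or_four : outerDist F 2 3 = 2 ∨ outerDist F 2 3 = 4 := by
  obtain ⟨x, hx⟩ := exists_distToCode_eq_two hF hd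
  obtain ⟨-, -, hq, hsum⟩ := numNeighbors_of_distToCode_eq_two hF hd hx
  have hpos := outerDist_zero_five_pos hF hd
  have hzero : 15 * outerDist F 1 4 = 5 * outerDist F 0 5 := by
    simpa [outerDist_eq_zero_of_add_lt hF hd] using outerDist_recurrence_zero hF hd 3
  have hone : 14 * outerDist F 2 3 = 4 * outerDist F 1 4 := by
    simpa [outerDist_eq_zero_of_add_lt hF hd] using outerDist_recurrence_one hF hd 2
  omega

theorem outerDist_recurrence_two (hx : distToCode F x = 2) (k : ℕ) :
    2 * outerDist F 1 (k + 1) + numNeighbors F x 2 * outerDist F 2 (k + 1) +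
        numNeighbors F x 3 * outerDist F 3 (k + 1) =
      (k + 2) * outerDist F 2 (k + 2) + (15 - k) * outerDist F 2 k := by
  have hne := Finset.coe_nonempty.1 (nonempty_of_isMinDist hd)
  obtain ⟨h₀, h₁, -, -⟩ := numNeighbors_of_distToCode_eq_two hF hd hx
  simpa [Finset.sum_range_succ, h₀, h₁] using sum_numNeighbors_mul_outerDist_succ hF hne hx k

theorem outerDist_recurrence_three (hx : distToCode F x = 3) (k : ℕ) :
    numNeighbors F x 2 * outerDist F 2 (k + 1) + numNeighbors F x 3 * outerDist F 3 (k + 1) +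
        numNeighbors F x 4 * outerDist F 4 (k + 1) =
      (k + 2) * outerDist F 3 (k + 2) + (15 - k) * outerDist F 3 k := by
  have hne := Finset.coe_nonempty.1 (nonempty_of_isMinDist hd)
  obtain ⟨h₀, h₁, -, -⟩ := numNeighbors_of_distToCode_eq_three hF hd hx
  simpa [Finset.sum_range_succ, h₀, h₁] using sum_numNeighbors_mul_outerDist_succ hF hne hx k

theorem exists_distToCode_eq_three : ∃ x, distToCode (F : Set (Fin 15 → ZMod 2)) x = 3 := by
  obtain ⟨x, hx⟩ := exists_distToCode_eq_two hF hd
  obtain ⟨-, -, hq, hsum⟩ := numNeighbors_of_distToCode_eq_two hF hd hx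
  refine exists_distToCode_eq_of_numNeighbors_ne_zero (x := x) ?_
  rcases outerDist_two_three_eq_two_or_four hF hd with h | h <;> omega

theorem outerDist_of_two_three_eq_two (hl : outerDist F 2 3 = 2) :
    outerDist F 2 4 = 5 ∧ outerDist F 3 3 = 3 := by
  obtain ⟨x, hx⟩ := exists_distToCode_eq_two hF hd
  obtain ⟨y, hy⟩ := exists_distToCode_eq_three hF hd
  obtain ⟨-, -, hx₂, hxsum⟩ := numNeighbors_of_distToCode_eq_two hF hd hx
  obtain ⟨-, -, hy₂, hysum⟩ := numNeighbors_of_distToCode_eq_three hF hd hy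
  have hx₂' : numNeighbors F x 2 = 6 := by omega
  have hx₃ : numNeighbors F x 3 = 7 := by omega
  have hzero : 15 * outerDist F 1 5 = 6 * outerDist F 0 6 := by
    simpa [outerDist_eq_zero_of_add_lt hF hd] using outerDist_recurrence_zero hF hd 4
  have hone : 14 * outerDist F 2 4 = 5 * outerDist F 1 5 := by
    simpa [outerDist_eq_zero_of_add_lt hF hd] using outerDist_recurrence_one hF hd 3
  have htwo : 12 + 7 * outerDist F 3 3 = 4 * outerDist F 2 4 + 13 := by
    simpa [outerDist_eq_zero_of_add_lt hF hd, outerDist_two_two hF hd, hl, hx₃, hx₂'] using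
      outerDist_recurrence_two hF hd hx 2
  omega

theorem outerDist_two_three_ne_two : outerDist F 2 3 ≠ 2 := by
  intro hl
  obtain ⟨h₂₄, h₃₃⟩ := outerDist_of_two_three_eq_two hF hd hl
  obtain ⟨x, hx⟩ := exists_distToCode_eq_two hF hd
  obtain ⟨y, hy⟩ := exists_distToCode_eq_three hF hd
  obtain ⟨-, -, hx₂, hxsum⟩ := numNeighbors_of_distToCode_eq_two hF hd hx
  obtain ⟨-, -, hy₂, hysum⟩ := numNeighbors_of_distToCode_eq_three hF hd hy
  have hx₂' : numNeighbors F x 2 = 6 := by omega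
  have hx₃ : numNeighbors F x 3 = 7 := by omega
  have hy₂' : numNeighbors F y 2 = 9 := by omega
  have hzero : 15 * outerDist F 1 4 = 5 * outerDist F 0 5 := by
    simpa [outerDist_eq_zero_of_add_lt hF hd] using outerDist_recurrence_zero hF hd 3
  have hone₂ : 28 = 4 * outerDist F 1 4 := by
    simpa [outerDist_eq_zero_of_add_lt hF hd, hl] using outerDist_recurrence_one hF hd 2
  have hone₄ : outerDist F 0 5 + 14 * outerDist F 2 5 =
      6 * outerDist F 1 6 + 11 * outerDist F 1 4 := outerDist_recurrence_one hF hd 4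
  have htwo : 2 * outerDist F 1 4 + 6 * outerDist F 2 4 + 7 * outerDist F 3 4 =
      5 * outerDist F 2 5 + 24 := by
    simpa [hl, hx₃, hx₂'] using outerDist_recurrence_two hF hd hx 3
  have hthree : 18 + numNeighbors F y 3 * 3 = 4 * outerDist F 3 4 := by
    simpa [outerDist_eq_zero_of_lt hF, hl, h₃₃, hy₂'] using outerDist_recurrence_three hF hd hy 2
  omega

theorem outerDist_two_three : outerDist F 2 3 = 4 :=
  (outerDist_two_three_eq_two_or_four hF hd).resolve_left (outerDist_two_three_ne_two hF hd)

theorem outerDist_three_three : outerDist F 3 3 = 5 := by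
  have hl := outerDist_two_three hF hd
  obtain ⟨x, hx⟩ := exists_distToCode_eq_two hF hd
  obtain ⟨y, hy⟩ := exists_distToCode_eq_three hF hd
  obtain ⟨-, -, hx₂, hxsum⟩ := numNeighbors_of_distToCode_eq_two hF hd hx
  obtain ⟨-, -, hy₂, hysum⟩ := numNeighbors_of_distToCode_eq_three hF hd hy
  have hx₂' : numNeighbors F x 2 = 12 := by omega
  have hx₃ : numNeighbors F x 3 = 1 := by omega
  have hzero : 15 * outerDist F 1 5 = 6 * outerDist F 0 6 := by
    simpa [outerDist_eq_zero_of_add_lt hF hd] using outerDist_recurrence_zero hF hd 4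
  have hone : 14 * outerDist F 2 4 = 5 * outerDist F 1 5 := by
    simpa [outerDist_eq_zero_of_add_lt hF hd] using outerDist_recurrence_one hF hd 3
  have htwo : 48 + outerDist F 3 3 = 4 * outerDist F 2 4 + 13 := by
    simpa [outerDist_eq_zero_of_add_lt hF hd, outerDist_two_two hF hd, hl, hx₃, hx₂'] using
      outerDist_recurrence_two hF hd hx 2
  omega

theorem distToCode_ne_four (x : Fin 15 → ZMod 2) : distToCode F x ≠ 4 := by
  intro hx
  obtain ⟨i, hi⟩ := exists_distToCode_add_single_eq (nonempty_of_isMinDist hd) hx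
  obtain ⟨-, -, h₂, hsum⟩ := numNeighbors_of_distToCode_eq_three hF hd hi
  have hpos : 0 < numNeighbors F (x + Pi.single i 1) 4 := Finset.card_pos.2
    ⟨i, Finset.mem_filter.2 ⟨Finset.mem_univ i, by
      rw [add_assoc, ZModModule.add_self, add_zero, hx]⟩⟩
  rw [outerDist_three_three hF hd] at h₂
  omega

theorem distToCode_le_three (x : Fin 15 → ZMod 2) : distToCode F x ≤ 3 := by
  by_contra! h
  obtain ⟨y, hy⟩ := exists_distToCode_eq_of_le (nonempty_of_isMinDist hd) h ⟨x, rfl⟩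
  exact distToCode_ne_four hF hd y hy

theorem numAtDist_identity (x : Fin 15 → ZMod 2) :
    numAtDist F 3 x + numAtDist F 2 x + 5 * numAtDist F 1 x + 5 * numAtDist F 0 x = 5 := by
  simp only [← outerDist_distToCode hF]
  have hle := distToCode_le_three hF hd x
  interval_cases distToCode F x <;>
    simp [outerDist_eq_zero_of_add_lt hF hd, outerDist_eq_zero_of_lt hF, outerDist_zero_zero hF hd,
      outerDist_one_one hF hd, outerDist_two_two hF hd, outerDist_two_three hF hd,
      outerDist_three_three hF hd]

end Parameters

/-! ### Character sums of a code -/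

section CharSum

variable {ι : Type*} [Fintype ι]

/-- The sum of the character `char u` over the code `F`, that is, the value at `u` of the Fourier
transform of the indicator function of `F`. -/
def charSum (F : Finset (ι → ZMod 2)) (u : ι → ZMod 2) : ℤ := ∑ c ∈ F, char u c

theorem charSum_zero (F : Finset (ι → ZMod 2)) : charSum F 0 = #F := by
  simp [charSum, char_apply]

theorem sum_eq_natCast_hammingNorm (x : ι → ZMod 2) : ∑ i, x i = (hammingNorm x : ZMod 2) := by
  have hterm (i : ι) : x i = if x i ≠ 0 then 1 else 0 := by
    rcases eq_zero_or_one (x i) with h | h <;> simp [h]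
  rw [Finset.sum_congr rfl fun i _ ↦ hterm i, Finset.sum_boole, hammingNorm]

theorem char_one_right {u : ι → ZMod 2} (hu : Even (hammingNorm u)) : char u 1 = 1 := by
  rw [char_apply, dotProduct_one, sum_eq_natCast_hammingNorm, sign_eq_one_iff,
    ZMod.natCast_eq_zero_iff_even]
  exact hu

theorem sum_char_mul_charSum [DecidableEq ι] (F : Finset (ι → ZMod 2)) (x : ι → ZMod 2) :
    ∑ u, char u x * charSum F u = if x ∈ F then 2 ^ Fintype.card ι else 0 := by
  have hinner (c : ι → ZMod 2) :
      ∑ u, char u x * char u c = if x = c then 2 ^ Fintype.card ι else 0 := by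
    simp only [← AddChar.map_add_eq_mul, char_apply_comm _ (x + c), sum_char,
      add_eq_zero_iff_eq]
  simp only [charSum, Finset.mul_sum]
  rw [Finset.sum_comm]
  simp only [hinner, Finset.sum_ite_eq]

theorem add_one_mem_of_even_of_charSum_ne_zero {F : Finset (ι → ZMod 2)}
    (hF : ∀ u, charSum F u ≠ 0 → Even (hammingNorm u)) {x : ι → ZMod 2} (hx : x ∈ F) :
    x + 1 ∈ F := by
  classical
  have hterm (u : ι → ZMod 2) : char u (x + 1) * charSum F u = char u x * charSum F u := by
    by_cases hu : charSum F u = 0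
    · simp [hu]
    · rw [AddChar.map_add_eq_mul, char_one_right (hF u hu), mul_one]
  have h := sum_char_mul_charSum F (x + 1)
  simp only [hterm, sum_char_mul_charSum, hx, if_true] at h
  by_contra hx'
  simp [hx'] at h

variable [DecidableEq ι]

/-- The Fourier transform of an integer-valued function on the binary Hamming space. -/
def fourier (f : (ι → ZMod 2) → ℤ) (u : ι → ZMod 2) : ℤ := ∑ x, char u x * f x

theorem fourier_sum_add_single (f : (ι → ZMod 2) → ℤ) (u : ι → ZMod 2) :
    fourier (fun x ↦ ∑ i, f (x + Pi.single i 1)) u = signSum u * fourier f u := by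
  have hshift (i : ι) :
      ∑ x, char u x * f (x + Pi.single i 1) = sign (u i) * ∑ x, char u x * f x := by
    rw [Finset.mul_sum, ← Equiv.sum_comp (Equiv.addRight (Pi.single i 1))]
    refine Finset.sum_congr rfl fun x _ ↦ ?_
    rw [Equiv.coe_addRight, add_assoc, ZModModule.add_self, add_zero, AddChar.map_add_eq_mul,
      char_single]
    ring
  simp only [fourier, Finset.mul_sum, signSum, Finset.sum_mul]
  rw [Finset.sum_comm, Finset.sum_comm (s := Finset.univ (α := ι → ZMod 2))]
  simp only [hshift, Finset.mul_sum]

theorem fourier_numAtDist_zero (F : Finset (ι → ZMod 2)) (u : ι → ZMod 2) :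
    fourier (fun x ↦ numAtDist F 0 x) u = charSum F u := by
  have hmem (x : ι → ZMod 2) : numAtDist F 0 x = if x ∈ F then 1 else 0 := by
    simp only [numAtDist, hammingDist_eq_zero, Finset.filter_eq]
    split_ifs <;> simp
  simp [fourier, hmem, charSum]

theorem fourier_numAtDist_one (F : Finset (ι → ZMod 2)) (u : ι → ZMod 2) :
    fourier (fun x ↦ numAtDist F 1 x) u = signSum u * charSum F u := by
  rw [← fourier_numAtDist_zero, ← fourier_sum_add_single]
  simp only [← sum_numAtDist_zero_add_single, Nat.cast_sum]

theorem fourier_numAtDist_add_two (F : Finset (ι → ZMod 2)) (k : ℕ) (u : ι → ZMod 2) :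
    (k + 2) * fourier (fun x ↦ numAtDist F (k + 2) x) u =
      signSum u * fourier (fun x ↦ numAtDist F (k + 1) x) u -
        (Fintype.card ι - k : ℕ) * fourier (fun x ↦ numAtDist F k x) u := by
  rw [← fourier_sum_add_single]
  simp only [← Nat.cast_sum, sum_numAtDist_succ_add_single]
  simp only [fourier, Finset.mul_sum, ← Finset.sum_sub_distrib]
  refine Finset.sum_congr rfl fun x _ ↦ ?_
  push_cast
  ring

end CharSum

section DualSupport

variable {F : Finset (Fin 15 → ZMod 2)}
  (hF : IsCompletelyRegular (F : Set (Fin 15 → ZMod 2)))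
  (hd : IsMinDist (F : Set (Fin 15 → ZMod 2)) 5)

include hF hd

theorem annihilator_mul_charSum (u : Fin 15 → ZMod 2) :
    (signSum u - 3) * (signSum u + 1) * (signSum u + 5) * charSum F u = 30 * ∑ x, char u x := by
  have hsum : fourier (fun x ↦ numAtDist F 3 x) u + fourier (fun x ↦ numAtDist F 2 x) u +
      5 * fourier (fun x ↦ numAtDist F 1 x) u + 5 * fourier (fun x ↦ numAtDist F 0 x) u =
        5 * ∑ x, char u x := by
    simp only [fourier, Finset.mul_sum, ← Finset.sum_add_distrib]
    refine Finset.sum_congr rfl fun x _ ↦ ?_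
    have h : (numAtDist F 3 x + numAtDist F 2 x + 5 * numAtDist F 1 x + 5 * numAtDist F 0 x : ℤ) =
        5 := mod_cast numAtDist_identity hF hd x
    linear_combination char u x * h
  have h₂ : 2 * fourier (fun x ↦ numAtDist F 2 x) u =
      signSum u * fourier (fun x ↦ numAtDist F 1 x) u -
        15 * fourier (fun x ↦ numAtDist F 0 x) u := by
    simpa using fourier_numAtDist_add_two F 0 u
  have h₃ : 3 * fourier (fun x ↦ numAtDist F 3 x) u =
      signSum u * fourier (fun x ↦ numAtDist F 2 x) u -
        14 * fourier (fun x ↦ numAtDist F 1 x) u := by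
    simpa [one_add_one_eq_two, show (1 + 2 : ℤ) = 3 from rfl] using
      fourier_numAtDist_add_two F 1 u
  rw [fourier_numAtDist_zero, fourier_numAtDist_one] at h₂ hsum
  rw [fourier_numAtDist_one] at h₃
  linear_combination 6 * hsum - 2 * h₃ - (signSum u + 3) * h₂

theorem card_eq_256 : #F = 256 := by
  have h : (15 - 3) * (15 + 1) * (15 + 5) * (#F : ℤ) = 30 * 2 ^ 15 := by
    simpa [sum_char, charSum_zero, signSum_zero] using annihilator_mul_charSum hF hd 0
  omega

theorem signSum_of_charSum_ne_zero {u : Fin 15 → ZMod 2} (hu : u ≠ 0) (h : charSum F u ≠ 0) :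
    signSum u = 3 ∨ signSum u = -1 ∨ signSum u = -5 := by
  have hprod := annihilator_mul_charSum hF hd u
  rw [sum_char, if_neg hu, mul_zero, mul_eq_zero, mul_eq_zero, mul_eq_zero] at hprod
  omega

theorem hammingNorm_of_charSum_ne_zero {u : Fin 15 → ZMod 2} (hu : u ≠ 0) (h : charSum F u ≠ 0) :
    hammingNorm u = 6 ∨ hammingNorm u = 8 ∨ hammingNorm u = 10 := by
  have hs := signSum_of_charSum_ne_zero hF hd hu h
  rw [signSum_eq_card_sub, Fintype.card_fin] at hs
  omega

theorem add_one_mem_of_mem {x : Fin 15 → ZMod 2} (hx : x ∈ F) : x + 1 ∈ F := by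
  refine add_one_mem_of_even_of_charSum_ne_zero (fun u hu ↦ ?_) hx
  rcases eq_or_ne u 0 with rfl | hu₀
  · simp
  · rcases hammingNorm_of_charSum_ne_zero hF hd hu₀ hu with h | h | h <;> rw [h] <;> decide

theorem signSum_add_mem_Icc {x y : Fin 15 → ZMod 2} (hx : x ∈ F) (hy : y ∈ F) (hxy : x ≠ y)
    (hxy' : x ≠ y + 1) : signSum (x + y) ∈ Finset.Icc (-5) 5 := by
  have h₁ := hd.1 x hx y hy hxy
  have h₂ := hd.1 x hx (y + 1) (add_one_mem_of_mem hF hd hy) hxy'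
  have hs₁ := signSum_add_eq x y
  have hs₂ := signSum_add_eq x (y + 1)
  rw [← add_assoc, signSum_add_one] at hs₂
  rw [Fintype.card_fin] at hs₁ hs₂
  rw [Finset.mem_Icc]
  omega

end DualSupport

/-! ### Codes with the parameters of the Nordstrom–Robinson code -/

/-- `E` is an orthogonal array of strength `t`, stated in terms of its character sums. -/
def HasStrength {κ : Type*} [Fintype κ] (t : ℕ) (E : Finset (κ → ZMod 2)) : Prop :=
  ∀ u, u ≠ 0 → hammingNorm u ≤ t → charSum E u = 0

/-- A code of length 16 with 256 words, closed under complementation, with distances 6, 8, 10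
between words that are neither equal nor complementary, and of strength 4 as an orthogonal array:
these are the properties of the Nordstrom–Robinson code that characterize it up to equivalence. -/
structure IsNordstromRobinson {κ : Type*} [Fintype κ] (E : Finset (κ → ZMod 2)) : Prop where
  length_eq : Fintype.card κ = 16
  card_eq : #E = 256
  add_one_mem : ∀ x ∈ E, x + 1 ∈ E
  signSum_add : ∀ x ∈ E, ∀ y ∈ E, x ≠ y → x ≠ y + 1 →
    signSum (x + y) = 4 ∨ signSum (x + y) = 0 ∨ signSum (x + y) = -4
  hasStrength : HasStrength 4 E

section ParityExtend

variable {ι : Type*} [Fintype ι]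

/-- Extension of a binary vector by an overall parity check at the new coordinate `none`. -/
def parityExtend : (ι → ZMod 2) →+ (Option ι → ZMod 2) where
  toFun x o := o.elim (∑ i, x i) x
  map_zero' := by ext (_ | _) <;> simp
  map_add' x y := by ext (_ | _) <;> simp [Finset.sum_add_distrib]

@[simp] theorem parityExtend_some (x : ι → ZMod 2) (i : ι) : parityExtend x (some i) = x i := rfl

theorem parityExtend_injective : Function.Injective (parityExtend (ι := ι)) :=
  fun _ _ h ↦ funext fun i ↦ congrFun h (some i)

theorem parityExtend_one (hι : Odd (Fintype.card ι)) :
    parityExtend (1 : ι → ZMod 2) = 1 := by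
  ext (_ | i)
  · simpa [parityExtend] using ZMod.natCast_eq_one_iff_odd.2 hι
  · rfl

theorem signSum_parityExtend (x : ι → ZMod 2) :
    signSum (parityExtend x) = signSum x + if Even (hammingNorm x) then 1 else -1 := by
  have hnone : parityExtend x none = (hammingNorm x : ZMod 2) := sum_eq_natCast_hammingNorm x
  rw [signSum, Fintype.sum_option, hnone, sign_eq_ite, add_comm]
  simp only [ZMod.natCast_eq_zero_iff_even, parityExtend_some, signSum]

theorem char_parityExtend (u : Option ι → ZMod 2) (x : ι → ZMod 2) :
    char u (parityExtend x) = char (fun i ↦ u none + u (some i)) x := by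
  simp only [char_apply, dotProduct, Fintype.sum_option, parityExtend_some, add_mul,
    Finset.sum_add_distrib, ← Finset.mul_sum]
  rfl

theorem signSum_none_add (u : Option ι → ZMod 2) :
    signSum (fun i ↦ u none + u (some i)) = sign (u none) * signSum u - 1 := by
  simp only [signSum, AddChar.map_add_eq_mul, ← Finset.mul_sum, Fintype.sum_option, mul_add,
    sign_mul_self]
  ring

/-- The code `F` extended by an overall parity check. -/
def extendedCode (F : Finset (ι → ZMod 2)) : Finset (Option ι → ZMod 2) :=
  F.map ⟨parityExtend, parityExtend_injective⟩

theorem mem_extendedCode {F : Finset (ι → ZMod 2)} {y : Option ι → ZMod 2} :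
    y ∈ extendedCode F ↔ ∃ x ∈ F, parityExtend x = y := Finset.mem_map

theorem charSum_extendedCode (F : Finset (ι → ZMod 2)) (u : Option ι → ZMod 2) :
    charSum (extendedCode F) u = charSum F fun i ↦ u none + u (some i) := by
  simp only [charSum, extendedCode, Finset.sum_map, Function.Embedding.coeFn_mk, char_parityExtend]

end ParityExtend

section Extended

variable {F : Finset (Fin 15 → ZMod 2)} (hF : IsCompletelyRegular (F : Set (Fin 15 → ZMod 2)))
  (hd : IsMinDist (F : Set (Fin 15 → ZMod 2)) 5)

include hF hd

theorem hasStrength_extendedCode : HasStrength 4 (extendedCode F) := by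
  intro u hu hu'
  rw [charSum_extendedCode]
  have hpos : 0 < hammingNorm u := hammingNorm_pos_iff.2 hu
  have hs := signSum_eq_card_sub u
  have hnone := signSum_none_add u
  have hsign : sign (u none) = 1 ∨ sign (u none) = -1 := by
    rcases eq_zero_or_one (u none) with h | h <;> simp [h, sign_one]
  simp only [Fintype.card_option, Fintype.card_fin] at hs
  by_contra h
  have hne : (fun i ↦ u none + u (some i)) ≠ 0 := by
    intro h₀
    rw [h₀, signSum_zero, Fintype.card_fin] at hnone
    rcases hsign with h' | h' <;> rw [h'] at hnone <;> omega
  have hval := signSum_of_charSum_ne_zero hF hd hne h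
  rw [hnone] at hval
  rcases hsign with h' | h' <;> rw [h'] at hval <;> omega

theorem isNordstromRobinson_extendedCode : IsNordstromRobinson (extendedCode F) where
  length_eq := by simp
  card_eq := by rw [extendedCode, Finset.card_map, card_eq_256 hF hd]
  add_one_mem y hy := by
    obtain ⟨x, hx, rfl⟩ := mem_extendedCode.1 hy
    refine mem_extendedCode.2 ⟨x + 1, add_one_mem_of_mem hF hd hx, ?_⟩
    rw [map_add, parityExtend_one (by decide)]
  signSum_add y₁ hy₁ y₂ hy₂ hne hne' := by
    obtain ⟨x₁, hx₁, rfl⟩ := mem_extendedCode.1 hy₁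
    obtain ⟨x₂, hx₂, rfl⟩ := mem_extendedCode.1 hy₂
    rw [← parityExtend_one (by decide), ← map_add, parityExtend_injective.ne_iff] at hne'
    rw [parityExtend_injective.ne_iff] at hne
    have hmem := Finset.mem_Icc.1 (signSum_add_mem_Icc hF hd hx₁ hx₂ hne hne')
    have hnorm := signSum_eq_card_sub (x₁ + x₂)
    rw [Fintype.card_fin] at hnorm
    rw [← map_add, signSum_parityExtend]
    split_ifs with heven <;> rw [Nat.even_iff] at heven <;> omega
  hasStrength := hasStrength_extendedCode hF hd

end Extended

section Recode

variable {κ κ' : Type*}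

/-- The isometry of binary Hamming spaces which translates by `v` and then relabels the coordinates
along `e`. -/
def recode (e : κ ≃ κ') (v : κ → ZMod 2) : (κ → ZMod 2) ≃ (κ' → ZMod 2) :=
  (Equiv.addRight v).trans (e.arrowCongr (Equiv.refl _))

theorem recode_apply (e : κ ≃ κ') (v x : κ → ZMod 2) :
    recode e v x = fun i ↦ x (e.symm i) + v (e.symm i) := rfl

theorem recode_add_recode (e : κ ≃ κ') (v x y : κ → ZMod 2) :
    recode e v x + recode e v y = fun i ↦ (x + y) (e.symm i) := by
  ext i
  simp only [recode_apply, Pi.add_apply]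
  rw [add_add_add_comm, ZModModule.add_self, add_zero]

variable [Fintype κ] [Fintype κ']

theorem signSum_comp_equiv (e : κ' ≃ κ) (x : κ → ZMod 2) :
    signSum (fun i ↦ x (e i)) = signSum x :=
  e.sum_comp fun i ↦ sign (x i)

theorem char_recode (e : κ ≃ κ') (v x : κ → ZMod 2) (u : κ' → ZMod 2) :
    char u (recode e v x) = char (fun i ↦ u (e i)) v * char (fun i ↦ u (e i)) x := by
  rw [← AddChar.map_add_eq_mul, char_apply, char_apply, dotProduct, ← e.sum_comp]
  simp only [recode_apply, Equiv.symm_apply_apply, dotProduct, Pi.add_apply, add_comm]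

theorem hammingNorm_comp_equiv (e : κ' ≃ κ) (x : κ → ZMod 2) :
    hammingNorm (fun i ↦ x (e i)) = hammingNorm x := by
  have h := signSum_comp_equiv e x
  rw [signSum_eq_card_sub, signSum_eq_card_sub, Fintype.card_congr e] at h
  omega

theorem IsNordstromRobinson.recode {E : Finset (κ → ZMod 2)} (hE : IsNordstromRobinson E)
    (e : κ ≃ κ') (v : κ → ZMod 2) :
    IsNordstromRobinson (E.map (recode e v).toEmbedding) where
  length_eq := (Fintype.card_congr e).symm.trans hE.length_eq
  card_eq := (Finset.card_map _).trans hE.card_eq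
  add_one_mem y hy := by
    obtain ⟨x, hx, rfl⟩ := Finset.mem_map.1 hy
    refine Finset.mem_map.2 ⟨x + 1, hE.add_one_mem x hx, ?_⟩
    ext i
    exact add_right_comm (x _) 1 (v _)
  signSum_add y₁ hy₁ y₂ hy₂ hne hne' := by
    obtain ⟨x₁, hx₁, rfl⟩ := Finset.mem_map.1 hy₁
    obtain ⟨x₂, hx₂, rfl⟩ := Finset.mem_map.1 hy₂
    simp only [Equiv.coe_toEmbedding, recode_add_recode]
    rw [signSum_comp_equiv]
    refine hE.signSum_add x₁ hx₁ x₂ hx₂ (fun h ↦ hne (h ▸ rfl)) fun h ↦ hne' ?_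
    ext i
    rw [h]
    exact add_right_comm (x₂ _) 1 (v _)
  hasStrength u hu hu' := by
    have hcomp : charSum E (fun i ↦ u (e i)) = 0 := by
      refine hE.hasStrength _ (fun h ↦ hu ?_) ((hammingNorm_comp_equiv e u).trans_le hu')
      ext i
      simpa using congrFun h (e.symm i)
    simp only [charSum, Finset.sum_map, Equiv.coe_toEmbedding, char_recode]
    rw [← Finset.mul_sum, ← charSum, hcomp, mul_zero]

end Recode

section Moments

variable {κ : Type*} [Fintype κ] {E : Finset (κ → ZMod 2)}

theorem HasStrength.mono {s t : ℕ} (hE : HasStrength t E) (hst : s ≤ t) : HasStrength s E :=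
  fun u hu hu' ↦ hE u hu (hu'.trans hst)

theorem sum_signSum_add_mul (E : Finset (κ → ZMod 2)) (p : κ → ZMod 2) (f : (κ → ZMod 2) → ℤ) :
    ∑ z ∈ E, signSum (z + p) * f z = ∑ i, sign (p i) * ∑ z ∈ E, sign (z i) * f z := by
  simp only [signSum, Pi.add_apply, AddChar.map_add_eq_mul, Finset.sum_mul, Finset.mul_sum]
  rw [Finset.sum_comm]
  exact Finset.sum_congr rfl fun i _ ↦ Finset.sum_congr rfl fun z _ ↦ by ring

theorem hammingNorm_add_le (x y : κ → ZMod 2) :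
    hammingNorm (x + y) ≤ hammingNorm x + hammingNorm y := by
  simpa only [hammingDist_eq_hammingNorm_add, add_zero, zero_add] using hammingDist_triangle x 0 y

section

variable [DecidableEq κ]

theorem hammingNorm_single_one (i : κ) : hammingNorm (Pi.single i 1 : κ → ZMod 2) = 1 := by
  have h := hammingNorm_add_single (0 : κ → ZMod 2) i
  simpa [sign_eq_ite] using h

theorem char_single_left (i : κ) (x : κ → ZMod 2) : char (Pi.single i 1) x = sign (x i) := by
  rw [char_apply_comm, char_single]

theorem sum_sign_mul_sign (hE : HasStrength 2 E) (i j : κ) :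
    ∑ z ∈ E, sign (z i) * sign (z j) = if i = j then (#E : ℤ) else 0 := by
  split_ifs with hij
  · simp [hij, sign_mul_self]
  · simp only [← char_single_left, ← char_add_left]
    refine hE _ (fun h ↦ ?_) ?_
    · simpa [hij] using congrFun h i
    · have := hammingNorm_add_le (Pi.single i 1) (Pi.single j 1 : κ → ZMod 2)
      rwa [hammingNorm_single_one, hammingNorm_single_one] at this

theorem sum_sign_mul_sign_mul_sign_mul_sign (hE : HasStrength 4 E) (i j k l : κ) :
    ∑ z ∈ E, sign (z i) * (sign (z j) * (sign (z k) * sign (z l))) =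
      #E * ((if i = j then if k = l then 1 else 0 else 0) +
        (if i = k then if j = l then 1 else 0 else 0) +
        (if i = l then if j = k then 1 else 0 else 0) -
        2 * if i = j then if i = k then if i = l then 1 else 0 else 0 else 0) := by
  have hE₂ := sum_sign_mul_sign (hE.mono (by norm_num))
  by_cases hij : i = j
  · subst hij
    simp only [← mul_assoc, sign_mul_self, one_mul, hE₂]
    split_ifs <;> simp_all
  by_cases hik : i = k
  · subst hik
    have hz (z : κ → ZMod 2) :
        sign (z i) * (sign (z j) * (sign (z i) * sign (z l))) = sign (z j) * sign (z l) := by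
      linear_combination (sign (z j) * sign (z l)) * sign_mul_self (z i)
    simp only [hz, hE₂]
    split_ifs <;> simp_all
  by_cases hil : i = l
  · subst hil
    have hz (z : κ → ZMod 2) :
        sign (z i) * (sign (z j) * (sign (z k) * sign (z i))) = sign (z j) * sign (z k) := by
      linear_combination (sign (z j) * sign (z k)) * sign_mul_self (z i)
    simp only [hz, hE₂]
    split_ifs <;> simp_all
  have hsum :
      charSum E (Pi.single i 1 + (Pi.single j 1 + (Pi.single k 1 + Pi.single l 1))) = 0 := by
    refine hE _ (fun h ↦ ?_) ?_
    · simpa [hij, hik, hil] using congrFun h i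
    · have h (m : κ) (x : κ → ZMod 2) := hammingNorm_add_le (Pi.single m 1) x
      simp only [hammingNorm_single_one] at h
      linarith [h i (Pi.single j 1 + (Pi.single k 1 + Pi.single l 1)),
        h j (Pi.single k 1 + Pi.single l 1), h k (Pi.single l 1), hammingNorm_single_one l]
  simp only [charSum, char_add_left, char_single_left] at hsum
  rw [hsum, if_neg hij, if_neg hik, if_neg hil, if_neg hij]
  ring

end

theorem sum_signSum_add_sq (hE : HasStrength 2 E) (p : κ → ZMod 2) :
    ∑ z ∈ E, signSum (z + p) ^ 2 = Fintype.card κ * #E := by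
  classical
  have hinner (i : κ) : ∑ z ∈ E, sign (z i) * signSum (z + p) = sign (p i) * #E := by
    simp only [mul_comm (sign _) (signSum _), sum_signSum_add_mul]
    simp [sum_sign_mul_sign hE]
  simp only [sq, sum_signSum_add_mul, hinner, ← mul_assoc, sign_mul_self]
  simp

theorem sum_signSum_add_sq_mul_sq (hE : HasStrength 4 E) (p r : κ → ZMod 2) :
    ∑ z ∈ E, signSum (z + p) ^ 2 * signSum (z + r) ^ 2 =
      #E * ((Fintype.card κ : ℤ) ^ 2 - 2 * Fintype.card κ + 2 * signSum (p + r) ^ 2) := by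
  classical
  have hcomm (a : ZMod 2) (x : κ → ZMod 2) (m : ℤ) :
      sign a * (signSum x * m) = signSum x * (sign a * m) := mul_left_comm ..
  have hexpand : ∑ z ∈ E, signSum (z + p) ^ 2 * signSum (z + r) ^ 2 =
      ∑ i, sign (p i) * ∑ j, sign (p j) * ∑ k, sign (r k) * ∑ l, sign (r l) *
        ∑ z ∈ E, sign (z l) * (sign (z k) * (sign (z j) * sign (z i))) := by
    have hz (z : κ → ZMod 2) : signSum (z + p) ^ 2 * signSum (z + r) ^ 2 =
        signSum (z + p) * (signSum (z + p) * (signSum (z + r) * (signSum (z + r) * 1))) := by ring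
    simp only [hz, sum_signSum_add_mul, hcomm]
    simp only [mul_one]
  have hpr : ∑ i, ∑ j, sign (p i) * sign (p j) * (sign (r i) * sign (r j)) =
      signSum (p + r) ^ 2 := by
    simp only [sq, signSum, Finset.sum_mul_sum, Pi.add_apply, AddChar.map_add_eq_mul,
      mul_mul_mul_comm]
  have hself (x : κ → ZMod 2) (i : κ) (m : ℤ) : sign (x i) * (sign (x i) * m) = m := by
    rw [← mul_assoc, sign_mul_self, one_mul]
  have hcross (a : κ → κ → ℤ) (h : ∀ i j, a i j = sign (r i) * sign (r j) * #E) :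
      ∑ i, sign (p i) * ∑ j, sign (p j) * a i j = #E * signSum (p + r) ^ 2 := by
    simp only [← hpr, Finset.mul_sum, h]
    exact Finset.sum_congr rfl fun i _ ↦ Finset.sum_congr rfl fun j _ ↦ by ring
  rw [hexpand]
  simp only [sum_sign_mul_sign_mul_sign_mul_sign hE, mul_add, mul_sub, Finset.sum_add_distrib,
    Finset.sum_sub_distrib, mul_ite, mul_one, mul_zero, Finset.sum_ite_eq', Finset.sum_ite_irrel,
    Finset.mem_univ, if_true, Finset.sum_const_zero, hself]
  rw [hcross _ fun i j ↦ by ring, hcross _ fun i j ↦ by ring]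
  simp only [Finset.sum_const, Finset.card_univ, nsmul_eq_mul]
  ring

end Moments

section Geometry

variable {κ : Type*} [Fintype κ]

theorem eq_zero_of_signSum_eq_card {x : κ → ZMod 2} (h : signSum x = Fintype.card κ) : x = 0 := by
  rw [signSum_eq_card_sub] at h
  exact hammingNorm_eq_zero.1 (by omega)

theorem abs_signSum_le (x : κ → ZMod 2) : |signSum x| ≤ Fintype.card κ := by
  have h : hammingNorm x ≤ Fintype.card κ := hammingNorm_le_card_fintype
  rw [signSum_eq_card_sub, abs_le]
  omega

theorem eight_dvd_signSum_four_points (a b c d : κ → ZMod 2) :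
    8 ∣ Fintype.card κ + signSum (a + b + c + d) + (signSum (a + b) + signSum (a + c) +
      signSum (a + d) + signSum (b + c) + signSum (b + d) + signSum (c + d)) := by
  have hbit : ∀ a b c d : ZMod 2, 8 ∣ 1 + sign (a + b + c + d) + (sign (a + b) + sign (a + c) +
      sign (a + d) + sign (b + c) + sign (b + d) + sign (c + d)) := by
    decide
  have hcard : (Fintype.card κ : ℤ) = ∑ _i : κ, 1 := by simp
  simp only [signSum, hcard, ← Finset.sum_add_distrib]
  exact Finset.dvd_sum fun i _ ↦ hbit (a i) (b i) (c i) (d i)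

theorem sixteen_le_sq {a : ℤ} (h₄ : 4 ∣ a) (h₈ : ¬ 8 ∣ a) : 16 ≤ a ^ 2 := by
  obtain ⟨k, rfl⟩ := h₄
  have hk : k ≠ 0 := by omega
  nlinarith [one_le_sq_iff_one_le_abs k |>.2 (Int.one_le_abs hk)]

variable {E : Finset (κ → ZMod 2)}

namespace IsNordstromRobinson

variable (hE : IsNordstromRobinson E)

include hE

theorem signSum_zero : signSum (0 : κ → ZMod 2) = 16 := by
  rw [BinaryCode.signSum_zero, hE.length_eq, Nat.cast_ofNat]

theorem signSum_one : signSum (1 : κ → ZMod 2) = -16 := by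
  rw [← zero_add 1, signSum_add_one, hE.signSum_zero]

theorem ne_add_one (c : κ → ZMod 2) : c ≠ c + 1 := by
  intro h
  have h₁ : (1 : κ → ZMod 2) = 0 := left_eq_add.1 h
  have := hE.signSum_one
  rw [h₁, hE.signSum_zero] at this
  norm_num at this

theorem sum_sq (p : κ → ZMod 2) : ∑ z ∈ E, signSum (z + p) ^ 2 = 4096 := by
  rw [sum_signSum_add_sq (hE.hasStrength.mono (by norm_num)), hE.length_eq, hE.card_eq]
  norm_num

theorem sum_sq_mul_sq (p r : κ → ZMod 2) :
    ∑ z ∈ E, signSum (z + p) ^ 2 * signSum (z + r) ^ 2 = 57344 + 512 * signSum (p + r) ^ 2 := by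
  rw [sum_signSum_add_sq_mul_sq hE.hasStrength, hE.length_eq, hE.card_eq]
  push_cast
  ring

theorem sum_eq_add_sum_filter {c : κ → ZMod 2} (hc : c ∈ E) (f : (κ → ZMod 2) → ℤ) :
    ∑ z ∈ E, f z = f c + f (c + 1) + ∑ z ∈ E with z ≠ c ∧ z ≠ c + 1, f z := by
  have hpair : E.filter (fun z ↦ ¬ (z ≠ c ∧ z ≠ c + 1)) = {c, c + 1} := by
    ext z
    simp only [Finset.mem_filter, Finset.mem_insert, Finset.mem_singleton, not_and_or, not_not,
      and_iff_right_iff_imp]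
    rintro (rfl | rfl)
    exacts [hc, hE.add_one_mem c hc]
  rw [← Finset.sum_filter_add_sum_filter_not E (fun z ↦ z ≠ c ∧ z ≠ c + 1), hpair,
    Finset.sum_pair (hE.ne_add_one c), add_comm]

theorem eq_zero_of_sum_eq {c : κ → ZMod 2} (hc : c ∈ E) {f : (κ → ZMod 2) → ℤ}
    (hf : ∀ z ∈ E, z ≠ c → z ≠ c + 1 → 0 ≤ f z) (hsum : ∑ z ∈ E, f z = f c + f (c + 1))
    {z : κ → ZMod 2} (hz : z ∈ E) (hzc : z ≠ c) (hzc' : z ≠ c + 1) : f z = 0 := by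
  rw [hE.sum_eq_add_sum_filter hc, add_eq_left, Finset.sum_eq_zero_iff_of_nonneg] at hsum
  · exact hsum z (Finset.mem_filter.2 ⟨hz, hzc, hzc'⟩)
  · intro z hz
    obtain ⟨hz, hzc, hzc'⟩ := Finset.mem_filter.1 hz
    exact hf z hz hzc hzc'

theorem eq_or_eq_add_one_or_signSum_add {c d : κ → ZMod 2} (hc : c ∈ E) (hd : d ∈ E) :
    c = d ∨ c = d + 1 ∨ signSum (c + d) = 4 ∨ signSum (c + d) = 0 ∨ signSum (c + d) = -4 := by
  by_cases h : c = d
  · exact .inl h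
  · by_cases h' : c = d + 1
    · exact .inr (.inl h')
    · exact .inr (.inr (hE.signSum_add c hc d hd h h'))

theorem signSum_self_add (c : κ → ZMod 2) : signSum (c + c) = 16 := by
  rw [ZModModule.add_self, hE.signSum_zero]

theorem signSum_add_one_self (c : κ → ZMod 2) : signSum (c + 1 + c) = -16 := by
  rw [add_right_comm, signSum_add_one, hE.signSum_self_add]

theorem four_dvd_signSum_add {c d : κ → ZMod 2} (hc : c ∈ E) (hd : d ∈ E) :
    4 ∣ signSum (c + d) := by
  rcases hE.eq_or_eq_add_one_or_signSum_add hc hd with rfl | rfl | h | h | h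
  · rw [hE.signSum_self_add]; norm_num
  · rw [hE.signSum_add_one_self]; norm_num
  all_goals omega

theorem card_filter_not_eight_dvd {c : κ → ZMod 2} (hc : c ∈ E) :
    #{z ∈ E | ¬ 8 ∣ signSum (z + c)} = 224 := by
  have hfar : ∑ z ∈ E with z ≠ c ∧ z ≠ c + 1,
      (signSum (z + c) ^ 2 - 16 * if ¬ 8 ∣ signSum (z + c) then 1 else 0) = 0 := by
    refine Finset.sum_eq_zero fun z hz ↦ ?_
    obtain ⟨hz, hzc, hzc'⟩ := Finset.mem_filter.1 hz
    rcases hE.signSum_add z hz c hc hzc hzc' with h | h | h <;> rw [h] <;> norm_num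
  have hsum := hE.sum_eq_add_sum_filter hc fun z ↦
    signSum (z + c) ^ 2 - 16 * if ¬ 8 ∣ signSum (z + c) then 1 else 0
  rw [hfar, hE.signSum_self_add, hE.signSum_add_one_self, Finset.sum_sub_distrib, hE.sum_sq,
    ← Finset.mul_sum, Finset.sum_boole] at hsum
  norm_num at hsum
  omega

theorem eq_or_eq_add_one_or_signSum_add_eq_zero {c d : κ → ZMod 2} (hc : c ∈ E) (hd : d ∈ E)
    (hcd : 8 ∣ signSum (c + d)) : c = d ∨ c = d + 1 ∨ signSum (c + d) = 0 := by
  rcases hE.eq_or_eq_add_one_or_signSum_add hc hd with h | h | h | h | h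
  · exact .inl h
  · exact .inr (.inl h)
  · omega
  · exact .inr (.inr h)
  · omega

theorem signSum_add_eq_zero_trans {c d z : κ → ZMod 2} (hc : c ∈ E) (hd : d ∈ E) (hz : z ∈ E)
    (hcd : signSum (c + d) = 0) (hzc : signSum (z + c) = 0) (hzd : z ≠ d) (hzd' : z ≠ d + 1) :
    signSum (z + d) = 0 := by
  have hterm : signSum (z + d) ^ 2 * (16 - signSum (z + c) ^ 2) = 0 := by
    refine hE.eq_zero_of_sum_eq hd (f := fun z ↦ signSum (z + d) ^ 2 * (16 - signSum (z + c) ^ 2))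
      (fun x hx _ _ ↦ ?_) ?_ hz hzd hzd'
    · rcases hE.eq_or_eq_add_one_or_signSum_add hx hc with rfl | rfl | h | h | h
      · simp [hcd]
      · simp [add_right_comm, signSum_add_one, hcd]
      all_goals rw [h]; positivity
    · have hdc : signSum (d + c) = 0 := by rwa [add_comm]
      have hdc' : signSum (d + 1 + c) = 0 := by rw [add_right_comm, signSum_add_one, hdc, neg_zero]
      simp only [mul_sub, Finset.sum_sub_distrib, ← Finset.sum_mul, hE.sum_sq, hE.sum_sq_mul_sq,
        hdc, hdc', hE.signSum_self_add, hE.signSum_add_one_self]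
      norm_num
  rw [hzc] at hterm
  simpa using hterm

theorem eight_dvd_signSum_add_trans {c d z : κ → ZMod 2} (hc : c ∈ E) (hd : d ∈ E) (hz : z ∈ E)
    (hcd : 8 ∣ signSum (c + d)) (hzc : 8 ∣ signSum (z + c)) : 8 ∣ signSum (z + d) := by
  rcases hE.eq_or_eq_add_one_or_signSum_add_eq_zero hc hd hcd with rfl | rfl | hcd₀
  · exact hzc
  · rwa [← add_assoc, signSum_add_one, dvd_neg] at hzc
  rcases hE.eq_or_eq_add_one_or_signSum_add_eq_zero hz hc hzc with rfl | rfl | hzc₀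
  · exact hcd
  · rwa [add_right_comm, signSum_add_one, dvd_neg]
  by_cases hzd : z = d
  · rw [hzd, hE.signSum_self_add]; norm_num
  by_cases hzd' : z = d + 1
  · rw [hzd', hE.signSum_add_one_self]; norm_num
  rw [hE.signSum_add_eq_zero_trans hc hd hz hcd₀ hzc₀ hzd hzd']
  exact dvd_zero 8

theorem eight_dvd_signSum_add_iff {c d z : κ → ZMod 2} (hc : c ∈ E) (hd : d ∈ E) (hz : z ∈ E)
    (hcd : 8 ∣ signSum (c + d)) : 8 ∣ signSum (z + c) ↔ 8 ∣ signSum (z + d) :=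
  ⟨hE.eight_dvd_signSum_add_trans hc hd hz hcd,
    hE.eight_dvd_signSum_add_trans hd hc hz (by rwa [add_comm])⟩

theorem eight_dvd_signSum_add_add {c d e z : κ → ZMod 2} (hc : c ∈ E) (hd : d ∈ E) (he : e ∈ E)
    (hz : z ∈ E) (hde : 8 ∣ signSum (d + e)) :
    8 ∣ signSum (z + (c + d + e)) + signSum (z + c) := by
  have hfour := eight_dvd_signSum_four_points z c d e
  have hz_de := hE.eight_dvd_signSum_add_iff hd he hz hde
  have hc_de := hE.eight_dvd_signSum_add_iff hd he hc hde
  have := hE.four_dvd_signSum_add hz hd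
  have := hE.four_dvd_signSum_add hz he
  have := hE.four_dvd_signSum_add hc hd
  have := hE.four_dvd_signSum_add hc he
  have hassoc : z + c + d + e = z + (c + d + e) := by simp only [add_assoc]
  rw [hE.length_eq, hassoc] at hfour
  omega

theorem signSum_add_add_sq_eq {c d e z : κ → ZMod 2} (hc : c ∈ E) (hd : d ∈ E) (he : e ∈ E)
    (hz : z ∈ E) (hde : signSum (d + e) = 0) (hzc : ¬ 8 ∣ signSum (z + c)) :
    signSum (z + (c + d + e)) ^ 2 = 16 := by
  have hdvd : ∀ z ∈ E, 8 ∣ signSum (z + (c + d + e)) + signSum (z + c) := fun z hz ↦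
    hE.eight_dvd_signSum_add_add hc hd he hz (hde ▸ dvd_zero 8)
  have hcv : signSum (c + (c + d + e)) = 0 := by
    rwa [add_assoc c d, ← add_assoc, ZModModule.add_self, zero_add]
  have hcv' : signSum (c + 1 + (c + d + e)) = 0 := by
    rw [add_right_comm, signSum_add_one, hcv, neg_zero]
  have hvc : signSum (c + d + e + c) = 0 := by rwa [add_comm]
  have hterm : (signSum (z + (c + d + e)) ^ 2 - 16) * signSum (z + c) ^ 2 = 0 := by
    refine hE.eq_zero_of_sum_eq hc
      (f := fun z ↦ (signSum (z + (c + d + e)) ^ 2 - 16) * signSum (z + c) ^ 2)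
      (fun x hx hxc hxc' ↦ ?_) ?_ hz (fun h ↦ hzc ?_) (fun h ↦ hzc ?_)
    · have hx' := hdvd x hx
      rcases hE.signSum_add x hx c hc hxc hxc' with h | h | h
      · exact mul_nonneg (sub_nonneg.2 (sixteen_le_sq (by omega) (by omega))) (sq_nonneg _)
      · simp [h]
      · exact mul_nonneg (sub_nonneg.2 (sixteen_le_sq (by omega) (by omega))) (sq_nonneg _)
    · simp only [sub_mul, Finset.sum_sub_distrib, ← Finset.mul_sum, hE.sum_sq, hE.sum_sq_mul_sq,
        hcv, hcv', hvc, hE.signSum_self_add, hE.signSum_add_one_self]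
      norm_num
    · rw [h, hE.signSum_self_add]; norm_num
    · rw [h, hE.signSum_add_one_self]; norm_num
  have hne : signSum (z + c) ^ 2 ≠ 0 := pow_ne_zero 2 fun h ↦ hzc (h ▸ dvd_zero 8)
  linarith [(mul_eq_zero.1 hterm).resolve_right hne]

theorem signSum_sq_le {x : κ → ZMod 2} (h₄ : 4 ∣ signSum x) (h₀ : x ≠ 0) (h₁ : x ≠ 1) :
    signSum x ^ 2 ≤ 144 := by
  have hne : signSum x ≠ 16 := fun h ↦ h₀ <|
    eq_zero_of_signSum_eq_card (by rw [h, hE.length_eq, Nat.cast_ofNat])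
  have hne' : signSum x ≠ -16 := fun h ↦ h₁ <| add_eq_zero_iff_eq.1 <|
    eq_zero_of_signSum_eq_card (by rw [signSum_add_one, h, hE.length_eq]; rfl)
  have habs := abs_le.1 (abs_signSum_le x)
  rw [hE.length_eq] at habs
  have hle : |signSum x| ≤ |12| := by
    rw [abs_le, abs_of_pos (by norm_num)]
    omega
  exact (sq_le_sq.2 hle).trans (by norm_num)

theorem signSum_add_add_sq_le {c d e z : κ → ZMod 2} (hc : c ∈ E) (hd : d ∈ E) (he : e ∈ E)
    (hz : z ∈ E) (hde : 8 ∣ signSum (d + e)) (hv : c + d + e ∉ E) :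
    signSum (z + (c + d + e)) ^ 2 ≤ 144 := by
  have h₈ := hE.eight_dvd_signSum_add_add hc hd he hz hde
  have h₄ := hE.four_dvd_signSum_add hz hc
  refine hE.signSum_sq_le (by omega) (fun h ↦ hv ?_) fun h ↦ hv ?_
  · rwa [← add_eq_zero_iff_eq.1 h]
  · rw [← add_eq_zero_iff_eq, add_right_comm, add_eq_zero_iff_eq] at h
    exact h ▸ hE.add_one_mem z hz

theorem add_add_mem {c d e : κ → ZMod 2} (hc : c ∈ E) (hd : d ∈ E) (he : e ∈ E)
    (hde : 8 ∣ signSum (d + e)) : c + d + e ∈ E := by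
  rcases hE.eq_or_eq_add_one_or_signSum_add_eq_zero hd he hde with rfl | rfl | hde₀
  · rwa [add_assoc, ZModModule.add_self, add_zero]
  · rw [add_assoc, add_right_comm, ZModModule.add_self, zero_add]
    exact hE.add_one_mem c hc
  -- Put `s = signSum (z + (c + d + e))`. The second and fourth moments give the sum over `E` of the
  -- nonnegative numbers `s² (144 - s²)`, but the 224 words `z` with `¬ 8 ∣ signSum (z + c)`
  -- contribute `16 * (144 - 16)` each, which is too much.
  by_contra hv
  have hsq : ∀ z ∈ E, ¬ 8 ∣ signSum (z + c) → signSum (z + (c + d + e)) ^ 2 = 16 :=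
    fun z hz ↦ hE.signSum_add_add_sq_eq hc hd he hz hde₀
  have hlow : ∑ z ∈ E, signSum (z + (c + d + e)) ^ 2 * (144 - signSum (z + (c + d + e)) ^ 2) =
      401408 := by
    simp only [mul_sub, Finset.sum_sub_distrib, ← Finset.sum_mul, hE.sum_sq, hE.sum_sq_mul_sq,
      hE.signSum_self_add]
    norm_num
  have hhigh : ∑ z ∈ E with ¬ 8 ∣ signSum (z + c),
      signSum (z + (c + d + e)) ^ 2 * (144 - signSum (z + (c + d + e)) ^ 2) = 458752 := by
    rw [Finset.sum_congr rfl fun z hz ↦ by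
      rw [hsq z (Finset.mem_filter.1 hz).1 (Finset.mem_filter.1 hz).2], Finset.sum_const,
      hE.card_filter_not_eight_dvd hc]
    norm_num
  have hmono : (458752 : ℤ) ≤ 401408 := by
    rw [← hhigh, ← hlow]
    exact Finset.sum_le_sum_of_subset_of_nonneg (Finset.filter_subset _ E)
      fun z hz _ ↦ mul_nonneg (sq_nonneg _) <|
        sub_nonneg.2 (hE.signSum_add_add_sq_le hc hd he hz hde hv)
  norm_num at hmono

end IsNordstromRobinson
end Geometry

section

variable {κ : Type*} [Fintype κ]

theorem signSum_add_eq_hammingNorm_mul (x y : κ → ZMod 2) :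
    signSum (x + y) = signSum x + signSum y - Fintype.card κ + 4 * hammingNorm (x * y) := by
  have hbit : ∀ a b : ZMod 2, sign (a + b) = sign a + sign b + 1 - 2 * sign (a * b) := by decide
  have hsum : signSum (x + y) = signSum x + signSum y + Fintype.card κ - 2 * signSum (x * y) := by
    simp only [signSum, Pi.add_apply, Pi.mul_apply, hbit, Finset.sum_sub_distrib,
      Finset.sum_add_distrib, ← Finset.mul_sum]
    simp
  rw [hsum, signSum_eq_card_sub (x * y)]
  ring

theorem dotProduct_eq_natCast_hammingNorm (x y : κ → ZMod 2) :
    x ⬝ᵥ y = (hammingNorm (x * y) : ZMod 2) := sum_eq_natCast_hammingNorm (x * y)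

end

namespace IsNordstromRobinson

variable {κ : Type*} [Fintype κ] {E : Finset (κ → ZMod 2)} (hE : IsNordstromRobinson E)

include hE in
theorem nonempty : E.Nonempty := Finset.card_pos.1 (by rw [hE.card_eq]; norm_num)

include hE in
theorem eight_dvd_signSum_add_of_add_mem {w w' : κ → ZMod 2} (hw : 8 ∣ signSum w)
    (hw' : 8 ∣ signSum w') (hwE : ∀ c ∈ E, c + w ∈ E) (hwE' : ∀ c ∈ E, c + w' ∈ E) :
    8 ∣ signSum (w + w') := by
  obtain ⟨c, hc⟩ := hE.nonempty
  have h := hE.eight_dvd_signSum_add_trans hc (hwE c hc) (hwE' c hc)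
    (by rwa [← add_assoc, ZModModule.add_self, zero_add])
    (by rwa [add_right_comm, ZModModule.add_self, zero_add])
  rwa [add_add_add_comm, ZModModule.add_self, zero_add, add_comm] at h

/-- The words of weight divisible by four which leave the code invariant under translation. They
form a copy of the first-order Reed–Muller code. -/
def translations : Submodule (ZMod 2) (κ → ZMod 2) :=
  AddSubgroup.toZModSubmodule 2
    { carrier := {w | 8 ∣ signSum w ∧ ∀ c ∈ E, c + w ∈ E}
      zero_mem' := ⟨by rw [hE.signSum_zero]; norm_num, fun c hc ↦ by rwa [add_zero]⟩
      add_mem' := fun ⟨hw, hwE⟩ ⟨hw', hwE'⟩ ↦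
        ⟨hE.eight_dvd_signSum_add_of_add_mem hw hw' hwE hwE',
          fun c hc ↦ by rw [← add_assoc]; exact hwE' _ (hwE c hc)⟩
      neg_mem' := fun h ↦ by rwa [ZModModule.neg_eq_self] }

theorem mem_translations {w : κ → ZMod 2} :
    w ∈ hE.translations ↔ 8 ∣ signSum w ∧ ∀ c ∈ E, c + w ∈ E := Iff.rfl

theorem one_mem_translations : 1 ∈ hE.translations :=
  ⟨by rw [hE.signSum_one]; norm_num, hE.add_one_mem⟩

theorem signSum_eq_zero_of_mem_translations {w : κ → ZMod 2} (hw : w ∈ hE.translations)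
    (h₀ : w ≠ 0) (h₁ : w ≠ 1) : signSum w = 0 := by
  obtain ⟨c, hc⟩ := hE.nonempty
  have hcw : w + c + c = w := by rw [add_assoc, ZModModule.add_self, add_zero]
  have h := hE.eq_or_eq_add_one_or_signSum_add_eq_zero (add_comm w c ▸ hw.2 c hc) hc
    (by rw [hcw]; exact hw.1)
  rw [hcw, add_eq_right, add_comm w, add_right_inj] at h
  exact (h.resolve_left h₀).resolve_left h₁

theorem natCard_translations : Nat.card hE.translations = 32 := by
  obtain ⟨c, hc⟩ := hE.nonempty
  have hcz (z : κ → ZMod 2) : z + c + c = z := by rw [add_assoc, ZModModule.add_self, add_zero]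
  have e : hE.translations ≃ {z // z ∈ E.filter fun z ↦ 8 ∣ signSum (z + c)} :=
    (Equiv.addRight c).subtypeEquiv fun w ↦ by
      rw [mem_translations, Finset.mem_filter, Equiv.coe_addRight, hcz, and_comm]
      refine and_congr_left fun hw ↦
        ⟨fun h ↦ by simpa only [add_comm] using h c hc, fun h d hd ↦ ?_⟩
      have := hE.add_add_mem hd h hc (by rwa [hcz])
      rwa [add_assoc, hcz] at this
  have hcard := Finset.card_filter_add_card_filter_not (s := E) fun z ↦ 8 ∣ signSum (z + c)
  rw [hE.card_filter_not_eight_dvd hc, hE.card_eq] at hcard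
  rw [Nat.card_congr e, Nat.card_eq_finsetCard]
  omega

theorem finrank_translations : Module.finrank (ZMod 2) hE.translations = 5 := by
  have h := Module.natCard_eq_pow_finrank (K := ZMod 2) (V := hE.translations)
  rw [natCard_translations, Nat.card_zmod] at h
  exact (Nat.pow_right_injective le_rfl (h : 2 ^ 5 = _)).symm

theorem dotProduct_add_eq_zero {c d w : κ → ZMod 2} (hc : c ∈ E) (hd : d ∈ E)
    (hw : w ∈ hE.translations) : w ⬝ᵥ (c + d) = 0 := by
  have hcw : 8 ∣ signSum (c + w + c) := by
    rw [add_right_comm, ZModModule.add_self, zero_add]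
    exact hw.1
  have hiff := hE.eight_dvd_signSum_add_iff (hw.2 c hc) hc hd hcw
  have h₁ := hE.four_dvd_signSum_add hd (hw.2 c hc)
  have h₂ := hE.four_dvd_signSum_add hd hc
  have hsum := signSum_add_eq_hammingNorm_mul w (c + d)
  have hcomm : w + (c + d) = d + (c + w) := by rw [add_comm c w, add_left_comm d, add_comm c d]
  rw [hE.length_eq, hcomm, add_comm c d] at hsum
  rw [add_comm c d]
  have h₈ := hw.1
  rw [dotProduct_eq_natCast_hammingNorm, ZMod.natCast_eq_zero_iff_even, Nat.even_iff]
  omega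

/-- The value of the words in `hE.translations` at the coordinate `i`, as a linear functional. -/
def coordinate (i : κ) : hE.translations →ₗ[ZMod 2] ZMod 2 :=
  (LinearMap.proj i).domRestrict hE.translations

theorem sum_sign_mul_sign_translations_nonneg [Fintype hE.translations] (i j : κ) :
    0 ≤ ∑ w : hE.translations, sign (w.1 i) * sign (w.1 j) := by
  classical
  have h := AddChar.sum_eq_ite
    (sign.compAddMonoidHom (hE.coordinate i + hE.coordinate j).toAddMonoidHom)
  refine le_of_le_of_eq ?_ (h.symm.trans (Finset.sum_congr rfl fun w _ ↦ ?_))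
  · split_ifs <;> positivity
  · exact AddChar.map_add_eq_mul sign (w.1 i) (w.1 j)

theorem sum_sum_sign_mul_sign_translations [Fintype hE.translations] (i : κ) :
    ∑ j, ∑ w : hE.translations, sign (w.1 i) * sign (w.1 j) = 32 := by
  have hrow (w : hE.translations) :
      ∑ j, sign (w.1 i) * sign (w.1 j) = sign (w.1 i) * signSum w.1 := (Finset.mul_sum ..).symm
  have hne : (0 : hE.translations) ≠ ⟨1, hE.one_mem_translations⟩ := fun h ↦
    hE.ne_add_one 0 ((congrArg Subtype.val h).trans (zero_add 1).symm)
  rw [Finset.sum_comm]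
  simp only [hrow]
  rw [Fintype.sum_eq_add _ _ hne fun w hw ↦ ?_]
  · simp [hE.signSum_zero, hE.signSum_one, sign_one]
  · rw [hE.signSum_eq_zero_of_mem_translations w.2 (fun h ↦ hw.1 (Subtype.ext h))
      fun h ↦ hw.2 (Subtype.ext h), mul_zero]

theorem eq_of_forall_translations {i j : κ} (h : ∀ w ∈ hE.translations, w i = w j) : i = j := by
  have := Fintype.ofFinite hE.translations
  have hcard : ∑ _w : hE.translations, (1 : ℤ) = 32 := by
    rw [Finset.sum_const, Finset.card_univ, ← Nat.card_eq_fintype_card, hE.natCard_translations]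
    norm_num
  by_contra hij
  have hle := Finset.add_le_sum (fun j _ ↦ hE.sum_sign_mul_sign_translations_nonneg i j)
    (Finset.mem_univ i) (Finset.mem_univ j) hij
  simp only [sum_sum_sign_mul_sign_translations, ← h _ (Subtype.prop _), sign_mul_self,
    hcard] at hle
  norm_num at hle

theorem finrank_ker_coordinate (o : κ) :
    Module.finrank (ZMod 2) (LinearMap.ker (hE.coordinate o)) = 4 := by
  have hrange : LinearMap.range (hE.coordinate o) = ⊤ := LinearMap.range_eq_top.2 fun a ↦
    ⟨a • ⟨1, hE.one_mem_translations⟩, mul_one a⟩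
  have h := LinearMap.finrank_range_add_finrank_ker (hE.coordinate o)
  rw [hrange, finrank_top, Module.finrank_self, hE.finrank_translations] at h
  omega

theorem exists_coordinates (o : κ) : ∃ e : κ ≃ (Fin 4 → ZMod 2), e o = 0 ∧
    ∀ a : Fin 4 → ZMod 2, (fun i ↦ a ⬝ᵥ e i) ∈ hE.translations := by
  let b := Module.finBasisOfFinrankEq _ _ (hE.finrank_ker_coordinate o)
  have hspan (a : Fin 4 → ZMod 2) :
      (fun i ↦ a ⬝ᵥ fun j ↦ ((b j).1.1 : κ → ZMod 2) i) = (∑ j, a j • b j).1.1 := by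
    ext i
    simp [dotProduct, Finset.sum_apply]
  have hinj : Function.Injective fun (i : κ) (j : Fin 4) ↦ ((b j).1.1 : κ → ZMod 2) i := by
    intro i i' hii
    have hker (w : κ → ZMod 2) (hw : w ∈ hE.translations) (hwo : w o = 0) : w i = w i' := by
      have hrepr := congrArg (fun x ↦ (x.1.1 : κ → ZMod 2)) (b.sum_repr ⟨⟨w, hw⟩, hwo⟩)
      simp only [← hspan] at hrepr
      rw [← hrepr]
      exact congrArg (_ ⬝ᵥ ·) hii
    refine hE.eq_of_forall_translations fun w hw ↦ ?_
    rcases eq_zero_or_one (w o) with hwo | hwo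
    · exact hker w hw hwo
    · refine add_right_cancel (hker (w + 1) (add_mem hw hE.one_mem_translations) ?_)
      rw [Pi.add_apply, hwo]
      rfl
  have hbij := (Fintype.bijective_iff_injective_and_card _).2 ⟨hinj, by simp [hE.length_eq]⟩
  refine ⟨Equiv.ofBijective _ hbij, funext fun j ↦ (b j).2, fun a ↦ ?_⟩
  exact (hspan a).symm ▸ (∑ j, a j • b j).1.2

end IsNordstromRobinson

/-! ### Quadratic forms and Kerdock sets -/

/-- The linear form `x ↦ a ⬝ᵥ x` on `𝔽₂⁴`, as a word of length 16. -/
def linForm (a : Fin 4 → ZMod 2) : (Fin 4 → ZMod 2) → ZMod 2 := fun x ↦ a ⬝ᵥ x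

/-- The quadratic form on `𝔽₂⁴` without square terms whose six coefficients are those of `p` at
`x₀ x₁, x₀ x₂, x₀ x₃` and those of `q` at the complementary products. In terms of `p` and `q`, the
Pfaffian of its polarization is `p ⬝ᵥ q`. -/
def quad (p q : Fin 3 → ZMod 2) : (Fin 4 → ZMod 2) → ZMod 2 := fun x ↦
  x 0 * (p 0 * x 1 + p 1 * x 2 + p 2 * x 3) + q 0 * (x 2 * x 3) + q 1 * (x 1 * x 3) +
    q 2 * (x 1 * x 2)

theorem quad_zero : quad 0 0 = 0 := by ext; simp [quad]

theorem quad_add (p p' q q' : Fin 3 → ZMod 2) :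
    quad (p + p') (q + q') = quad p q + quad p' q' := by
  ext
  simp only [quad, Pi.add_apply]
  ring

theorem eight_dvd_signSum_linForm : ∀ a, 8 ∣ signSum (linForm a) := by decide +kernel

theorem exists_signSum_quad_add_linForm_eq_eight :
    ∀ p q, p ⬝ᵥ q = 0 → (p ≠ 0 ∨ q ≠ 0) → ∃ a, signSum (quad p q + linForm a) = 8 := by
  decide +kernel

theorem eq_sum_mul_prod (c : (Fin 4 → ZMod 2) → ZMod 2) (x : Fin 4 → ZMod 2) :
    c x = ∑ y, c y * ((x 0 + (1 + y 0)) * (x 1 + (1 + y 1)) * (x 2 + (1 + y 2)) *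
      (x 3 + (1 + y 3))) := by
  have hprod (y : Fin 4 → ZMod 2) : (x 0 + (1 + y 0)) * (x 1 + (1 + y 1)) * (x 2 + (1 + y 2)) *
      (x 3 + (1 + y 3)) = if x = y then 1 else 0 := by
    revert x y; decide +kernel
  simp [hprod]

theorem exists_eq_quad_add_linForm {c : (Fin 4 → ZMod 2) → ZMod 2} (h₀ : 1 ⬝ᵥ c = 0)
    (h₁ : ∀ a, linForm a ⬝ᵥ c = 0) :
    ∃ p q a, ∃ b : ZMod 2, c = quad p q + linForm a + b • 1 := by
  have hc : ∑ y, c y = 0 := by simpa [dotProduct] using h₀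
  have hci (i : Fin 4) : ∑ y, c y * (1 + y i) = 0 := by
    have hlin : linForm (Pi.single i 1) = fun y ↦ y i := by
      ext y
      rw [linForm, single_one_dotProduct]
    have h := h₁ (Pi.single i 1)
    rw [hlin, dotProduct_comm, dotProduct] at h
    simp only [mul_add, mul_one, Finset.sum_add_distrib, hc, h, add_zero]
  refine ⟨![∑ y, c y * ((1 + y 2) * (1 + y 3)), ∑ y, c y * ((1 + y 1) * (1 + y 3)),
      ∑ y, c y * ((1 + y 1) * (1 + y 2))],
    ![∑ y, c y * ((1 + y 0) * (1 + y 1)), ∑ y, c y * ((1 + y 0) * (1 + y 2)),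
      ∑ y, c y * ((1 + y 0) * (1 + y 3))],
    ![∑ y, c y * ((1 + y 1) * (1 + y 2) * (1 + y 3)),
      ∑ y, c y * ((1 + y 0) * (1 + y 2) * (1 + y 3)),
      ∑ y, c y * ((1 + y 0) * (1 + y 1) * (1 + y 3)),
      ∑ y, c y * ((1 + y 0) * (1 + y 1) * (1 + y 2))],
    ∑ y, c y * ((1 + y 0) * (1 + y 1) * (1 + y 2) * (1 + y 3)), ?_⟩
  ext x
  have hexpand (m s₀ s₁ s₂ s₃ t₀ t₁ t₂ t₃ : ZMod 2) :
      m * ((s₀ + t₀) * (s₁ + t₁) * (s₂ + t₂) * (s₃ + t₃)) =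
        s₀ * s₁ * s₂ * s₃ * m + (s₀ * s₁ * s₂ * (m * t₃) + s₀ * s₁ * s₃ * (m * t₂) +
          s₀ * s₂ * s₃ * (m * t₁) + s₁ * s₂ * s₃ * (m * t₀)) +
        (s₀ * s₁ * (m * (t₂ * t₃)) + s₀ * s₂ * (m * (t₁ * t₃)) + s₀ * s₃ * (m * (t₁ * t₂)) +
          s₂ * s₃ * (m * (t₀ * t₁)) + s₁ * s₃ * (m * (t₀ * t₂)) + s₁ * s₂ * (m * (t₀ * t₃))) +
        (s₀ * (m * (t₁ * t₂ * t₃)) + s₁ * (m * (t₀ * t₂ * t₃)) + s₂ * (m * (t₀ * t₁ * t₃)) +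
          s₃ * (m * (t₀ * t₁ * t₂))) + m * (t₀ * t₁ * t₂ * t₃) := by ring
  rw [eq_sum_mul_prod c x]
  simp only [hexpand, Finset.sum_add_distrib, ← Finset.mul_sum, hc, hci]
  simp only [quad, linForm, dotProduct, Fin.sum_univ_four, Pi.add_apply, Pi.smul_apply,
    Pi.one_apply, smul_eq_mul, Matrix.cons_val]
  ring

/-- A Kerdock set: one alternating form `(f q, q)` for each `q`, with the zero form among them, such
that the sum of any two distinct forms is nonsingular, that is, has Pfaffian 1. -/
structure IsKerdock (f : (Fin 3 → ZMod 2) → Fin 3 → ZMod 2) : Prop where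
  map_zero : f 0 = 0
  add_dotProduct_add : ∀ q q', q ≠ q' → (f q + f q') ⬝ᵥ (q + q') = 1

namespace IsKerdock

variable {f g : (Fin 3 → ZMod 2) → Fin 3 → ZMod 2}

theorem dotProduct_self (hf : IsKerdock f) {q : Fin 3 → ZMod 2} (hq : q ≠ 0) : f q ⬝ᵥ q = 1 := by
  simpa [hf.map_zero] using hf.add_dotProduct_add q 0 hq

theorem dotProduct_add_dotProduct (hf : IsKerdock f) {q q' : Fin 3 → ZMod 2} (hq : q ≠ 0)
    (hq' : q' ≠ 0) (hne : q ≠ q') : f q ⬝ᵥ q' + f q' ⬝ᵥ q = 1 := by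
  have h := hf.add_dotProduct_add q q' hne
  rw [add_dotProduct, dotProduct_add, dotProduct_add, hf.dotProduct_self hq,
    hf.dotProduct_self hq', add_add_add_comm, add_comm (f q ⬝ᵥ q'), add_add_add_comm] at h
  simpa [CharTwo.add_self_eq_zero, add_comm] using h

theorem apply_single_self (hf : IsKerdock f) (i : Fin 3) : f (Pi.single i 1) i = 1 := by
  simpa using hf.dotProduct_self (q := Pi.single i 1) (by simp)

theorem apply_eq (hf : IsKerdock f) {q : Fin 3 → ZMod 2} {i : Fin 3} (hq : q ≠ 0)
    (hqi : q ≠ Pi.single i 1) : f q i = 1 - f (Pi.single i 1) ⬝ᵥ q := by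
  rw [eq_sub_iff_add_eq]
  simpa using hf.dotProduct_add_dotProduct (q' := Pi.single i 1) hq (by simp) hqi

theorem ext_single (hf : IsKerdock f) (hg : IsKerdock g)
    (h : ∀ i, f (Pi.single i 1) = g (Pi.single i 1)) : f = g := by
  ext q i
  by_cases hq : q = 0
  · rw [hq, hf.map_zero, hg.map_zero]
  by_cases hqi : q = Pi.single i 1
  · rw [hqi, h]
  · rw [hf.apply_eq hq hqi, hg.apply_eq hq hqi, h]

theorem ext_single_of_lt (hf : IsKerdock f) (hg : IsKerdock g)
    (h : ∀ i j, i < j → f (Pi.single i 1) j = g (Pi.single i 1) j) : f = g := by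
  refine hf.ext_single hg fun i ↦ funext fun j ↦ ?_
  rcases lt_trichotomy i j with hij | rfl | hji
  · exact h i j hij
  · rw [hf.apply_single_self, hg.apply_single_self]
  · have hne : (Pi.single i 1 : Fin 3 → ZMod 2) ≠ Pi.single j 1 :=
      fun h ↦ by simpa [hji.ne'] using congrFun h i
    rw [hf.apply_eq (by simp) hne, hg.apply_eq (by simp) hne, dotProduct_single_one,
      dotProduct_single_one, h j i hji]

end IsKerdock

/-! ### Normal forms of Nordstrom–Robinson codes -/

/-- A Nordstrom–Robinson code on the coordinate set `𝔽₂⁴` which contains the zero word and is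
invariant under adding linear forms. -/
structure IsNormalized (N : Finset ((Fin 4 → ZMod 2) → ZMod 2)) : Prop
    extends IsNordstromRobinson N where
  zero_mem : 0 ∈ N
  add_linForm_mem : ∀ c ∈ N, ∀ a, c + linForm a ∈ N

theorem exists_isNormalized {κ : Type*} [Fintype κ]
    {E : Finset (κ → ZMod 2)} (hE : IsNordstromRobinson E) (o : κ) :
    ∃ e : κ ≃ (Fin 4 → ZMod 2), e o = 0 ∧ ∃ v, IsNormalized (E.map (recode e v).toEmbedding) := by
  obtain ⟨e, heo, he⟩ := hE.exists_coordinates o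
  obtain ⟨v, hv⟩ := hE.nonempty
  refine ⟨e, heo, v, hE.recode e v, Finset.mem_map.2 ⟨v, hv, ?_⟩, fun c hc a ↦ ?_⟩
  · ext y
    exact CharTwo.add_self_eq_zero _
  · obtain ⟨x, hx, rfl⟩ := Finset.mem_map.1 hc
    refine Finset.mem_map.2 ⟨_, (he a).2 x hx, ?_⟩
    ext y
    simp only [Equiv.coe_toEmbedding, recode_apply, Pi.add_apply, Equiv.apply_symm_apply, linForm]
    exact add_right_comm ..

namespace IsNormalized

variable {N : Finset ((Fin 4 → ZMod 2) → ZMod 2)} (hN : IsNormalized N)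

include hN

theorem add_linForm_add_smul_one_mem_iff {c : (Fin 4 → ZMod 2) → ZMod 2} (a : Fin 4 → ZMod 2)
    (b : ZMod 2) : c + linForm a + b • 1 ∈ N ↔ c ∈ N := by
  have hadd {c} (hc : c ∈ N) : c + linForm a + b • 1 ∈ N := by
    have hca := hN.add_linForm_mem c hc a
    rcases eq_zero_or_one b with rfl | rfl
    · rwa [zero_smul, add_zero]
    · rw [one_smul]
      exact hN.add_one_mem _ hca
  refine ⟨fun h ↦ ?_, hadd⟩
  have hcancel := hadd h
  rwa [add_assoc (c + _), add_comm (b • 1), add_assoc (c + _), add_assoc (linForm a),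
    ZModModule.add_self, add_zero, add_assoc, ZModModule.add_self, add_zero] at hcancel

theorem exists_quad_mem {c : (Fin 4 → ZMod 2) → ZMod 2} (hc : c ∈ N) :
    ∃ p q a, ∃ b : ZMod 2, quad p q ∈ N ∧ c = quad p q + linForm a + b • 1 := by
  have horth {w} (hw : w ∈ hN.translations) : w ⬝ᵥ c = 0 := by
    rw [← add_zero c]
    exact hN.dotProduct_add_eq_zero hc hN.zero_mem hw
  obtain ⟨p, q, a, b, rfl⟩ := exists_eq_quad_add_linForm (horth hN.one_mem_translations)
    fun a ↦ horth ⟨eight_dvd_signSum_linForm a, (hN.add_linForm_mem · · a)⟩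
  exact ⟨p, q, a, b, (hN.add_linForm_add_smul_one_mem_iff a b).1 hc, rfl⟩

theorem add_dotProduct_add {p q p' q' : Fin 3 → ZMod 2} (h : quad p q ∈ N) (h' : quad p' q' ∈ N)
    (hne : p ≠ p' ∨ q ≠ q') : (p + p') ⬝ᵥ (q + q') = 1 := by
  refine (eq_zero_or_one _).resolve_left fun h₀ ↦ ?_
  obtain ⟨a, ha⟩ := exists_signSum_quad_add_linForm_eq_eight _ _ h₀
    (by rwa [ne_eq, ne_eq, add_eq_zero_iff_eq, add_eq_zero_iff_eq])
  rw [quad_add, add_assoc] at ha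
  rcases hN.eq_or_eq_add_one_or_signSum_add h (hN.add_linForm_mem _ h' a) with heq | heq | hs
  · rw [heq, hN.signSum_self_add] at ha
    omega
  · rw [heq, hN.signSum_add_one_self] at ha
    omega
  · omega

theorem eq_of_quad_mem {p p' q : Fin 3 → ZMod 2} (h : quad p q ∈ N) (h' : quad p' q ∈ N) :
    p = p' := by
  by_contra hne
  have hpf := hN.add_dotProduct_add h h' (.inl hne)
  rw [ZModModule.add_self, dotProduct_zero] at hpf
  exact zero_ne_one hpf

theorem exists_quad_mem_right (q : Fin 3 → ZMod 2) : ∃ p, quad p q ∈ N := by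
  classical
  have hunique (q : Fin 3 → ZMod 2) : ∃ p, ∀ p', quad p' q ∈ N → p' = p := by
    by_cases h : ∃ p, quad p q ∈ N
    · exact h.imp fun p hp p' hp' ↦ hN.eq_of_quad_mem hp' hp
    · exact ⟨0, fun p' hp' ↦ (h ⟨p', hp'⟩).elim⟩
  choose f hf using hunique
  let S : Finset (Fin 3 → ZMod 2) := {q | ∃ p, quad p q ∈ N}
  have hsub : N ⊆ (S ×ˢ Finset.univ ×ˢ Finset.univ).image
      fun t : (Fin 3 → ZMod 2) × (Fin 4 → ZMod 2) × ZMod 2 ↦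
        quad (f t.1) t.1 + linForm t.2.1 + t.2.2 • 1 := by
    intro c hc
    obtain ⟨p, q, a, b, hpq, rfl⟩ := hN.exists_quad_mem hc
    exact Finset.mem_image.2 ⟨(q, a, b), by simpa [S] using ⟨p, hpq⟩, by rw [hf q p hpq]⟩
  have hcard := (Finset.card_le_card hsub).trans Finset.card_image_le
  rw [hN.card_eq, Finset.card_product, Finset.card_product, Finset.card_univ, Finset.card_univ,
    Fintype.card_fun, ZMod.card, Fintype.card_fin] at hcard
  have hS : S = Finset.univ := by
    rw [← Finset.card_eq_iff_eq_univ]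
    refine (Finset.card_le_univ S).antisymm ?_
    rw [Fintype.card_fun, ZMod.card, Fintype.card_fin]
    omega
  have hq : q ∈ S := hS ▸ Finset.mem_univ q
  exact (Finset.mem_filter.1 hq).2

theorem exists_isKerdock : ∃ f, IsKerdock f ∧ ∀ p q, quad p q ∈ N ↔ p = f q := by
  choose f hf using hN.exists_quad_mem_right
  refine ⟨f, ⟨?_, fun q q' hne ↦ hN.add_dotProduct_add (hf q) (hf q') (.inr hne)⟩,
    fun p q ↦ ⟨fun h ↦ hN.eq_of_quad_mem h (hf q), fun h ↦ h ▸ hf q⟩⟩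
  exact hN.eq_of_quad_mem (hf 0) (quad_zero ▸ hN.zero_mem)

end IsNormalized

/-- A normalized code for which `p j = 0` whenever it contains `quad p (Pi.single i 1)` and `i < j`.
The three coefficients in question can be changed at will by shears, see `shear`. -/
structure IsReduced (N : Finset ((Fin 4 → ZMod 2) → ZMod 2)) : Prop extends IsNormalized N where
  apply_eq_zero : ∀ i p, quad p (Pi.single i 1) ∈ N → ∀ j, i < j → p j = 0

theorem IsReduced.subset {N N' : Finset ((Fin 4 → ZMod 2) → ZMod 2)} (hN : IsReduced N)
    (hN' : IsReduced N') : N ⊆ N' := by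
  obtain ⟨f, hf, hfN⟩ := hN.exists_isKerdock
  obtain ⟨f', hf', hfN'⟩ := hN'.exists_isKerdock
  have hff' : f = f' := hf.ext_single_of_lt hf' fun i j hij ↦ by
    rw [hN.apply_eq_zero i _ ((hfN _ _).2 rfl) j hij,
      hN'.apply_eq_zero i _ ((hfN' _ _).2 rfl) j hij]
  intro c hc
  obtain ⟨p, q, a, b, hpq, rfl⟩ := hN.exists_quad_mem hc
  rwa [hN'.add_linForm_add_smul_one_mem_iff, hfN', ← hff', ← hfN]

theorem IsReduced.eq {N N' : Finset ((Fin 4 → ZMod 2) → ZMod 2)} (hN : IsReduced N)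
    (hN' : IsReduced N') : N = N' :=
  (hN.subset hN').antisymm (hN'.subset hN)

section Shear

/-- The shear of `𝔽₂⁴` along the hyperplane `x₀ = 0` with vector `(0, v)`. -/
def shear (v : Fin 3 → ZMod 2) : Equiv.Perm (Fin 4 → ZMod 2) :=
  Function.Involutive.toPerm
    (fun x ↦ ![x 0, x 1 + x 0 * v 0, x 2 + x 0 * v 1, x 3 + x 0 * v 2]) fun x ↦ by
      ext i
      fin_cases i <;> simp [add_assoc, CharTwo.add_self_eq_zero]

theorem shear_apply (v : Fin 3 → ZMod 2) (x : Fin 4 → ZMod 2) :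
    shear v x = ![x 0, x 1 + x 0 * v 0, x 2 + x 0 * v 1, x 3 + x 0 * v 2] := rfl

theorem shear_zero (v : Fin 3 → ZMod 2) : shear v 0 = 0 := by
  ext i
  fin_cases i <;> simp [shear_apply]

theorem linForm_shear (v : Fin 3 → ZMod 2) (a : Fin 4 → ZMod 2) :
    (fun x ↦ linForm a (shear v x)) =
      linForm (a + Pi.single 0 (a 1 * v 0 + a 2 * v 1 + a 3 * v 2)) := by
  ext x
  rw [linForm, linForm, add_dotProduct, single_dotProduct]
  simp only [shear_apply, dotProduct, Fin.sum_univ_four, Matrix.cons_val]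
  ring

theorem quad_shear (v p q : Fin 3 → ZMod 2) :
    (fun x ↦ quad p q (shear v x)) = quad (p + v ⨯₃ q) q + linForm
      (Pi.single 0 (p ⬝ᵥ v + q 0 * v 1 * v 2 + q 1 * v 0 * v 2 + q 2 * v 0 * v 1)) := by
  ext x
  have hx : x 0 * x 0 = x 0 := by
    rcases eq_zero_or_one (x 0) with h | h <;> rw [h] <;> rfl
  rw [Pi.add_apply, linForm, single_dotProduct]
  simp only [shear_apply, quad, cross_apply, dotProduct, Fin.sum_univ_three, CharTwo.sub_eq_add,
    Matrix.cons_val, Pi.add_apply]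
  linear_combination (p 0 * v 0 + p 1 * v 1 + p 2 * v 2 + q 0 * v 1 * v 2 + q 1 * v 0 * v 2 +
    q 2 * v 0 * v 1) * hx

variable {N : Finset ((Fin 4 → ZMod 2) → ZMod 2)}

theorem mem_map_recode_shear {v : Fin 3 → ZMod 2} {c : (Fin 4 → ZMod 2) → ZMod 2} :
    c ∈ N.map (recode (shear v) 0).toEmbedding ↔ (fun x ↦ c (shear v x)) ∈ N := by
  rw [Finset.mem_map_equiv]
  simp [recode, Equiv.arrowCongr, Function.comp_def, Equiv.addRight]

theorem IsNormalized.map_recode_shear (hN : IsNormalized N) (v : Fin 3 → ZMod 2) :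
    IsNormalized (N.map (recode (shear v) 0).toEmbedding) where
  toIsNordstromRobinson := hN.recode (shear v) 0
  zero_mem := mem_map_recode_shear.2 hN.zero_mem
  add_linForm_mem c hc a := by
    have h := hN.add_linForm_mem _ (mem_map_recode_shear.1 hc)
      (a + Pi.single 0 (a 1 * v 0 + a 2 * v 1 + a 3 * v 2))
    rw [← linForm_shear] at h
    exact mem_map_recode_shear.2 h

theorem IsNormalized.quad_mem_map_recode_shear_iff (hN : IsNormalized N) {v p q : Fin 3 → ZMod 2} :
    quad p q ∈ N.map (recode (shear v) 0).toEmbedding ↔ quad (p + v ⨯₃ q) q ∈ N := by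
  have h := hN.add_linForm_add_smul_one_mem_iff (c := quad (p + v ⨯₃ q) q)
    (Pi.single 0 (p ⬝ᵥ v + q 0 * v 1 * v 2 + q 1 * v 0 * v 2 + q 2 * v 0 * v 1)) 0
  rw [mem_map_recode_shear, quad_shear, ← h, zero_smul, add_zero]

theorem IsNormalized.exists_isReduced_map_recode_shear (hN : IsNormalized N) :
    ∃ v, IsReduced (N.map (recode (shear v) 0).toEmbedding) := by
  obtain ⟨f, -, hf⟩ := hN.exists_isKerdock
  let v := ![f (Pi.single 1 1) 2, f (Pi.single 0 1) 2, f (Pi.single 0 1) 1]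
  have hv (i j : Fin 3) (hij : i < j) :
      (v ⨯₃ Pi.single i 1) j = f (Pi.single i 1) j := by
    fin_cases i <;> fin_cases j <;>
      first
      | exact absurd hij (by decide)
      | simp [v, cross_apply, CharTwo.sub_eq_add]
  refine ⟨v, hN.map_recode_shear v, fun i p hp j hij ↦ ?_⟩
  rw [hN.quad_mem_map_recode_shear_iff, hf] at hp
  simpa [hv i j hij] using congrFun hp j

end Shear

theorem recode_trans {κ κ' κ'' : Type*} (e : κ ≃ κ') (e' : κ' ≃ κ'') (v : κ → ZMod 2) :
    recode (e.trans e') v = (recode e v).trans (recode e' 0) := by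
  ext x i
  simp [recode_apply]

theorem exists_isReduced {κ : Type*} [Fintype κ] {E : Finset (κ → ZMod 2)}
    (hE : IsNordstromRobinson E) (o : κ) :
    ∃ e : κ ≃ (Fin 4 → ZMod 2), e o = 0 ∧ ∃ v, IsReduced (E.map (recode e v).toEmbedding) := by
  obtain ⟨e, heo, v, hN⟩ := exists_isNormalized hE o
  obtain ⟨u, hu⟩ := hN.exists_isReduced_map_recode_shear
  refine ⟨e.trans (shear u), by rw [Equiv.trans_apply, heo, shear_zero], v, ?_⟩
  rwa [recode_trans, Equiv.trans_toEmbedding, ← Finset.map_map]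

theorem mem_map_recode_extendedCode {ι κ : Type*} [Fintype ι] {F : Finset (ι → ZMod 2)}
    {e : Option ι ≃ κ} {v : Option ι → ZMod 2} {c : κ → ZMod 2} :
    c ∈ (extendedCode F).map (recode e v).toEmbedding ↔
      ∃ x ∈ F, recode e v (parityExtend x) = c := by
  simp [extendedCode, Equiv.eq_symm_apply]

theorem exists_perm_image_eq {ι κ : Type*} [Fintype ι] {F F' : Finset (ι → ZMod 2)}
    {e e' : Option ι ≃ κ} {v v' : Option ι → ZMod 2} (ho : e none = e' none)
    (h : (extendedCode F).map (recode e v).toEmbedding =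
      (extendedCode F').map (recode e' v').toEmbedding) :
    ∃ (σ : Equiv.Perm ι) (w : ι → ZMod 2), (F' : Set (ι → ZMod 2)) =
      (fun α : ι → ZMod 2 ↦ (fun i ↦ α (σ.symm i)) + w) '' F := by
  let σ := Equiv.removeNone (e.trans e'.symm)
  have hσ (i : ι) : e.symm (e' (some i)) = some (σ.symm i) := by
    refine (Equiv.removeNone_some (e.trans e'.symm).symm ?_).symm
    rw [← Option.ne_none_iff_exists', ne_eq, Equiv.symm_apply_eq]
    simp [ho]
  have hcoord {x y : ι → ZMod 2}
      (hxy : recode e v (parityExtend x) = recode e' v' (parityExtend y)) (i : ι) :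
      y i = x (σ.symm i) + (v (some (σ.symm i)) + v' (some i)) := by
    have h := congrFun hxy (e' (some i))
    simp only [recode_apply, hσ, Equiv.symm_apply_apply, parityExtend_some] at h
    rw [← add_assoc, h, add_assoc, CharTwo.add_self_eq_zero, add_zero]
  refine ⟨σ, fun i ↦ v (some (σ.symm i)) + v' (some i), Set.ext fun y ↦ ⟨fun hy ↦ ?_, ?_⟩⟩
  · obtain ⟨x, hx, hxy⟩ := mem_map_recode_extendedCode.1 <|
      h ▸ mem_map_recode_extendedCode.2 ⟨y, hy, rfl⟩
    exact ⟨x, hx, funext fun i ↦ (hcoord hxy i).symm⟩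
  · rintro ⟨x, hx, rfl⟩
    obtain ⟨y, hy, hyx⟩ := mem_map_recode_extendedCode.1 <|
      h ▸ mem_map_recode_extendedCode.2 ⟨x, hx, rfl⟩
    exact Set.mem_of_eq_of_mem (funext (hcoord hyx.symm)).symm hy

end BinaryCode

/-- Any two binary completely regular codes of length 15 with minimum distance 5
are equivalent (both are equivalent to the punctured Nordstrom-Robinson code). -/
theorem stmt_1 (C C' : Set (Fin 15 → ZMod 2)) (hC : C.Nonempty) (hC' : C'.Nonempty)
    (hreg : IsCompletelyRegular C) (hreg' : IsCompletelyRegular C')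
    (hd : IsMinDist C 5) (hd' : IsMinDist C' 5) :
    ∃ (σ : Equiv.Perm (Fin 15)) (v : Fin 15 → ZMod 2),
      C' = (fun α => (fun i => α (σ.symm i)) + v) '' C := by
  lift C to Finset (Fin 15 → ZMod 2) using C.toFinite
  lift C' to Finset (Fin 15 → ZMod 2) using C'.toFinite
  have hE := BinaryCode.isNordstromRobinson_extendedCode hreg hd
  have hE' := BinaryCode.isNordstromRobinson_extendedCode hreg' hd'
  obtain ⟨e, he, v, hN⟩ := BinaryCode.exists_isReduced hE none
  obtain ⟨e', he', v', hN'⟩ := BinaryCode.exists_isReduced hE' none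
  exact BinaryCode.exists_perm_image_eq (he.trans he'.symm) (hN.eq hN')
end
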